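/- Let either d ≤ 2s and p ∈ [2,∞), or d > 2s and p ∈ [2, 2d/(d−2s)]. Suppose ρ satisfies the two-power bounds with γ_0 ∈ [0,d) and γ ∈ [0, max(d, d − (p/2)(d−2s))]. Then for all v, w ∈ X_{p,s,ρ} the integration-by-parts formula holds: (C_{d,s}/2) ∬ (v(x)−v(y))(w(x)−w(y))/|x−y|^{d+2s} dx dy = ∫ v(x)(−Δ)^s w(x) dx = ∫ (−Δ)^s v(x) w(x) dx. -/

import Mathlib

open MeasureTheory Filter Metric Set
open scoped Topology ENNReal

noncomputable section

abbrev Ed (d : ℕ) := EuclideanSpace ℝ (Fin d)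

/-- Truncated (away from the singularity) fractional-Laplacian integral. -/
noncomputable def fracLapTrunc (d : ℕ) (s : ℝ) (f : Ed d → ℝ) (x : Ed d) (ε : ℝ) : ℝ :=
  ∫ y in {y : Ed d | ε ≤ dist x y}, (f x - f y) / dist x y ^ ((d : ℝ) + 2 * s)

/-- Fractional Laplacian, as a principal value (limit of truncated integrals),
with normalization constant `Cds`. -/
noncomputable def fracLap (d : ℕ) (s Cds : ℝ) (f : Ed d → ℝ) (x : Ed d) : ℝ :=
  Cds * limUnder (𝓝[>] (0:ℝ)) (fracLapTrunc d s f x)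

/-- `V` is the distributional fractional Laplacian of `v`. -/
def IsDistFracLap (d : ℕ) (s Cds : ℝ) (v V : Ed d → ℝ) : Prop :=
  ∀ φ : Ed d → ℝ, ContDiff ℝ (⊤ : ℕ∞) φ → HasCompactSupport φ →
    ∫ x, v x * fracLap d s Cds φ x = ∫ x, V x * φ x

/-- The nonlocal quantity `l_{p,s}(f)(x) = ∫ |f x - f y|^p / |x-y|^{d+ps} dy`. -/
noncomputable def lps (d : ℕ) (p s : ℝ) (f : Ed d → ℝ) (x : Ed d) : ℝ :=
  ∫ y, |f x - f y| ^ p / dist x y ^ ((d : ℝ) + p * s)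

/-- A weight comparable to `|x|^{-γ₀}` on the unit ball and to `|x|^{-γ}` outside. -/
def TwoPowerWeight (d : ℕ) (ρ : Ed d → ℝ) (c C γ₀ γ : ℝ) : Prop :=
  0 < c ∧ c < C ∧
  (∀ᵐ x : Ed d, ‖x‖ ≤ 1 → c * ‖x‖ ^ (-γ₀) ≤ ρ x ∧ ρ x ≤ C * ‖x‖ ^ (-γ₀)) ∧
  (∀ᵐ x : Ed d, 1 < ‖x‖ → c * ‖x‖ ^ (-γ) ≤ ρ x ∧ ρ x ≤ C * ‖x‖ ^ (-γ))

/-- Standard mollification `f_ε = η_ε ∗ f` with `η_ε(x) = ε^{-d} η(x/ε)`. -/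
noncomputable def mollify (d : ℕ) (η : Ed d → ℝ) (ε : ℝ) (f : Ed d → ℝ) (x : Ed d) : ℝ :=
  ∫ y, (ε ^ (-(d:ℝ)) * η (ε⁻¹ • (x - y))) * f y

/-- A smooth nonnegative probability mollifier supported in the unit ball. -/
def IsMollifier (d : ℕ) (η : Ed d → ℝ) : Prop :=
  ContDiff ℝ (⊤ : ℕ∞) η ∧ (∀ x, 0 ≤ η x) ∧ tsupport η ⊆ closedBall (0 : Ed d) 1 ∧ ∫ x, η x = 1

/-- Membership in the weighted Lebesgue space `L^p(ρ dx)`. -/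
def MemWLp (d : ℕ) (p : ℝ) (ρ f : Ed d → ℝ) : Prop :=
  AEStronglyMeasurable f (volume : Measure (Ed d)) ∧
    Integrable (fun x => |f x| ^ p * ρ x)

/-- `v ∈ X_{p,s,ρ}` with distributional fractional Laplacian `V`. -/
def MemX (d : ℕ) (s Cds p : ℝ) (ρ : Ed d → ℝ) (v V : Ed d → ℝ) : Prop :=
  MemWLp d p ρ v ∧ IsDistFracLap d s Cds v V ∧
    MemWLp d (p / (p - 1)) (fun x => ρ x ^ (-(p / (p - 1) - 1))) V

/-- Weighted `L^p` norm. -/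
noncomputable def wNorm (d : ℕ) (p : ℝ) (ρ f : Ed d → ℝ) : ℝ :=
  (∫ x, |f x| ^ p * ρ x) ^ (1 / p)

/-- Norm of the space `X_{p,s,ρ}` (on the pair `(v, (−Δ)^s v)`). -/
noncomputable def xNorm (d : ℕ) (p : ℝ) (ρ : Ed d → ℝ) (v V : Ed d → ℝ) : ℝ :=
  Real.sqrt ((wNorm d p ρ v) ^ 2 +
    (wNorm d (p / (p - 1)) (fun x => ρ x ^ (-(p / (p - 1) - 1))) V) ^ 2)

/-- Riesz potential `I_{d,s} ∗ f` with kernel constant `κ`. -/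
noncomputable def riesz (d : ℕ) (s κ : ℝ) (f : Ed d → ℝ) (x : Ed d) : ℝ :=
  ∫ y, κ * ‖x - y‖ ^ (-((d:ℝ) - 2 * s)) * f y

end

/-!
Mollifying `v` produces smooth functions `vₙ` whose fractional Laplacians are the mollifications of
`V`. Writing `L` for the fractional Laplacian, a cutoff `χ` satisfies, up to normalization,
`∬ (χ x + χ y) (u x - u y)² / |x - y| ^ (d + 2s) = 4 ∫ u L(χ u) - 2 ∫ u² L χ`,
so a one-sided bound `-r ≤ L χ` with `∫ u² r ≤ 1` is enough to bound the energies of the `vₙ`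
uniformly. The cutoffs are `χ y = τ ^ a (τ² + |y|²) ^ (-a / 2) θ y` with `θ` a wide bump function.
For `a = 0` this covers the subcritical weights. For `a = d - 2s` the power `|y| ^ (-a)` is the
Riesz kernel, whose fractional Laplacian vanishes off the origin by Kelvin inversion; comparison
with it makes the smoothed power superharmonic, which leaves only the truncation error of `θ` and
reaches the supercritical weights. With the energy of `v` finite, the formula follows by testing
with the cut off and mollified `w` and passing to the limit, and the second equality is the first
one with the roles of `v` and `w` exchanged.
-/

/-! ### Passing to the limit in integrals -/

section Limits

variable {α : Type*} [MeasurableSpace α] {μ : Measure α} {p q : ℝ}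

lemma integrable_and_integral_le_of_tendsto_ae {f : ℕ → α → ℝ} {g : α → ℝ} {M : ℕ → ℝ} {B : ℝ}
    (hf : ∀ n, Integrable (f n) μ) (hf₀ : ∀ n, 0 ≤ᵐ[μ] f n) (hM : ∀ n, ∫ x, f n x ∂μ ≤ M n)
    (hMB : Tendsto M atTop (𝓝 B)) (hlim : ∀ᵐ x ∂μ, Tendsto (fun n => f n x) atTop (𝓝 (g x))) :
    Integrable g μ ∧ ∫ x, g x ∂μ ≤ B := by
  have hg : AEStronglyMeasurable g μ :=
    aestronglyMeasurable_of_tendsto_ae atTop (fun n => (hf n).aestronglyMeasurable) hlim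
  have hg₀ : 0 ≤ᵐ[μ] g := by
    filter_upwards [ae_all_iff.2 hf₀, hlim] with x h₀ h using ge_of_tendsto' h h₀
  have hB : 0 ≤ B := ge_of_tendsto' hMB fun n => (integral_nonneg_of_ae (hf₀ n)).trans (hM n)
  have fatou : ∫⁻ x, ENNReal.ofReal (g x) ∂μ ≤ ENNReal.ofReal B :=
    calc ∫⁻ x, ENNReal.ofReal (g x) ∂μ
        = ∫⁻ x, liminf (fun n => ENNReal.ofReal (f n x)) atTop ∂μ := by
          refine lintegral_congr_ae ?_
          filter_upwards [hlim] with x hx using (ENNReal.tendsto_ofReal hx).liminf_eq.symm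
      _ ≤ liminf (fun n => ∫⁻ x, ENNReal.ofReal (f n x) ∂μ) atTop :=
          lintegral_liminf_le' fun n => (hf n).aestronglyMeasurable.aemeasurable.ennreal_ofReal
      _ ≤ liminf (fun n => ENNReal.ofReal (M n)) atTop := by
          refine liminf_le_liminf (Eventually.of_forall fun n => ?_)
          rw [← ofReal_integral_eq_lintegral_ofReal (hf n) (hf₀ n)]
          exact ENNReal.ofReal_le_ofReal (hM n)
      _ = ENNReal.ofReal B := (ENNReal.tendsto_ofReal hMB).liminf_eq
  refine ⟨⟨hg, ?_⟩, ?_⟩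
  · rw [hasFiniteIntegral_iff_ofReal hg₀]
    exact fatou.trans_lt ENNReal.ofReal_lt_top
  · rw [integral_eq_lintegral_of_nonneg_ae hg₀ hg]
    exact ENNReal.toReal_le_of_le_ofReal hB fatou

lemma abs_mul_le_rpow_add_rpow (hpq : p.HolderConjugate q) (a b : ℝ) :
    |a * b| ≤ |a| ^ q + |b| ^ p := by
  have young := Real.young_inequality_of_nonneg (abs_nonneg a) (abs_nonneg b) hpq.symm
  have ha : |a| ^ q / q ≤ |a| ^ q := div_le_self (by positivity) hpq.symm.lt.le
  have hb : |b| ^ p / p ≤ |b| ^ p := div_le_self (by positivity) hpq.lt.le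
  rw [abs_mul]
  linarith

lemma abs_sub_rpow_le (hp : 1 ≤ p) (a b : ℝ) :
    |a - b| ^ p ≤ 2 ^ (p - 1) * (|a| ^ p + |b| ^ p) := by
  have convexity : (|a| + |b|) ^ p ≤ 2 ^ (p - 1) * (|a| ^ p + |b| ^ p) := by
    exact_mod_cast NNReal.rpow_add_le_mul_rpow_add_rpow ‖a‖₊ ‖b‖₊ hp
  exact (Real.rpow_le_rpow (abs_nonneg _) (abs_sub a b) (by linarith)).trans convexity

lemma mul_le_min_add_rpow (hpq : p.HolderConjugate q) {t u l : ℝ} (ht : 0 ≤ t) (hu : 0 ≤ u)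
    (hl : 0 < l) : t * u ≤ min (t * u) (l * t ^ q) + l ^ (-(p - 1)) * u ^ p := by
  have hp : 0 < p - 1 := hpq.sub_one_pos
  rcases le_or_gt (t * u) (l * t ^ q) with h | h
  · rw [min_eq_left h]
    have : 0 ≤ l ^ (-(p - 1)) * u ^ p := by positivity
    linarith
  have ht' : 0 < t := ht.lt_of_ne fun h₀ => by
    simp [← h₀, Real.zero_rpow hpq.symm.pos.ne'] at h
  have hlt : l * t ^ (q - 1) < u := by
    rw [Real.rpow_sub_one ht'.ne', ← mul_div_assoc, div_lt_iff₀ ht']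
    linarith
  have hpow : l ^ (p - 1) * t ≤ u ^ (p - 1) := by
    have hconj : (q - 1) * (p - 1) = 1 := by linarith [hpq.mul_eq_add]
    have := Real.rpow_le_rpow (by positivity) hlt.le hp.le
    rwa [Real.mul_rpow hl.le (by positivity), ← Real.rpow_mul ht, hconj, Real.rpow_one] at this
  have ht_le : t ≤ l ^ (-(p - 1)) * u ^ (p - 1) := by
    rwa [Real.rpow_neg hl.le, inv_mul_eq_div, le_div_iff₀ (by positivity), mul_comm]
  calc t * u ≤ l ^ (-(p - 1)) * u ^ (p - 1) * u := by gcongr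
    _ = l ^ (-(p - 1)) * u ^ p := by
      have hu' : u ≠ 0 := ((by positivity : 0 ≤ l * t ^ (q - 1)).trans_lt hlt).ne'
      rw [mul_assoc, ← Real.rpow_add_one hu', sub_add_cancel]
    _ ≤ _ := le_add_of_nonneg_left (by positivity)

lemma integrable_mul_of_rpow (hpq : p.HolderConjugate q) {F h : α → ℝ}
    (hF : AEStronglyMeasurable F μ) (hFq : Integrable (fun x => |F x| ^ q) μ)
    (hh : AEStronglyMeasurable h μ) (hhp : Integrable (fun x => |h x| ^ p) μ) :
    Integrable (fun x => F x * h x) μ :=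
  (hFq.add hhp).mono' (hF.mul hh) (ae_of_all _ fun _ => abs_mul_le_rpow_add_rpow hpq _ _)

lemma tendsto_integral_mul_zero_of_tendsto_ae (hpq : p.HolderConjugate q) {F : α → ℝ}
    {h : ℕ → α → ℝ} {B : ℝ} (hF : AEStronglyMeasurable F μ)
    (hFq : Integrable (fun x => |F x| ^ q) μ) (hh : ∀ n, AEStronglyMeasurable (h n) μ)
    (hhp : ∀ n, Integrable (fun x => |h n x| ^ p) μ) (hB : ∀ n, ∫ x, |h n x| ^ p ∂μ ≤ B)
    (hlim : ∀ᵐ x ∂μ, Tendsto (fun n => h n x) atTop (𝓝 0)) :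
    Tendsto (fun n => ∫ x, |F x * h n x| ∂μ) atTop (𝓝 0) := by
  have hFh n := (integrable_mul_of_rpow hpq hF hFq (hh n) (hhp n)).abs
  set m : ℝ → ℕ → α → ℝ := fun l n x => min |F x * h n x| (l * |F x| ^ q) with hm
  have hm₀ : ∀ l, 0 ≤ l → ∀ n x, 0 ≤ m l n x := fun l hl n x => by positivity
  have hm_int : ∀ l, 0 ≤ l → ∀ n, Integrable (m l n) μ := fun l _ n => (hFh n).inf (hFq.const_mul l)
  have hm_lim : ∀ l, 0 ≤ l → Tendsto (fun n => ∫ x, m l n x ∂μ) atTop (𝓝 0) := fun l hl => by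
    rw [← integral_zero α ℝ (μ := μ)]
    refine tendsto_integral_of_dominated_convergence (fun x => l * |F x| ^ q)
      (fun n => (hm_int l hl n).aestronglyMeasurable) (hFq.const_mul l)
      (fun n => ae_of_all _ fun x => ?_) ?_
    · rw [Real.norm_of_nonneg (hm₀ l hl n x)]
      exact min_le_right _ _
    · filter_upwards [hlim] with x hx
      refine squeeze_zero (fun n => hm₀ l hl n x) (fun n => min_le_left _ _) ?_
      simpa using (hx.const_mul (F x)).abs
  have hsplit : ∀ l, 0 < l → ∀ n,
      ∫ x, |F x * h n x| ∂μ ≤ ∫ x, m l n x ∂μ + l ^ (-(p - 1)) * B := fun l hl n =>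
    calc ∫ x, |F x * h n x| ∂μ
        ≤ ∫ x, (m l n x + l ^ (-(p - 1)) * |h n x| ^ p) ∂μ := by
          refine integral_mono (hFh n) ((hm_int l hl.le n).add ((hhp n).const_mul _)) fun x => ?_
          simp only [hm, abs_mul]
          exact mul_le_min_add_rpow hpq (abs_nonneg _) (abs_nonneg _) hl
      _ = ∫ x, m l n x ∂μ + l ^ (-(p - 1)) * ∫ x, |h n x| ^ p ∂μ := by
          rw [integral_add (hm_int l hl.le n) ((hhp n).const_mul _), integral_const_mul]
      _ ≤ _ := by gcongr; exact hB n
  refine tendsto_order.2 ⟨fun a ha => Eventually.of_forall fun n =>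
    ha.trans_le (integral_nonneg fun _ => abs_nonneg _), fun ε hε => ?_⟩
  have htail : Tendsto (fun l : ℝ => l ^ (-(p - 1)) * B) atTop (𝓝 0) := by
    simpa using (tendsto_rpow_neg_atTop hpq.sub_one_pos).mul_const B
  obtain ⟨l, hlε, hl⟩ :=
    ((htail.eventually_lt_const (half_pos hε)).and (eventually_gt_atTop 0)).exists
  filter_upwards [(hm_lim l hl.le).eventually_lt_const (half_pos hε)] with n hn
  linarith [hsplit l hl n]

lemma tendsto_integral_mul_of_tendsto_ae (hpq : p.HolderConjugate q) {F g : α → ℝ}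
    {f : ℕ → α → ℝ} {B : ℝ} (hF : AEStronglyMeasurable F μ)
    (hFq : Integrable (fun x => |F x| ^ q) μ) (hf : ∀ n, AEStronglyMeasurable (f n) μ)
    (hfp : ∀ n, Integrable (fun x => |f n x| ^ p) μ) (hB : ∀ n, ∫ x, |f n x| ^ p ∂μ ≤ B)
    (hlim : ∀ᵐ x ∂μ, Tendsto (fun n => f n x) atTop (𝓝 (g x))) :
    Tendsto (fun n => ∫ x, F x * f n x ∂μ) atTop (𝓝 (∫ x, F x * g x ∂μ)) := by
  have hg : AEStronglyMeasurable g μ := aestronglyMeasurable_of_tendsto_ae atTop hf hlim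
  obtain ⟨hgp, hgB⟩ : Integrable (fun x => |g x| ^ p) μ ∧ ∫ x, |g x| ^ p ∂μ ≤ B := by
    refine integrable_and_integral_le_of_tendsto_ae hfp
      (fun n => ae_of_all _ fun x => by positivity) hB tendsto_const_nhds ?_
    filter_upwards [hlim] with x hx using hx.abs.rpow_const (Or.inr hpq.nonneg)
  have hle : ∀ n x, |f n x - g x| ^ p ≤ 2 ^ (p - 1) * (|f n x| ^ p + |g x| ^ p) :=
    fun n x => abs_sub_rpow_le hpq.lt.le _ _
  have hdom n := ((hfp n).add hgp).const_mul (2 ^ (p - 1))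
  have hdiff : ∀ n, Integrable (fun x => |f n x - g x| ^ p) μ := fun n => by
    refine (hdom n).mono' ((Real.continuous_rpow_const hpq.nonneg).comp_aestronglyMeasurable
      ((hf n).sub hg).norm) (ae_of_all _ fun x => ?_)
    rw [Real.norm_of_nonneg (by positivity)]
    exact hle n x
  have hdiffB : ∀ n, ∫ x, |f n x - g x| ^ p ∂μ ≤ 2 ^ (p - 1) * (B + B) := fun n =>
    calc ∫ x, |f n x - g x| ^ p ∂μ ≤ ∫ x, 2 ^ (p - 1) * (|f n x| ^ p + |g x| ^ p) ∂μ :=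
          integral_mono (hdiff n) (hdom n) (hle n)
      _ = 2 ^ (p - 1) * (∫ x, |f n x| ^ p ∂μ + ∫ x, |g x| ^ p ∂μ) := by
          rw [integral_const_mul, integral_add (hfp n) hgp]
      _ ≤ _ := by gcongr; exact hB n
  have hzero := tendsto_integral_mul_zero_of_tendsto_ae hpq hF hFq (fun n => (hf n).sub hg) hdiff
    hdiffB (by filter_upwards [hlim] with x hx; simpa using hx.sub_const (g x))
  rw [tendsto_iff_norm_sub_tendsto_zero]
  refine squeeze_zero (fun n => norm_nonneg _) (fun n => ?_) hzero
  rw [← integral_sub (integrable_mul_of_rpow hpq hF hFq (hf n) (hfp n))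
    (integrable_mul_of_rpow hpq hF hFq hg hgp)]
  simpa only [Pi.sub_apply, mul_sub, Real.norm_eq_abs] using
    norm_integral_le_integral_norm (fun x => F x * f n x - F x * g x) (μ := μ)

end Limits

/-! ### Truncated kernels and polynomial decay -/

section Kernel

variable {E : Type*} [NormedAddCommGroup E] {e ε : ℝ}

lemma rpow_neg_le_of_le_mul {a b c : ℝ} (ha : 0 < a) (hb : 0 < b) (hc : 0 ≤ c) (he : 0 ≤ e)
    (h : b ≤ c * a) : a ^ (-e) ≤ c ^ e * b ^ (-e) := by
  have hpow : b ^ e ≤ c ^ e * a ^ e := by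
    rw [← Real.mul_rpow hc ha.le]
    exact Real.rpow_le_rpow hb.le h he
  rw [Real.rpow_neg ha.le, Real.rpow_neg hb.le, ← div_eq_mul_inv, le_div_iff₀ (by positivity),
    inv_mul_le_iff₀ (by positivity)]
  linarith

/-- The kernel `‖z‖ ^ (-e)` of a fractional Laplacian, set to zero on the ball of radius `ε`. -/
noncomputable def truncKernel (e ε : ℝ) (z : E) : ℝ := if ε ≤ ‖z‖ then ‖z‖ ^ (-e) else 0

/-- The smoothed power `(1 + ‖x‖) ^ (-e)`, the decay rate at infinity of the fractional Laplacian
with kernel `‖z‖ ^ (-e)` of a test function. -/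
noncomputable def decay (e : ℝ) (x : E) : ℝ := (1 + ‖x‖) ^ (-e)

lemma truncKernel_nonneg (z : E) : 0 ≤ truncKernel e ε z := by
  unfold truncKernel; split_ifs <;> positivity

lemma truncKernel_neg (z : E) : truncKernel e ε (-z) = truncKernel e ε z := by
  rw [truncKernel, truncKernel, norm_neg]

lemma truncKernel_sub_comm (x y : E) : truncKernel e ε (x - y) = truncKernel e ε (y - x) := by
  rw [← truncKernel_neg, neg_sub]

lemma truncKernel_le (z : E) : truncKernel e ε z ≤ ‖z‖ ^ (-e) := by
  unfold truncKernel
  split_ifs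
  exacts [le_rfl, by positivity]

lemma measurable_truncKernel [MeasurableSpace E] [OpensMeasurableSpace E] :
    Measurable (truncKernel e ε : E → ℝ) :=
  Measurable.ite (measurableSet_le measurable_const measurable_norm)
    (measurable_norm.pow_const _) measurable_const

lemma tendsto_truncKernel (he : 0 < e) (z : E) :
    Tendsto (fun ε => truncKernel e ε z) (𝓝[>] 0) (𝓝 (‖z‖ ^ (-e))) := by
  refine tendsto_const_nhds.congr' ?_
  rcases eq_or_ne z 0 with rfl | hz
  · filter_upwards [self_mem_nhdsWithin] with ε hε
    simp [truncKernel, not_le.2 (mem_Ioi.1 hε), Real.zero_rpow (neg_ne_zero.2 he.ne')]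
  · filter_upwards [Ioo_mem_nhdsGT (norm_pos_iff.2 hz)] with ε hε
    simp [truncKernel, hε.2.le]

lemma decay_pos (x : E) : 0 < decay e x := by unfold decay; positivity

lemma truncKernel_le_decay (he : 0 ≤ e) (hε : 0 < ε) (z : E) :
    truncKernel e ε z ≤ (1 / ε + 1) ^ e * decay e z := by
  unfold truncKernel decay
  split_ifs with h
  · have : 1 ≤ 1 / ε * ‖z‖ := by rwa [one_div, inv_mul_eq_div, one_le_div hε]
    exact rpow_neg_le_of_le_mul (hε.trans_le h) (by positivity) (by positivity) he (by linarith)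
  · positivity

lemma decay_le_decay_add (he : 0 ≤ e) (x z : E) :
    decay e x ≤ (1 + ‖z‖) ^ e * decay e (x + z) := by
  refine rpow_neg_le_of_le_mul (by positivity) (by positivity) (by positivity) he ?_
  nlinarith [norm_add_le x z, mul_nonneg (norm_nonneg x) (norm_nonneg z)]

lemma rpow_half_norm_le_decay (he : 0 ≤ e) {x : E} (hx : 1 ≤ ‖x‖) :
    (‖x‖ / 2) ^ (-e) ≤ 4 ^ e * decay e x :=
  rpow_neg_le_of_le_mul (by linarith) (by positivity) (by norm_num) he (by linarith)

lemma one_le_mul_decay (he : 0 ≤ e) {r : ℝ} (hr : 0 ≤ r) {x : E} (hx : ‖x‖ ≤ r) :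
    1 ≤ (1 + r) ^ e * decay e x := by
  simpa [decay] using rpow_neg_le_of_le_mul one_pos (b := 1 + ‖x‖) (by positivity)
    (by positivity : 0 ≤ 1 + r) he (by linarith)

lemma measurable_decay [MeasurableSpace E] [OpensMeasurableSpace E] :
    Measurable (decay e : E → ℝ) :=
  (measurable_const.add measurable_norm).pow_const _

variable {d : ℕ}

lemma integrable_decay (he : (d : ℝ) < e) : Integrable (decay e : Ed d → ℝ) :=
  integrable_one_add_norm (by simpa using he)

lemma integrable_truncKernel (he : (d : ℝ) < e) (hε : 0 < ε) :
    Integrable (truncKernel e ε : Ed d → ℝ) := by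
  refine ((integrable_decay he).const_mul ((1 / ε + 1) ^ e)).mono'
    measurable_truncKernel.aestronglyMeasurable (ae_of_all _ fun z => ?_)
  rw [Real.norm_of_nonneg (truncKernel_nonneg z)]
  exact truncKernel_le_decay (d.cast_nonneg.trans he.le) hε z

lemma integrableOn_ball_norm_rpow_neg (hd : 1 ≤ d) {a : ℝ} (ha : a < d) (r : ℝ) :
    IntegrableOn (fun y : Ed d => ‖y‖ ^ (-a)) (ball 0 r) := by
  have : Nonempty (Fin d) := ⟨⟨0, hd⟩⟩
  rw [integrableOn_fun_norm_addHaar (μ := volume) (f := fun t : ℝ => t ^ (-a))]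
  have radial : IntegrableOn (fun t : ℝ => t ^ ((d : ℝ) - 1 - a)) (Ioo 0 r) := by
    rcases le_or_gt r 0 with hr | hr
    · simp [Ioo_eq_empty (not_lt.2 hr)]
    · rw [← integrableOn_Ioc_iff_integrableOn_Ioo,
        ← intervalIntegrable_iff_integrableOn_Ioc_of_le hr.le]
      exact intervalIntegral.intervalIntegrable_rpow' (by linarith)
  refine radial.congr_fun (fun t ht => ?_) measurableSet_Ioo
  simp only [finrank_euclideanSpace, Fintype.card_fin, smul_eq_mul]
  rw [← Real.rpow_natCast, ← Real.rpow_add ht.1, Nat.cast_sub hd, Nat.cast_one, sub_eq_add_neg]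

lemma integrable_min_sq_one_mul_norm_rpow_neg (hd : 1 ≤ d) (he : (d : ℝ) < e) (he' : e < d + 2) :
    Integrable (fun z : Ed d => min (‖z‖ ^ 2) 1 * ‖z‖ ^ (-e)) := by
  have near := (integrable_indicator_iff measurableSet_ball).2
    (integrableOn_ball_norm_rpow_neg hd (a := e - 2) (by linarith) 1)
  refine (near.add (integrable_truncKernel he one_pos)).mono' (((measurable_norm.pow_const 2).min
    measurable_const).mul (measurable_norm.pow_const _)).aestronglyMeasurable
    (ae_of_all _ fun z => ?_)
  rw [Real.norm_of_nonneg (by positivity), Pi.add_apply]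
  rcases lt_or_ge ‖z‖ 1 with hz | hz
  · rw [indicator_of_mem (by simpa using hz)]
    refine le_add_of_le_of_nonneg ?_ (truncKernel_nonneg z)
    rcases eq_or_ne z 0 with rfl | hz₀
    · simpa using Real.rpow_nonneg le_rfl (2 - e)
    · calc min (‖z‖ ^ 2) 1 * ‖z‖ ^ (-e) ≤ ‖z‖ ^ 2 * ‖z‖ ^ (-e) := by gcongr; exact min_le_left _ _
        _ = ‖z‖ ^ (-(e - 2)) := by
          rw [← Real.rpow_natCast, ← Real.rpow_add (norm_pos_iff.2 hz₀)]
          congr 1; push_cast; ring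
  · rw [indicator_of_notMem (by simpa using hz), zero_add, truncKernel, if_pos hz]
    exact mul_le_of_le_one_left (by positivity) (min_le_right _ _)

end Kernel

section SecondDifference

variable {E : Type*} [NormedAddCommGroup E]

/-- Test functions: smooth with compact support. -/
structure IsTest [NormedSpace ℝ E] (ψ : E → ℝ) : Prop where
  contDiff : ContDiff ℝ (⊤ : ℕ∞) ψ
  hasCompactSupport : HasCompactSupport ψ

/-- The symmetric second difference of `f` at `x` in the direction `z`, with the sign of `-Δ`. -/
def secondDiff (f : E → ℝ) (x z : E) : ℝ := 2 * f x - f (x + z) - f (x - z)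

lemma abs_secondDiff_le {f : E → ℝ} {A : ℝ} (hA : ∀ x, |f x| ≤ A) (x z : E) :
    |secondDiff f x z| ≤ 4 * A := by
  have h₀ := abs_le.1 (hA x)
  have h₁ := abs_le.1 (hA (x + z))
  have h₂ := abs_le.1 (hA (x - z))
  rw [secondDiff, abs_le]
  constructor <;> linarith

lemma abs_secondDiff_mul_rpow_le {e A M : ℝ} {f : E → ℝ} {x : E} (hA : ∀ y, |f y| ≤ A)
    (hM₀ : 0 ≤ M) (hM : ∀ z, |secondDiff f x z| ≤ M * ‖z‖ ^ 2) (z : E) :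
    |secondDiff f x z| * ‖z‖ ^ (-e) ≤ (M + 4 * A) * (min (‖z‖ ^ 2) 1 * ‖z‖ ^ (-e)) := by
  rw [← mul_assoc]
  gcongr
  have hA₀ : 0 ≤ A := (abs_nonneg _).trans (hA 0)
  rcases le_total (‖z‖ ^ 2) 1 with h | h
  · rw [min_eq_left h]
    nlinarith [hM z, sq_nonneg ‖z‖]
  · rw [min_eq_right h]
    linarith [abs_secondDiff_le hA x z]

variable [NormedSpace ℝ E] {ψ : E → ℝ}

lemma IsTest.integrable [MeasurableSpace E] [OpensMeasurableSpace E] {μ : Measure E}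
    [IsFiniteMeasureOnCompacts μ] (hψ : IsTest ψ) : Integrable ψ μ :=
  hψ.contDiff.continuous.integrable_of_hasCompactSupport hψ.hasCompactSupport

lemma IsTest.exists_abs_le (hψ : IsTest ψ) : ∃ A, ∀ x, |ψ x| ≤ A :=
  hψ.hasCompactSupport.exists_bound_of_continuous hψ.contDiff.continuous

lemma IsTest.exists_one_le_radius (hψ : IsTest ψ) :
    ∃ r : ℝ, 1 ≤ r ∧ ∀ y, r < ‖y‖ → ψ y = 0 := by
  obtain ⟨r, hr⟩ := hψ.hasCompactSupport.isCompact.isBounded.subset_closedBall (0 : E)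
  refine ⟨max r 1, le_max_right _ _, fun y hy => ?_⟩
  by_contra hne
  have := mem_closedBall_zero_iff.1 (hr (subset_tsupport _ hne))
  exact hy.not_ge (this.trans (le_max_left _ _))

lemma IsTest.exists_secondDiff_le (hψ : IsTest ψ) :
    ∃ M : ℝ, 0 ≤ M ∧ ∀ x z, |secondDiff ψ x z| ≤ M * ‖z‖ ^ 2 := by
  have hdiff : Differentiable ℝ ψ := hψ.contDiff.differentiable (by simp)
  have hderiv : ContDiff ℝ 1 (fderiv ℝ ψ) :=
    ContDiff.fderiv_right (n := 2) (contDiff_infty.1 hψ.contDiff 2) one_add_one_eq_two.le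
  obtain ⟨C, hC⟩ := hderiv.lipschitzWith_of_hasCompactSupport
    (hψ.hasCompactSupport.fderiv ℝ) (by simp)
  have taylor : ∀ x z, |ψ (x + z) - ψ x - fderiv ℝ ψ x z| ≤ C * ‖z‖ * ‖z‖ := fun x z => by
    have := (convex_segment x (x + z)).norm_image_sub_le_of_norm_hasFDerivWithin_le'
      (f := ψ) (f' := fderiv ℝ ψ) (φ := fderiv ℝ ψ x) (C := C * ‖z‖)
      (fun y _ => (hdiff y).hasFDerivAt.hasFDerivWithinAt) (fun y hy => ?_)
      (left_mem_segment ℝ x (x + z)) (right_mem_segment ℝ x (x + z))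
    · simpa using this
    · refine (hC.norm_sub_le y x).trans ?_
      gcongr
      rw [segment_eq_image'] at hy
      obtain ⟨t, ht, rfl⟩ := hy
      simp only [add_sub_cancel_left, norm_smul, Real.norm_eq_abs, abs_of_nonneg ht.1]
      exact mul_le_of_le_one_left (norm_nonneg z) ht.2
  refine ⟨2 * C, by positivity, fun x z => ?_⟩
  have forward := abs_le.1 (taylor x z)
  have backward := abs_le.1 (taylor x (-z))
  rw [norm_neg, map_neg, ← sub_eq_add_neg] at backward
  rw [secondDiff, abs_le]
  constructor <;> nlinarith

end SecondDifference

/-! ### Truncated and symmetrized fractional Laplacians -/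

section FractionalLaplacian

variable {d : ℕ} {e ε : ℝ}

/-- The truncated fractional Laplacian with kernel `‖z‖ ^ (-e)`; the order `2 * s` corresponds to
`e = d + 2 * s`. -/
noncomputable def truncLap (e ε : ℝ) (f : Ed d → ℝ) (x : Ed d) : ℝ :=
  ∫ y, (f x - f y) * truncKernel e ε (x - y)

/-- The fractional Laplacian with kernel `‖z‖ ^ (-e)`, as an integral of second differences; this is
the limit of `truncLap e ε` as `ε → 0` and needs no principal value for smooth functions. -/
noncomputable def symmLap (e : ℝ) (f : Ed d → ℝ) (x : Ed d) : ℝ :=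
  1 / 2 * ∫ z, secondDiff f x z * ‖z‖ ^ (-e)

lemma fracLapTrunc_eq_truncLap (s : ℝ) (f : Ed d → ℝ) (x : Ed d) (ε : ℝ) :
    fracLapTrunc d s f x ε = truncLap ((d : ℝ) + 2 * s) ε f x := by
  have hmeas : MeasurableSet {y : Ed d | ε ≤ dist x y} :=
    measurableSet_le measurable_const (measurable_const.dist measurable_id)
  rw [fracLapTrunc, truncLap, ← integral_indicator hmeas]
  refine integral_congr_ae (ae_of_all _ fun y => ?_)
  simp only [indicator, truncKernel, mem_ofPred_eq, dist_eq_norm]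
  split_ifs
  · rw [Real.rpow_neg (norm_nonneg _), div_eq_mul_inv]
  · rw [mul_zero]

section Bounded

variable {f : Ed d → ℝ} {A M : ℝ}

lemma integrable_mul_truncKernel (he : (d : ℝ) < e) (hε : 0 < ε)
    (hf : AEStronglyMeasurable f volume) (hA : ∀ x, |f x| ≤ A) :
    Integrable (fun z => f z * truncKernel e ε z) :=
  (integrable_truncKernel he hε).bdd_mul hf (ae_of_all _ hA)

lemma truncLap_eq_integral_secondDiff (he : (d : ℝ) < e) (hε : 0 < ε) (hf : Measurable f)
    (hA : ∀ x, |f x| ≤ A) (x : Ed d) :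
    truncLap e ε f x = 1 / 2 * ∫ z, secondDiff f x z * truncKernel e ε z := by
  have backward : truncLap e ε f x = ∫ z, (f x - f (x - z)) * truncKernel e ε z := by
    rw [truncLap, ← integral_sub_left_eq_self _ volume x]
    simp only [sub_sub_cancel]
  have forward : truncLap e ε f x = ∫ z, (f x - f (x + z)) * truncKernel e ε z := by
    rw [backward, ← integral_neg_eq_self]
    simp only [sub_neg_eq_add, truncKernel_neg]
  have hdiff : ∀ y, |f x - f y| ≤ 2 * A := fun y => by
    linarith [abs_sub (f x) (f y), hA x, hA y]
  have int_backward : Integrable (fun z => (f x - f (x - z)) * truncKernel e ε z) :=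
    integrable_mul_truncKernel he hε (Measurable.aestronglyMeasurable (by fun_prop))
      fun z => hdiff _
  have int_forward : Integrable (fun z => (f x - f (x + z)) * truncKernel e ε z) :=
    integrable_mul_truncKernel he hε (Measurable.aestronglyMeasurable (by fun_prop))
      fun z => hdiff _
  have hsum : ∫ z, secondDiff f x z * truncKernel e ε z = truncLap e ε f x + truncLap e ε f x := by
    nth_rw 1 [forward]
    rw [backward, ← integral_add int_forward int_backward]
    refine integral_congr_ae (ae_of_all _ fun z => ?_)
    simp only [secondDiff]
    ring
  rw [hsum]
  ring

lemma abs_secondDiff_mul_truncKernel_le {x : Ed d} (hA : ∀ y, |f y| ≤ A) (hM₀ : 0 ≤ M)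
    (hM : ∀ z, |secondDiff f x z| ≤ M * ‖z‖ ^ 2) (z : Ed d) :
    ‖secondDiff f x z * truncKernel e ε z‖ ≤ (M + 4 * A) * (min (‖z‖ ^ 2) 1 * ‖z‖ ^ (-e)) := by
  refine le_trans ?_ (abs_secondDiff_mul_rpow_le hA hM₀ hM z)
  rw [Real.norm_eq_abs, abs_mul, abs_of_nonneg (truncKernel_nonneg z)]
  gcongr
  exact truncKernel_le z

lemma abs_truncLap_le (hd : 1 ≤ d) (he : (d : ℝ) < e) (he' : e < d + 2) (hε : 0 < ε)
    (hf : Measurable f) {x : Ed d} (hA : ∀ y, |f y| ≤ A) (hM₀ : 0 ≤ M)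
    (hM : ∀ z, |secondDiff f x z| ≤ M * ‖z‖ ^ 2) :
    |truncLap e ε f x| ≤ (M + 4 * A) * ∫ z : Ed d, min (‖z‖ ^ 2) 1 * ‖z‖ ^ (-e) := by
  have hint : ‖∫ z, secondDiff f x z * truncKernel e ε z‖ ≤
      ∫ z : Ed d, (M + 4 * A) * (min (‖z‖ ^ 2) 1 * ‖z‖ ^ (-e)) :=
    norm_integral_le_of_norm_le
      ((integrable_min_sq_one_mul_norm_rpow_neg hd he he').const_mul _)
      (ae_of_all _ (abs_secondDiff_mul_truncKernel_le hA hM₀ hM))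
  rw [integral_const_mul, Real.norm_eq_abs] at hint
  rw [truncLap_eq_integral_secondDiff he hε hf hA, abs_mul, abs_of_pos one_half_pos]
  exact (mul_le_of_le_one_left (abs_nonneg _) (by norm_num)).trans hint

lemma tendsto_truncLap (hd : 1 ≤ d) (he : (d : ℝ) < e) (he' : e < d + 2)
    (hf : Measurable f) {x : Ed d} (hA : ∀ y, |f y| ≤ A) (hM₀ : 0 ≤ M)
    (hM : ∀ z, |secondDiff f x z| ≤ M * ‖z‖ ^ 2) :
    Tendsto (fun ε => truncLap e ε f x) (𝓝[>] 0) (𝓝 (symmLap e f x)) := by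
  have hlim : Tendsto (fun ε => ∫ z, secondDiff f x z * truncKernel e ε z) (𝓝[>] 0)
      (𝓝 (∫ z, secondDiff f x z * ‖z‖ ^ (-e))) := by
    refine tendsto_integral_filter_of_dominated_convergence _ (Eventually.of_forall fun ε => ?_)
      (Eventually.of_forall fun ε => ae_of_all _ (abs_secondDiff_mul_truncKernel_le hA hM₀ hM))
      ((integrable_min_sq_one_mul_norm_rpow_neg hd he he').const_mul _)
      (ae_of_all _ fun z => (tendsto_truncKernel (d.cast_nonneg.trans_lt he) z).const_mul _)
    unfold secondDiff
    exact (Measurable.mul (by fun_prop) measurable_truncKernel).aestronglyMeasurable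
  refine (hlim.const_mul (1 / 2)).congr' ?_
  filter_upwards [self_mem_nhdsWithin] with ε hε
  rw [truncLap_eq_integral_secondDiff he hε hf hA]

end Bounded

lemma abs_truncLap_le_of_support (he : 0 ≤ e) {ψ : Ed d → ℝ} {r : ℝ} (hψ : Integrable ψ)
    (hr : 0 < r) (hsupp : ∀ y, r < ‖y‖ → ψ y = 0) {x : Ed d} (hx : 2 * r ≤ ‖x‖) :
    |truncLap e ε ψ x| ≤ (‖x‖ / 2) ^ (-e) * ∫ y, |ψ y| := by
  rw [truncLap, ← integral_const_mul, ← Real.norm_eq_abs]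
  refine norm_integral_le_of_norm_le (hψ.abs.const_mul _) (ae_of_all _ fun y => ?_)
  rw [hsupp x (by linarith), Real.norm_eq_abs, abs_mul, zero_sub, abs_neg,
    abs_of_nonneg (truncKernel_nonneg _), mul_comm]
  rcases lt_or_ge r ‖y‖ with hy | hy
  · simp [hsupp y hy]
  · gcongr
    refine (truncKernel_le _).trans (Real.rpow_le_rpow_of_nonpos (by linarith) ?_ (by linarith))
    linarith [norm_sub_norm_le x y]

lemma symmLap_comp_add_right (f : Ed d → ℝ) (x z : Ed d) :
    symmLap e (fun y => f (y + z)) x = symmLap e f (x + z) := by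
  simp only [symmLap, secondDiff, add_right_comm x _ z, sub_add_eq_add_sub x _ z]

lemma symmLap_comp_inv_smul (f : Ed d → ℝ) (x : Ed d) {R : ℝ} (hR : 0 < R) :
    symmLap e (fun y => f (R⁻¹ • y)) x = R ^ ((d : ℝ) - e) * symmLap e f (R⁻¹ • x) := by
  have change := Measure.integral_comp_inv_smul (volume : Measure (Ed d))
    (fun z => secondDiff f (R⁻¹ • x) z * ‖z‖ ^ (-e)) R
  simp only [finrank_euclideanSpace, Fintype.card_fin, smul_eq_mul,
    abs_of_pos (pow_pos hR d)] at change
  have rescale : ∫ z, secondDiff (fun y => f (R⁻¹ • y)) x z * ‖z‖ ^ (-e) =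
      R ^ (-e) * ∫ z, secondDiff f (R⁻¹ • x) (R⁻¹ • z) * ‖R⁻¹ • z‖ ^ (-e) := by
    rw [← integral_const_mul]
    refine integral_congr_ae (ae_of_all _ fun z => ?_)
    simp only [secondDiff, smul_add, smul_sub]
    rw [norm_smul, norm_inv, Real.norm_of_nonneg hR.le, Real.mul_rpow (by positivity)
      (by positivity), Real.inv_rpow hR.le, mul_left_comm, mul_inv_cancel_left₀ (by positivity)]
  rw [symmLap, symmLap, rescale, change, sub_eq_add_neg, Real.rpow_add hR, Real.rpow_natCast]
  ring

namespace IsTest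

variable {ψ : Ed d → ℝ}

lemma tendsto_truncLap (hψ : IsTest ψ) (hd : 1 ≤ d) (he : (d : ℝ) < e) (he' : e < d + 2)
    (x : Ed d) : Tendsto (fun ε => truncLap e ε ψ x) (𝓝[>] 0) (𝓝 (symmLap e ψ x)) := by
  obtain ⟨A, hA⟩ := hψ.exists_abs_le
  obtain ⟨M, hM₀, hM⟩ := hψ.exists_secondDiff_le
  exact _root_.tendsto_truncLap hd he he' hψ.contDiff.continuous.measurable hA hM₀ (hM x)

lemma fracLap_eq (hψ : IsTest ψ) (hd : 1 ≤ d) {s : ℝ} (hs : s ∈ Ioo (0 : ℝ) 1) (Cds : ℝ)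
    (x : Ed d) : fracLap d s Cds ψ x = Cds * symmLap ((d : ℝ) + 2 * s) ψ x := by
  have hlim := hψ.tendsto_truncLap (e := (d : ℝ) + 2 * s) hd (by linarith [hs.1])
    (by linarith [hs.2]) x
  rw [fracLap, funext (fracLapTrunc_eq_truncLap s ψ x), hlim.limUnder_eq]

lemma exists_abs_truncLap_le (hψ : IsTest ψ) (hd : 1 ≤ d) (he : (d : ℝ) < e) (he' : e < d + 2) :
    ∃ C, 0 ≤ C ∧ ∀ ε > 0, ∀ x, |truncLap e ε ψ x| ≤ C * decay e x := by
  have he₀ : 0 ≤ e := d.cast_nonneg.trans he.le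
  obtain ⟨A, hA⟩ := hψ.exists_abs_le
  obtain ⟨M, hM₀, hM⟩ := hψ.exists_secondDiff_le
  obtain ⟨r, hr, hsupp⟩ := hψ.exists_one_le_radius
  have hA₀ : 0 ≤ A := (abs_nonneg _).trans (hA 0)
  set I := ∫ z : Ed d, min (‖z‖ ^ 2) 1 * ‖z‖ ^ (-e)
  have : 0 ≤ I := integral_nonneg fun z => by positivity
  set N := ∫ y, |ψ y|
  have : 0 ≤ N := integral_nonneg fun z => abs_nonneg _
  have hnear : 0 ≤ (M + 4 * A) * I * (1 + 2 * r) ^ e := by positivity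
  have hfar : 0 ≤ 4 ^ e * N := by positivity
  refine ⟨(M + 4 * A) * I * (1 + 2 * r) ^ e + 4 ^ e * N, add_nonneg hnear hfar, fun ε hε x => ?_⟩
  have hJ : 0 ≤ decay e x := (decay_pos x).le
  rw [add_mul]
  rcases le_total ‖x‖ (2 * r) with hx | hx
  · calc |truncLap e ε ψ x| ≤ (M + 4 * A) * I * 1 := by
          rw [mul_one]
          exact abs_truncLap_le hd he he' hε hψ.contDiff.continuous.measurable hA hM₀ (hM x)
      _ ≤ (M + 4 * A) * I * ((1 + 2 * r) ^ e * decay e x) := by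
          gcongr
          exact one_le_mul_decay he₀ (by positivity) hx
      _ = (M + 4 * A) * I * (1 + 2 * r) ^ e * decay e x := by ring
      _ ≤ _ := le_add_of_nonneg_right (mul_nonneg hfar hJ)
  · calc |truncLap e ε ψ x| ≤ (‖x‖ / 2) ^ (-e) * N :=
          abs_truncLap_le_of_support he₀ hψ.integrable (by linarith) hsupp hx
      _ ≤ 4 ^ e * decay e x * N := by gcongr; exact rpow_half_norm_le_decay he₀ (by linarith)
      _ = 4 ^ e * N * decay e x := by ring
      _ ≤ _ := le_add_of_nonneg_left (mul_nonneg hnear hJ)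

lemma exists_abs_symmLap_le (hψ : IsTest ψ) (hd : 1 ≤ d) (he : (d : ℝ) < e) (he' : e < d + 2) :
    ∃ C, 0 ≤ C ∧ ∀ x, |symmLap e ψ x| ≤ C * decay e x := by
  obtain ⟨C, hC₀, hC⟩ := hψ.exists_abs_truncLap_le hd he he'
  refine ⟨C, hC₀, fun x => le_of_tendsto (hψ.tendsto_truncLap hd he he' x).abs ?_⟩
  filter_upwards [self_mem_nhdsWithin] with ε hε using hC ε hε x

end IsTest

lemma aestronglyMeasurable_symmLap {f : Ed d → ℝ} (hf : Measurable f) :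
    AEStronglyMeasurable (symmLap e f) volume := by
  have : Measurable fun q : Ed d × Ed d => secondDiff f q.1 q.2 * ‖q.2‖ ^ (-e) := by
    unfold secondDiff
    exact Measurable.mul (by fun_prop) (measurable_snd.norm.pow_const _)
  exact (this.stronglyMeasurable.integral_prod_right').aestronglyMeasurable.const_mul _

end FractionalLaplacian

/-! ### Riesz kernels are annihilated by the fractional Laplacian -/

section Inversion

open EuclideanGeometry

variable {d : ℕ}

lemma abs_det_reflection {F : Type*} [NormedAddCommGroup F] [InnerProductSpace ℝ F]
    (U : Submodule ℝ F) [U.HasOrthogonalProjection] :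
    |LinearMap.det ((U.reflection : F →L[ℝ] F) : F →ₗ[ℝ] F)| = 1 := by
  have involutive : ((U.reflection : F →L[ℝ] F) : F →ₗ[ℝ] F) ∘ₗ
      ((U.reflection : F →L[ℝ] F) : F →ₗ[ℝ] F) = LinearMap.id := by
    ext1 z
    simp [Submodule.reflection_reflection]
  rw [← abs_one, ← sq_eq_sq_iff_abs_eq_abs, sq, ← LinearMap.det_comp, involutive,
    LinearMap.det_id, one_pow]

lemma abs_det_fderiv_inversion (R : ℝ) (y : Ed d) :
    |((R / dist y 0) ^ 2 • ((ℝ ∙ (y - 0))ᗮ.reflection : Ed d →L[ℝ] Ed d)).det| =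
      (R / ‖y‖) ^ (2 * d) := by
  rw [ContinuousLinearMap.det, ContinuousLinearMap.toLinearMap_smul, LinearMap.det_smul, abs_mul,
    abs_det_reflection, finrank_euclideanSpace, Fintype.card_fin, dist_zero_right, pow_mul, mul_one,
    abs_of_nonneg (by positivity)]

lemma integral_eq_integral_inversion (hd : 1 ≤ d) {R : ℝ} (hR : 0 < R) (g : Ed d → ℝ) :
    ∫ y, g y = ∫ y, (R / ‖y‖) ^ (2 * d) * g (inversion (0 : Ed d) R y) := by
  have : Nonempty (Fin d) := ⟨⟨0, hd⟩⟩
  have compl_zero : ∀ f : Ed d → ℝ, ∫ y in ({0}ᶜ : Set (Ed d)), f y = ∫ y, f y := fun f => by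
    rw [setIntegral_congr_set (ae_eq_univ.2 (by simp)), setIntegral_univ]
  have image_inversion : inversion (0 : Ed d) R '' {0}ᶜ = {0}ᶜ := by
    rw [image_compl_eq (inversion_bijective _ hR.ne'), image_singleton, inversion_self]
  have change := integral_image_eq_integral_abs_det_fderiv_smul volume
    (measurableSet_singleton (0 : Ed d)).compl
    (fun x hx => (hasFDerivAt_inversion (R := R) hx).hasFDerivWithinAt)
    (inversion_injective _ hR.ne').injOn g
  rw [image_inversion, compl_zero, compl_zero] at change
  simpa only [abs_det_fderiv_inversion, smul_eq_mul] using change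

end Inversion

section RieszKernel

variable {d : ℕ} {a e ε : ℝ}

lemma integrable_norm_rpow_neg_mul_truncKernel (hd : 1 ≤ d) (ha₀ : 0 ≤ a) (ha : a < d)
    (he : (d : ℝ) < e) (hε : 0 < ε) (x : Ed d) :
    Integrable (fun y : Ed d => ‖y‖ ^ (-a) * truncKernel e ε (x - y)) := by
  have near := (integrable_indicator_iff measurableSet_ball).2
    (integrableOn_ball_norm_rpow_neg hd ha 1)
  have far := (integrable_truncKernel (d := d) he hε).comp_sub_left x
  refine ((near.const_mul (ε ^ (-e))).add far).mono' ((measurable_norm.pow_const _).mul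
    (measurable_truncKernel.comp (measurable_const.sub measurable_id))).aestronglyMeasurable
    (ae_of_all _ fun y => ?_)
  have hK := truncKernel_nonneg (e := e) (ε := ε) (x - y)
  rw [Real.norm_of_nonneg (mul_nonneg (by positivity) hK), Pi.add_apply]
  rcases lt_or_ge ‖y‖ 1 with hy | hy
  · rw [indicator_of_mem (by simpa using hy), mul_comm]
    refine le_add_of_le_of_nonneg ?_ hK
    gcongr
    unfold truncKernel
    split_ifs with h
    · exact Real.rpow_le_rpow_of_nonpos hε h (by linarith [d.cast_nonneg (α := ℝ)])
    · positivity
  · rw [indicator_of_notMem (by simpa using hy), mul_zero, zero_add]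
    exact mul_le_of_le_one_left hK (Real.rpow_le_one_of_one_le_of_nonpos hy (by linarith))

/-- The image of `truncKernel e ε (x - ·)` under the inversion in the sphere through `x`. -/
noncomputable def invertedKernel (e ε : ℝ) (x y : Ed d) : ℝ :=
  if ε * ‖y‖ ≤ ‖x‖ * ‖x - y‖ then ‖x - y‖ ^ (-e) else 0

lemma truncKernel_sub_inversion {x y : Ed d} (hx : x ≠ 0) (hy : y ≠ 0) :
    truncKernel e ε (x - EuclideanGeometry.inversion (0 : Ed d) ‖x‖ y) =
      (‖x‖ / ‖y‖) ^ (-e) * invertedKernel e ε x y := by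
  have hY : 0 < ‖y‖ := norm_pos_iff.2 hy
  have hdist : ‖x - EuclideanGeometry.inversion (0 : Ed d) ‖x‖ y‖ = ‖x‖ * ‖x - y‖ / ‖y‖ := by
    have fixed : EuclideanGeometry.inversion (0 : Ed d) ‖x‖ x = x := by
      simpa using EuclideanGeometry.inversion_dist_center (0 : Ed d) x
    have h := EuclideanGeometry.dist_inversion_inversion hx hy ‖x‖
    rw [fixed, dist_zero_right, dist_zero_right, dist_eq_norm, dist_eq_norm] at h
    rw [h]
    field_simp
  simp only [truncKernel, invertedKernel, hdist, le_div_iff₀ hY]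
  rw [mul_div_right_comm, Real.mul_rpow (by positivity) (norm_nonneg _), mul_ite, mul_zero]

lemma integral_norm_rpow_sub_mul_truncKernel (hd : 1 ≤ d) (hae : a + e = 2 * d) {x : Ed d}
    (hx : x ≠ 0) :
    ∫ y, (‖x‖ ^ (-a) - ‖y‖ ^ (-a)) * truncKernel e ε (x - y) =
      - ∫ y, (‖x‖ ^ (-a) - ‖y‖ ^ (-a)) * invertedKernel e ε x y := by
  have : Nonempty (Fin d) := ⟨⟨0, hd⟩⟩
  have hX : 0 < ‖x‖ := norm_pos_iff.2 hx
  rw [integral_eq_integral_inversion hd hX, ← integral_neg]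
  refine integral_congr_ae ?_
  filter_upwards [compl_mem_ae_iff.2 (measure_singleton (0 : Ed d))] with y hy
  have hY : 0 < ‖y‖ := norm_pos_iff.2 hy
  have hnorm : ‖EuclideanGeometry.inversion (0 : Ed d) ‖x‖ y‖ = ‖x‖ / ‖y‖ * ‖x‖ := by
    have := EuclideanGeometry.dist_inversion_center (0 : Ed d) y ‖x‖
    rw [dist_zero_right, dist_zero_right] at this
    rw [this]
    ring
  have hjac : (‖x‖ / ‖y‖) ^ (2 * d) = (‖x‖ / ‖y‖) ^ a * (‖x‖ / ‖y‖) ^ e := by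
    rw [← Real.rpow_natCast, ← Real.rpow_add (by positivity), hae, Nat.cast_mul, Nat.cast_ofNat]
  rw [truncKernel_sub_inversion hx hy, hnorm, hjac, Real.mul_rpow (by positivity) hX.le]
  simp only [Real.rpow_neg, hX.le, hY.le, div_nonneg, Real.div_rpow]
  field_simp
  ring

lemma measureReal_shell_le {x : Ed d} {η : ℝ} (hε : 0 < ε) (hη : 0 < η) (hη' : η ≤ 1 / 2) :
    volume.real (closedBall x (ε * (1 + η)) \ ball x (ε * (1 - η))) ≤
      volume.real (ball (0 : Ed d) 1) * (2 * d * 2 ^ (d - 1)) * (ε ^ d * η) := by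
  have hinner : 0 ≤ ε * (1 - η) := mul_nonneg hε.le (by linarith)
  have hsub : ball x (ε * (1 - η)) ⊆ closedBall x (ε * (1 + η)) :=
    ball_subset_closedBall.trans (closedBall_subset_closedBall (by gcongr; linarith))
  have hball : volume.real (ball x (ε * (1 - η))) =
      (ε * (1 - η)) ^ d * volume.real (ball (0 : Ed d) 1) := by
    rw [measureReal_def, Measure.addHaar_ball_of_pos volume x (mul_pos hε (by linarith)),
      ENNReal.toReal_mul, ENNReal.toReal_ofReal (by positivity), finrank_euclideanSpace,
      Fintype.card_fin, measureReal_def]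
  have hpow : (1 + η) ^ d - (1 - η) ^ d ≤ 2 * η * d * 2 ^ (d - 1) := by
    refine (le_abs_self _).trans ((abs_pow_sub_pow_le _ _ _).trans ?_)
    rw [add_sub_sub_cancel, ← two_mul, abs_of_pos (by positivity : 0 < 2 * η),
      abs_of_pos (by positivity : 0 < 1 + η), abs_of_pos (by linarith : 0 < 1 - η)]
    gcongr
    exact max_le (by linarith) (by linarith)
  rw [measureReal_sdiff hsub measurableSet_ball measure_closedBall_lt_top.ne,
    Measure.addHaar_real_closedBall volume x (by positivity), hball, finrank_euclideanSpace,
    Fintype.card_fin, mul_pow, mul_pow]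
  calc ε ^ d * (1 + η) ^ d * volume.real (ball (0 : Ed d) 1) -
        ε ^ d * (1 - η) ^ d * volume.real (ball (0 : Ed d) 1)
      = volume.real (ball (0 : Ed d) 1) * ε ^ d * ((1 + η) ^ d - (1 - η) ^ d) := by ring
    _ ≤ volume.real (ball (0 : Ed d) 1) * ε ^ d * (2 * η * d * 2 ^ (d - 1)) := by gcongr
    _ = _ := by ring

lemma exists_abs_norm_rpow_sub_le {F : Type*} [NormedAddCommGroup F] [InnerProductSpace ℝ F]
    {x : F} (hx : x ≠ 0) (r : ℝ) : ∃ C δ : ℝ, 0 ≤ C ∧ 0 < δ ∧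
      ∀ y, ‖x - y‖ < δ → |‖x‖ ^ r - ‖y‖ ^ r| ≤ C * ‖x - y‖ := by
  have hdiff : DifferentiableAt ℝ (fun y : F => ‖y‖ ^ r) x :=
    ((contDiffAt_norm ℝ hx (n := 1)).differentiableAt (by simp)).rpow_const
      (Or.inl (norm_ne_zero_iff.2 hx))
  obtain ⟨C, hC₀, hC⟩ := hdiff.hasFDerivAt.isBigO_sub.exists_nonneg
  obtain ⟨δ, hδ, h⟩ := Metric.eventually_nhds_iff.1 hC.bound
  refine ⟨C, δ, hC₀, hδ, fun y hy => ?_⟩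
  have := h (y := y) (by rwa [dist_comm, dist_eq_norm])
  rwa [Real.norm_eq_abs, abs_sub_comm, norm_sub_rev] at this

lemma mem_shell_of_truncKernel_ne {x y : Ed d} (hε : 0 < ε) (hεx : 4 * ε < ‖x‖)
    (hne : truncKernel e ε (x - y) ≠ invertedKernel e ε x y) :
    ε * (1 - 2 * ε / ‖x‖) ≤ ‖x - y‖ ∧ ‖x - y‖ ≤ ε * (1 + 2 * ε / ‖x‖) := by
  have hX : 0 < ‖x‖ := by linarith
  obtain ⟨η, hη⟩ : ∃ η, η = 2 * ε / ‖x‖ := ⟨_, rfl⟩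
  have hη₀ : 0 < η := by rw [hη]; positivity
  have hηx : ‖x‖ * η = 2 * ε := by rw [hη]; field_simp
  have hy_le : ‖y‖ ≤ ‖x‖ + ‖x - y‖ := by simpa using norm_sub_le x (x - y)
  have hx_le : ‖x‖ ≤ ‖y‖ + ‖x - y‖ := by simpa using norm_add_le y (x - y)
  rw [← hη]
  by_cases htrunc : ε ≤ ‖x - y‖ <;> by_cases hinv : ε * ‖y‖ ≤ ‖x‖ * ‖x - y‖
  · simp [truncKernel, invertedKernel, htrunc, hinv] at hne
  · have hlt : ‖x‖ * ‖x - y‖ < ε * (‖x‖ + ‖x - y‖) := (not_le.1 hinv).trans_le (by gcongr)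
    have : ‖x - y‖ ≤ 2 * ε := by
      by_contra! h
      nlinarith
    exact ⟨by nlinarith, le_of_mul_le_mul_left (by nlinarith) hX⟩
  · exact ⟨le_of_mul_le_mul_left (by nlinarith) hX, by nlinarith⟩
  · simp [truncKernel, invertedKernel, htrunc, hinv] at hne

lemma norm_rpow_sub_mul_kernel_sub_le {x : Ed d} {C δ : ℝ} (hC₀ : 0 ≤ C) (he : 0 ≤ e)
    (hC : ∀ y, ‖x - y‖ < δ → |‖x‖ ^ (-a) - ‖y‖ ^ (-a)| ≤ C * ‖x - y‖) (hε : 0 < ε)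
    (hεδ : 2 * ε < δ) (hεx : 4 * ε < ‖x‖) (y : Ed d) :
    ‖(‖x‖ ^ (-a) - ‖y‖ ^ (-a)) * truncKernel e ε (x - y) -
        (‖x‖ ^ (-a) - ‖y‖ ^ (-a)) * invertedKernel e ε x y‖ ≤
      (closedBall x (ε * (1 + 2 * ε / ‖x‖)) \ ball x (ε * (1 - 2 * ε / ‖x‖))).indicator
        (fun _ => C * (2 * ε) * (ε / 2) ^ (-e)) y := by
  by_cases hne : truncKernel e ε (x - y) = invertedKernel e ε x y
  · rw [hne, sub_self, norm_zero]
    exact indicator_nonneg (fun _ _ => by positivity) y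
  obtain ⟨hlower, hupper⟩ := mem_shell_of_truncKernel_ne hε hεx hne
  have hη : 2 * ε / ‖x‖ ≤ 1 / 2 := by rw [div_le_iff₀ (by linarith)]; linarith
  have hle : ‖x - y‖ ≤ 2 * ε := by nlinarith
  have hge : ε / 2 ≤ ‖x - y‖ := by nlinarith
  have hkernel : |truncKernel e ε (x - y) - invertedKernel e ε x y| ≤ (ε / 2) ^ (-e) := by
    refine le_trans ?_ (Real.rpow_le_rpow_of_nonpos (by positivity) hge (neg_nonpos.2 he))
    have : 0 ≤ ‖x - y‖ ^ (-e) := by positivity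
    unfold truncKernel invertedKernel
    split_ifs <;> simp [abs_of_nonneg, this]
  have hy : y ∈ closedBall x (ε * (1 + 2 * ε / ‖x‖)) \ ball x (ε * (1 - 2 * ε / ‖x‖)) :=
    ⟨by rwa [mem_closedBall, dist_comm, dist_eq_norm],
      by rwa [mem_ball, dist_comm, dist_eq_norm, not_lt]⟩
  rw [indicator_of_mem hy, ← mul_sub, norm_mul]
  exact mul_le_mul ((hC y (by linarith)).trans (by gcongr)) hkernel (abs_nonneg _) (by positivity)

lemma norm_integral_norm_rpow_sub_mul_truncKernel_le (hd : 1 ≤ d) (ha₀ : 0 ≤ a) (ha : a < d)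
    (hae : a + e = 2 * d) {x : Ed d} {C δ : ℝ} (hC₀ : 0 ≤ C)
    (hC : ∀ y, ‖x - y‖ < δ → |‖x‖ ^ (-a) - ‖y‖ ^ (-a)| ≤ C * ‖x - y‖) (hε : 0 < ε)
    (hεδ : 2 * ε < δ) (hεx : 4 * ε < ‖x‖) :
    2 * ‖∫ y, (‖x‖ ^ (-a) - ‖y‖ ^ (-a)) * truncKernel e ε (x - y)‖ ≤
      volume.real (ball (0 : Ed d) 1) * (2 * d * 2 ^ (d - 1)) * (ε ^ d * (2 * ε / ‖x‖)) *
        (C * (2 * ε) * (ε / 2) ^ (-e)) := by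
  have he : (d : ℝ) < e := by linarith
  have hX : 0 < ‖x‖ := by linarith
  set S := closedBall x (ε * (1 + 2 * ε / ‖x‖)) \ ball x (ε * (1 - 2 * ε / ‖x‖))
  set Q := C * (2 * ε) * (ε / 2) ^ (-e)
  set g : Ed d → ℝ := fun y => (‖x‖ ^ (-a) - ‖y‖ ^ (-a)) * truncKernel e ε (x - y)
  set h : Ed d → ℝ := fun y => (‖x‖ ^ (-a) - ‖y‖ ^ (-a)) * invertedKernel e ε x y
  have hbound : ∀ y, ‖g y - h y‖ ≤ S.indicator (fun _ => Q) y :=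
    norm_rpow_sub_mul_kernel_sub_le hC₀ (d.cast_nonneg.trans he.le) hC hε hεδ hεx
  have hS : MeasurableSet S := measurableSet_closedBall.diff measurableSet_ball
  have hS_fin : volume S ≠ ∞ :=
    ((measure_mono sdiff_subset).trans_lt measure_closedBall_lt_top).ne
  have hSQ : Integrable (S.indicator fun _ => Q) :=
    (integrable_indicator_iff hS).2 (integrableOn_const hS_fin)
  have hg : Integrable g := by
    simpa only [g, sub_mul, Pi.sub_def] using
      (((integrable_truncKernel he hε).comp_sub_left x).const_mul _).sub
        (integrable_norm_rpow_neg_mul_truncKernel hd ha₀ ha he hε x)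
  have hh_meas : Measurable h := (measurable_const.sub (measurable_norm.pow_const _)).mul
    (Measurable.ite (measurableSet_le (by fun_prop) (by fun_prop))
      ((by fun_prop : Measurable fun y : Ed d => ‖x - y‖).pow_const _) measurable_const)
  have hh : Integrable h := by
    simpa using hg.sub (hSQ.mono' (hg.aestronglyMeasurable.sub hh_meas.aestronglyMeasurable)
      (ae_of_all _ hbound))
  have hkelvin : ∫ y, g y = -∫ y, h y := integral_norm_rpow_sub_mul_truncKernel hd hae
    (norm_pos_iff.1 hX)
  calc 2 * ‖∫ y, g y‖ = ‖∫ y, (g y - h y)‖ := by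
        rw [integral_sub hg hh, hkelvin, ← neg_add', norm_neg, norm_neg, ← two_mul, norm_mul,
          Real.norm_ofNat]
    _ ≤ volume.real S * Q := by
        refine (norm_integral_le_of_norm_le hSQ (ae_of_all _ hbound)).trans_eq ?_
        rw [integral_indicator hS, setIntegral_const, smul_eq_mul]
    _ ≤ _ := by
        gcongr
        refine measureReal_shell_le hε (by positivity) ?_
        rw [div_le_iff₀ hX]
        linarith

lemma tendsto_integral_norm_rpow_sub_mul_truncKernel (hd : 1 ≤ d) (ha₀ : 0 ≤ a) (ha : a < d)
    (he : e < d + 2) (hae : a + e = 2 * d) {x : Ed d} (hx : x ≠ 0) :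
    Tendsto (fun ε => ∫ y, (‖x‖ ^ (-a) - ‖y‖ ^ (-a)) * truncKernel e ε (x - y)) (𝓝[>] 0)
      (𝓝 0) := by
  have : 0 < ‖x‖ := norm_pos_iff.2 hx
  obtain ⟨C, δ, hC₀, hδ, hC⟩ := exists_abs_norm_rpow_sub_le hx (-a)
  set K := volume.real (ball (0 : Ed d) 1) * (2 * d * 2 ^ (d - 1)) * (4 * C * 2 ^ e / ‖x‖)
  have hpow : Tendsto (fun ε : ℝ => K * ε ^ ((d : ℝ) + 2 - e)) (𝓝[>] 0) (𝓝 0) := by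
    have := (Real.continuousAt_rpow_const 0 ((d : ℝ) + 2 - e) (Or.inr (by linarith))).tendsto
    rw [Real.zero_rpow (by linarith)] at this
    simpa using (this.mono_left nhdsWithin_le_nhds).const_mul K
  refine squeeze_zero_norm' ?_ hpow
  have hsmall : ∀ᶠ ε in 𝓝[>] (0 : ℝ), ε < min (δ / 2) (‖x‖ / 4) :=
    mem_nhdsWithin_of_mem_nhds (Iio_mem_nhds (by positivity))
  filter_upwards [self_mem_nhdsWithin, hsmall] with ε (hε : 0 < ε) hε'
  have hεδ : 2 * ε < δ := by linarith [hε'.trans_le (min_le_left _ _)]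
  have hεx : 4 * ε < ‖x‖ := by linarith [hε'.trans_le (min_le_right _ _)]
  have hscale : ε ^ ((d : ℝ) + 2 - e) = ε ^ d * ε * ε * ε ^ (-e) := by
    rw [show (d : ℝ) + 2 - e = d + 1 + 1 + -e by ring, Real.rpow_add hε, Real.rpow_add_one hε.ne',
      Real.rpow_add_one hε.ne', Real.rpow_natCast]
  have hhalf : (ε / 2) ^ (-e) = 2 ^ e * ε ^ (-e) := by
    rw [Real.div_rpow hε.le two_pos.le, Real.rpow_neg two_pos.le, div_inv_eq_mul, mul_comm]
  have hbound := norm_integral_norm_rpow_sub_mul_truncKernel_le hd ha₀ ha hae hC₀ hC hε hεδ hεx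
  refine (le_mul_of_one_le_left (norm_nonneg _) one_le_two).trans (hbound.trans_eq ?_)
  rw [hscale, hhalf]
  ring

end RieszKernel

/-! ### Superharmonic cutoffs -/

section Superharmonic

variable {d : ℕ} {a e τ ε : ℝ}

/-- The regularisation `(τ² + ‖y‖²) ^ (-a/2)` of the Riesz kernel `‖y‖ ^ (-a)`. -/
noncomputable def rieszProfile {E : Type*} [Norm E] (a τ : ℝ) (y : E) : ℝ :=
  (τ ^ 2 + ‖y‖ ^ 2) ^ (-(a / 2))

lemma sq_rpow_neg_half {r : ℝ} (hr : 0 ≤ r) : (r ^ 2) ^ (-(a / 2)) = r ^ (-a) := by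
  rw [← Real.rpow_natCast, ← Real.rpow_mul hr]
  congr 1
  push_cast
  ring

-- As a function of `u ^ (-q)`, `(t + u) ^ (-q)` is concave, so it stays below its tangents.
lemma add_rpow_neg_sub_ge {q t u w : ℝ} (hq : 0 ≤ q) (ht : 0 < t) (hu : 0 < u) (hw : 0 < w) :
    (t + u) ^ (-q) * (u / (t + u)) * u ^ q * (u ^ (-q) - w ^ (-q)) ≤
      (t + u) ^ (-q) - (t + w) ^ (-q) := by
  have htu : 0 < t + u := by positivity
  have hr : 0 < w / u := by positivity
  have hsum : t / (t + u) + u / (t + u) = 1 := by field_simp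
  have amgm := Real.geom_mean_le_arith_mean2_weighted (p₁ := 1) (p₂ := w / u)
    (div_nonneg ht.le htu.le) (div_nonneg hu.le htu.le) one_pos.le hr.le hsum
  have amgm' := Real.geom_mean_le_arith_mean2_weighted (p₁ := 1) (p₂ := (w / u) ^ (-q))
    (div_nonneg ht.le htu.le) (div_nonneg hu.le htu.le) one_pos.le (by positivity) hsum
  simp only [Real.one_rpow, one_mul, mul_one] at amgm amgm'
  have convex : (t / (t + u) + u / (t + u) * (w / u)) ^ (-q) ≤
      t / (t + u) + u / (t + u) * (w / u) ^ (-q) := by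
    refine (Real.rpow_le_rpow_of_nonpos (by positivity) amgm (by linarith)).trans ?_
    rwa [← Real.rpow_mul hr.le, mul_comm, Real.rpow_mul hr.le]
  have hmean : t / (t + u) + u / (t + u) * (w / u) = (t + w) / (t + u) := by field_simp
  rw [hmean, Real.div_rpow (by positivity) htu.le, Real.div_rpow hw.le hu.le,
    div_le_iff₀ (by positivity), Real.rpow_neg hu.le, div_inv_eq_mul] at convex
  have hcancel : u ^ (-q) * u ^ q = 1 := by rw [← Real.rpow_add hu, neg_add_cancel, Real.rpow_zero]
  calc (t + u) ^ (-q) * (u / (t + u)) * u ^ q * (u ^ (-q) - w ^ (-q))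
      = (t + u) ^ (-q) * (u / (t + u)) * (u ^ (-q) * u ^ q - w ^ (-q) * u ^ q) := by ring
    _ = (t + u) ^ (-q) -
        (t / (t + u) + u / (t + u) * (w ^ (-q) * u ^ q)) * (t + u) ^ (-q) := by
      rw [hcancel, eq_sub_of_add_eq hsum]; ring
    _ ≤ _ := sub_le_sub_left convex _

lemma exists_mul_norm_rpow_sub_le_rieszProfile_sub {E : Type*} [NormedAddCommGroup E]
    (ha : 0 ≤ a) (hτ : 0 < τ) {x : E} (hx : x ≠ 0) :
    ∃ c : ℝ, ∀ y : E, y ≠ 0 →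
      c * (‖x‖ ^ (-a) - ‖y‖ ^ (-a)) ≤ rieszProfile a τ x - rieszProfile a τ y := by
  refine ⟨(τ ^ 2 + ‖x‖ ^ 2) ^ (-(a / 2)) * (‖x‖ ^ 2 / (τ ^ 2 + ‖x‖ ^ 2)) * (‖x‖ ^ 2) ^ (a / 2),
    fun y hy => ?_⟩
  have := add_rpow_neg_sub_ge (q := a / 2) (by positivity) (pow_pos hτ 2)
    (pow_pos (norm_pos_iff.2 hx) 2) (pow_pos (norm_pos_iff.2 hy) 2)
  rwa [sq_rpow_neg_half (norm_nonneg x), sq_rpow_neg_half (norm_nonneg y)] at this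

lemma truncLap_nonneg_of_forall_le {f : Ed d → ℝ} {x : Ed d} (h : ∀ y, f y ≤ f x) :
    0 ≤ truncLap e ε f x :=
  integral_nonneg fun y => mul_nonneg (sub_nonneg.2 (h y)) (truncKernel_nonneg _)

lemma Ed.ae_ne_zero (hd : 1 ≤ d) : ∀ᵐ y : Ed d, y ≠ 0 := by
  have : Nonempty (Fin d) := ⟨⟨0, hd⟩⟩
  exact volume.ae_ne 0

lemma IsTest.integrable_sub_mul_truncKernel {χ : Ed d → ℝ} (hχ : IsTest χ) (he : (d : ℝ) < e)
    (hε : 0 < ε) (x : Ed d) : Integrable fun y => (χ x - χ y) * truncKernel e ε (x - y) := by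
  have hcont : Continuous χ := hχ.contDiff.continuous
  obtain ⟨A, hA⟩ := hχ.exists_abs_le
  have := integrable_mul_truncKernel he hε (f := fun z => χ x - χ (x - z)) (A := A + A)
    (Continuous.aestronglyMeasurable (by fun_prop))
    fun z => (abs_sub _ _).trans (add_le_add (hA _) (hA _))
  simpa using this.comp_sub_left x

lemma symmLap_nonneg_of_touch_rieszProfile (hd : 1 ≤ d) (ha₀ : 0 ≤ a) (ha : a < d)
    (he : (d : ℝ) < e) (he' : e < d + 2) (hae : 0 < a → a + e = 2 * d) (hτ : 0 < τ)
    {χ : Ed d → ℝ} (hχ : IsTest χ) (hle : ∀ y, χ y ≤ rieszProfile a τ y) {x : Ed d}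
    (hx : χ x = rieszProfile a τ x) : 0 ≤ symmLap e χ x := by
  have hlim := hχ.tendsto_truncLap hd he he' x
  by_cases hmax : x = 0 ∨ a = 0
  · refine ge_of_tendsto hlim
      (Eventually.of_forall fun ε => truncLap_nonneg_of_forall_le fun y => (hle y).trans ?_)
    rw [hx, rieszProfile, rieszProfile]
    rcases hmax with rfl | rfl
    · exact Real.rpow_le_rpow_of_nonpos (by positivity) (by simp) (by linarith)
    · simp
  obtain ⟨hx₀, ha₁⟩ := not_or.1 hmax
  obtain ⟨c, hc⟩ := exists_mul_norm_rpow_sub_le_rieszProfile_sub ha₀ hτ hx₀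
  have hriesz := (tendsto_integral_norm_rpow_sub_mul_truncKernel hd ha₀ ha he'
    (hae (ha₀.lt_of_ne' ha₁)) hx₀).const_mul c
  rw [mul_zero] at hriesz
  refine le_of_tendsto_of_tendsto hriesz hlim ?_
  filter_upwards [self_mem_nhdsWithin] with ε (hε : 0 < ε)
  rw [← integral_const_mul]
  refine integral_mono_ae (Integrable.const_mul ?_ _) ?_ ?_
  · simp only [sub_mul]
    exact (((integrable_truncKernel he hε).comp_sub_left x).const_mul _).sub
      (integrable_norm_rpow_neg_mul_truncKernel hd ha₀ ha he hε x)
  · exact hχ.integrable_sub_mul_truncKernel he hε x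
  · filter_upwards [Ed.ae_ne_zero hd] with y hy
    rw [← mul_assoc]
    refine mul_le_mul_of_nonneg_right ?_ (truncKernel_nonneg _)
    linarith [hc y hy, hle y]

end Superharmonic

section RieszBump

variable {d : ℕ} {a e τ ε : ℝ}

/-- A smooth bump equal to `1` on the unit ball and supported in the ball of radius `2`. -/
def unitBump (E : Type*) [NormedAddCommGroup E] [NormedSpace ℝ E] : ContDiffBump (0 : E) :=
  ⟨1, 2, one_pos, one_lt_two⟩

/-- The regularised Riesz kernel, cut off to the ball of radius `2`. -/
noncomputable def rieszBump (a τ : ℝ) (y : Ed d) : ℝ := rieszProfile a τ y * unitBump (Ed d) y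

/-- A smooth compactly supported function of `(τ, y)` that agrees with `rieszBump a τ y` for
`τ ∈ (0, 1]` and `y` away from the origin; it makes estimates on `rieszBump` uniform in `τ`. -/
noncomputable def jointRieszBump (a : ℝ) (q : ℝ × Ed d) : ℝ :=
  rieszBump a q.1 q.2 * (1 - unitBump (Ed d) ((8 : ℝ) • q.2)) * unitBump ℝ q.1

section UnitBump

variable {E : Type*} [NormedAddCommGroup E] [NormedSpace ℝ E] [HasContDiffBump E]

lemma unitBump_eq_one {y : E} (h : ‖y‖ ≤ 1) : unitBump E y = 1 :=
  (unitBump E).one_of_mem_closedBall (by simpa [unitBump] using h)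

lemma unitBump_eq_zero {y : E} (h : 2 ≤ ‖y‖) : unitBump E y = 0 :=
  (unitBump E).zero_of_le_dist (by simpa [unitBump] using h)

end UnitBump

lemma rieszProfile_nonneg (y : Ed d) : 0 ≤ rieszProfile a τ y := by unfold rieszProfile; positivity

lemma rieszBump_nonneg (y : Ed d) : 0 ≤ rieszBump a τ y :=
  mul_nonneg (rieszProfile_nonneg y) (unitBump _).nonneg

lemma rieszBump_le_rieszProfile (y : Ed d) : rieszBump a τ y ≤ rieszProfile a τ y :=
  mul_le_of_le_one_right (rieszProfile_nonneg y) (unitBump _).le_one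

lemma rieszBump_eq_zero {y : Ed d} (h : 2 ≤ ‖y‖) : rieszBump a τ y = 0 := by
  rw [rieszBump, unitBump_eq_zero h, mul_zero]

lemma isTest_rieszBump (hτ : 0 < τ) : IsTest (rieszBump a τ : Ed d → ℝ) where
  contDiff := by
    refine ContDiff.mul ?_ (unitBump _).contDiff
    exact (contDiff_const.add (contDiff_norm_sq ℝ)).rpow_const_of_ne fun y => by positivity
  hasCompactSupport := HasCompactSupport.intro (isCompact_closedBall 0 2) fun x hx =>
    rieszBump_eq_zero (by simpa using (not_le.1 (mt mem_closedBall_zero_iff.2 hx)).le)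

lemma integral_rieszBump_le (hd : 1 ≤ d) (hτ : 0 < τ) (ha₀ : 0 ≤ a) (ha : a < d) :
    ∫ y : Ed d, rieszBump a τ y ≤ ∫ y in ball (0 : Ed d) 2, ‖y‖ ^ (-a) := by
  rw [← integral_indicator measurableSet_ball]
  refine integral_mono_ae (isTest_rieszBump hτ).integrable
    ((integrable_indicator_iff measurableSet_ball).2 (integrableOn_ball_norm_rpow_neg hd ha 2)) ?_
  filter_upwards [Ed.ae_ne_zero hd] with y hy
  by_cases hball : y ∈ ball (0 : Ed d) 2
  · rw [indicator_of_mem hball]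
    refine (rieszBump_le_rieszProfile y).trans ?_
    rw [← sq_rpow_neg_half (norm_nonneg y)]
    exact Real.rpow_le_rpow_of_nonpos (pow_pos (norm_pos_iff.2 hy) 2)
      (le_add_of_nonneg_left (sq_nonneg τ)) (by linarith)
  · rw [indicator_of_notMem hball, rieszBump_eq_zero (by simpa using hball)]

lemma isTest_jointRieszBump : IsTest (jointRieszBump a : ℝ × Ed d → ℝ) where
  contDiff := contDiff_iff_contDiffAt.2 fun q => by
    rcases lt_or_ge ‖q.2‖ (1 / 8) with hq | hq
    · refine (contDiffAt_const (c := (0 : ℝ))).congr_of_eventuallyEq ?_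
      filter_upwards [continuous_snd.norm.continuousAt.eventually (Iio_mem_nhds hq)] with q' hq'
      have : ‖(8 : ℝ) • q'.2‖ ≤ 1 := by
        rw [norm_smul, Real.norm_ofNat]
        linarith [(hq' : ‖q'.2‖ < 1 / 8)]
      simp [jointRieszBump, unitBump_eq_one this]
    · have : 0 < ‖q.2‖ := by linarith
      have hprofile : ContDiffAt ℝ (⊤ : ℕ∞) (fun q : ℝ × Ed d => rieszProfile a q.1 q.2) q :=
        ContDiffAt.rpow_const_of_ne
          ((contDiff_fst.pow 2).add ((contDiff_norm_sq ℝ).comp contDiff_snd)).contDiffAt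
          (by positivity)
      exact ((hprofile.mul ((unitBump _).contDiff.comp contDiff_snd).contDiffAt).mul
        (contDiff_const.sub
          ((unitBump _).contDiff.comp (contDiff_snd.const_smul (8 : ℝ)))).contDiffAt).mul
        ((unitBump ℝ).contDiff.comp contDiff_fst).contDiffAt
  hasCompactSupport := by
    refine HasCompactSupport.intro ((isCompact_closedBall 0 2).prod
      (isCompact_closedBall 0 2)) fun q hq => ?_
    rw [mem_prod, not_and_or, mem_closedBall_zero_iff, mem_closedBall_zero_iff, not_le,
      not_le] at hq
    rcases hq with h | h
    · rw [jointRieszBump, unitBump_eq_zero h.le, mul_zero]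
    · rw [jointRieszBump, rieszBump_eq_zero h.le, zero_mul, zero_mul]

lemma jointRieszBump_eq (hτ : τ ∈ Ioc 0 1) {y : Ed d} (hy : 1 / 4 ≤ ‖y‖) :
    jointRieszBump a (τ, y) = rieszBump a τ y := by
  have : 2 ≤ ‖(8 : ℝ) • y‖ := by rw [norm_smul, Real.norm_ofNat]; linarith
  rw [jointRieszBump, unitBump_eq_zero this, unitBump_eq_one (y := τ)
    (by rw [Real.norm_of_nonneg hτ.1.le]; exact hτ.2)]
  ring

lemma exists_abs_secondDiff_rieszBump_le (a : ℝ) :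
    ∃ M : ℝ, 0 ≤ M ∧ ∀ τ ∈ Ioc (0 : ℝ) 1, ∀ x z : Ed d, 1 / 2 ≤ ‖x‖ → ‖z‖ < 1 / 4 →
      |secondDiff (rieszBump a τ) x z| ≤ M * ‖z‖ ^ 2 := by
  obtain ⟨M, hM₀, hM⟩ := (isTest_jointRieszBump (d := d) (a := a)).exists_secondDiff_le
  refine ⟨M, hM₀, fun τ hτ x z hx hz => ?_⟩
  have hadd : 1 / 4 ≤ ‖x + z‖ := by
    have := norm_sub_le (x + z) z
    rw [add_sub_cancel_right] at this
    linarith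
  have hsub : 1 / 4 ≤ ‖x - z‖ := by
    have := norm_add_le (x - z) z
    rw [sub_add_cancel] at this
    linarith
  simpa [secondDiff, Prod.norm_def, jointRieszBump_eq hτ hadd, jointRieszBump_eq hτ hsub,
    jointRieszBump_eq hτ (by linarith : 1 / 4 ≤ ‖x‖)] using hM (τ, x) (0, z)

end RieszBump

section CutoffSeq

variable {d : ℕ} {a e τ ε : ℝ}

lemma neg_le_truncLap_of_nonneg (hd : 1 ≤ d) (he : (d : ℝ) < e) (he' : e < d + 2) (hε : 0 < ε)
    {f : Ed d → ℝ} {A M r : ℝ} (hf : Measurable f) (hf₀ : ∀ y, 0 ≤ f y) (hint : Integrable f)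
    (hA : ∀ y, |f y| ≤ A) (hM₀ : 0 ≤ M) (hr : 0 < r) (hr₁ : r ≤ 1) {x : Ed d}
    (hM : ∀ z, ‖z‖ < r → |secondDiff f x z| ≤ M * ‖z‖ ^ 2) :
    -(M / 2 * (∫ z : Ed d, min (‖z‖ ^ 2) 1 * ‖z‖ ^ (-e)) + r ^ (-e) * ∫ y, f y) ≤
      truncLap e ε f x := by
  have hmin := integrable_min_sq_one_mul_norm_rpow_neg hd he he'
  have hsum : Integrable fun z => f (x + z) + f (x - z) :=
    (hint.comp_add_left x).add (hint.comp_sub_left x)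
  have hpointwise : ∀ z, -(M * (min (‖z‖ ^ 2) 1 * ‖z‖ ^ (-e)) +
      r ^ (-e) * (f (x + z) + f (x - z))) ≤ secondDiff f x z * truncKernel e ε z := fun z => by
    have hfz : 0 ≤ f (x + z) + f (x - z) := add_nonneg (hf₀ _) (hf₀ _)
    have hk : 0 ≤ truncKernel e ε z := truncKernel_nonneg z
    rcases lt_or_ge ‖z‖ r with hz | hz
    · rw [min_eq_left (by nlinarith [norm_nonneg z])]
      have := mul_le_mul (hM z hz) (truncKernel_le z) hk (by positivity)
      have := mul_le_mul_of_nonneg_right (neg_abs_le (secondDiff f x z)) hk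
      have : 0 ≤ r ^ (-e) * (f (x + z) + f (x - z)) := by positivity
      linarith
    · have hkr : truncKernel e ε z ≤ r ^ (-e) := (truncKernel_le z).trans
        (Real.rpow_le_rpow_of_nonpos hr hz (by linarith [d.cast_nonneg (α := ℝ)]))
      have := mul_le_mul_of_nonneg_left hkr hfz
      have := mul_nonneg (hf₀ x) hk
      have : 0 ≤ M * (min (‖z‖ ^ 2) 1 * ‖z‖ ^ (-e)) := by positivity
      rw [secondDiff]
      linarith
  have hsd : Integrable fun z => secondDiff f x z * truncKernel e ε z :=
    integrable_mul_truncKernel he hε (Measurable.aestronglyMeasurable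
      (by unfold secondDiff; fun_prop)) (abs_secondDiff_le hA x)
  have hle := integral_mono ((hmin.const_mul M).add (hsum.const_mul (r ^ (-e)))).neg hsd hpointwise
  simp only [Pi.neg_apply, Pi.add_apply, integral_neg] at hle
  rw [integral_add (hmin.const_mul M) (hsum.const_mul _), integral_const_mul, integral_const_mul,
    integral_add (hint.comp_add_left x) (hint.comp_sub_left x), integral_add_left_eq_self f x,
    integral_sub_left_eq_self f volume x] at hle
  rw [truncLap_eq_integral_secondDiff he hε hf hA]
  linarith

lemma exists_neg_le_symmLap_rieszBump (hd : 1 ≤ d) (ha₀ : 0 ≤ a) (ha : a < d) (he : (d : ℝ) < e)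
    (he' : e < d + 2) :
    ∃ M, 0 ≤ M ∧ ∀ τ ∈ Ioc (0 : ℝ) 1, ∀ x : Ed d, 1 / 2 ≤ ‖x‖ →
      -M ≤ symmLap e (rieszBump a τ) x := by
  obtain ⟨M, hM₀, hM⟩ := exists_abs_secondDiff_rieszBump_le (d := d) a
  have hI : 0 ≤ ∫ z : Ed d, min (‖z‖ ^ 2) 1 * ‖z‖ ^ (-e) :=
    integral_nonneg fun z => by positivity
  have hA : 0 ≤ ∫ y in ball (0 : Ed d) 2, ‖y‖ ^ (-a) := integral_nonneg fun z => by positivity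
  refine ⟨_, add_nonneg (mul_nonneg (half_pos two_pos).le (mul_nonneg hM₀ hI))
    (mul_nonneg (Real.rpow_nonneg (by norm_num : (0 : ℝ) ≤ 1 / 4) (-e)) hA),
    fun τ hτ x hx => ?_⟩
  have htest : IsTest (rieszBump a τ : Ed d → ℝ) := isTest_rieszBump hτ.1
  obtain ⟨A, hA⟩ := htest.exists_abs_le
  refine ge_of_tendsto (htest.tendsto_truncLap hd he he' x) ?_
  filter_upwards [self_mem_nhdsWithin] with ε hε
  have := neg_le_truncLap_of_nonneg hd he he' hε htest.contDiff.continuous.measurable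
    rieszBump_nonneg htest.integrable hA hM₀ (by norm_num) (by norm_num) fun z => hM τ hτ x z hx
  have := mul_le_mul_of_nonneg_left (integral_rieszBump_le hd hτ.1 ha₀ ha)
    (Real.rpow_nonneg (by norm_num : (0 : ℝ) ≤ 1 / 4) (-e))
  have := mul_nonneg hM₀ hI
  linarith

lemma abs_symmLap_rieszBump_le_of_four_le (hd : 1 ≤ d) (ha₀ : 0 ≤ a) (ha : a < d)
    (he : (d : ℝ) < e) (he' : e < d + 2) (hτ : 0 < τ) {x : Ed d} (hx : 4 ≤ ‖x‖) :
    |symmLap e (rieszBump a τ) x| ≤ 4 ^ e * decay e x * ∫ y in ball (0 : Ed d) 2, ‖y‖ ^ (-a) := by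
  have he₀ : 0 ≤ e := d.cast_nonneg.trans he.le
  have htest : IsTest (rieszBump a τ : Ed d → ℝ) := isTest_rieszBump hτ
  refine le_of_tendsto (htest.tendsto_truncLap hd he he' x).abs (Eventually.of_forall fun ε => ?_)
  calc |truncLap e ε (rieszBump a τ) x|
      ≤ (‖x‖ / 2) ^ (-e) * ∫ y : Ed d, |rieszBump a τ y| :=
        abs_truncLap_le_of_support he₀ htest.integrable two_pos
          (fun y hy => rieszBump_eq_zero hy.le) (by linarith)
    _ ≤ _ := by
        simp only [abs_of_nonneg (rieszBump_nonneg _)]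
        exact mul_le_mul (rpow_half_norm_le_decay he₀ (by linarith))
          (integral_rieszBump_le hd hτ ha₀ ha) (integral_nonneg rieszBump_nonneg)
          (mul_nonneg (by positivity) (decay_pos x).le)

lemma exists_neg_decay_le_symmLap_rieszBump (hd : 1 ≤ d) (ha₀ : 0 ≤ a) (ha : a < d)
    (he : (d : ℝ) < e) (he' : e < d + 2) (hae : 0 < a → a + e = 2 * d) :
    ∃ M, 0 ≤ M ∧ ∀ τ ∈ Ioc (0 : ℝ) 1, ∀ x : Ed d,
      -(M * decay e x) ≤ symmLap e (rieszBump a τ) x := by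
  have he₀ : 0 ≤ e := d.cast_nonneg.trans he.le
  obtain ⟨M, hM₀, hM⟩ := exists_neg_le_symmLap_rieszBump hd ha₀ ha he he'
  set A := ∫ y in ball (0 : Ed d) 2, ‖y‖ ^ (-a)
  have : 0 ≤ A := integral_nonneg fun z => by positivity
  refine ⟨M * (1 + 4) ^ e + 4 ^ e * A, by positivity, fun τ hτ x => ?_⟩
  have hJ := decay_pos (e := e) x
  have hmid : 0 ≤ M * (1 + 4) ^ e * decay e x := by positivity
  have hfar : 0 ≤ 4 ^ e * A * decay e x := by positivity
  rw [add_mul]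
  rcases le_total ‖x‖ (1 / 2) with hx | hx
  · have hone : rieszBump a τ x = rieszProfile a τ x := by
      rw [rieszBump, unitBump_eq_one (by linarith), mul_one]
    linarith [symmLap_nonneg_of_touch_rieszProfile hd ha₀ ha he he' hae hτ.1
      (isTest_rieszBump hτ.1) rieszBump_le_rieszProfile hone]
  rcases le_total ‖x‖ 4 with hx' | hx'
  · have := mul_le_mul_of_nonneg_left (one_le_mul_decay he₀ (by norm_num) hx') hM₀
    linarith [hM τ hτ x hx]
  · linarith [neg_le_of_abs_le (abs_symmLap_rieszBump_le_of_four_le hd ha₀ ha he he' hτ.1 hx')]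

/-- The regularised Riesz kernel at scale `N`, normalised to `1` at the origin and cut off to the
ball of radius `2 * R`. -/
noncomputable def rieszCutoff (a N R : ℝ) (x : Ed d) : ℝ :=
  (1 + (‖x‖ / N) ^ 2) ^ (-(a / 2)) * unitBump (Ed d) (R⁻¹ • x)

variable {N R : ℝ}

lemma rieszCutoff_eq_mul_rieszBump (hN : 0 < N) (hR : 0 < R) (x : Ed d) :
    rieszCutoff a N R x = (N / R) ^ a * rieszBump a (N / R) (R⁻¹ • x) := by
  have hτ : 0 < N / R := by positivity
  have hscale : (N / R) ^ 2 + ‖R⁻¹ • x‖ ^ 2 = (N / R) ^ 2 * (1 + (‖x‖ / N) ^ 2) := by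
    rw [norm_smul, norm_inv, Real.norm_of_nonneg hR.le]
    field_simp
  rw [rieszBump, rieszProfile, hscale, Real.mul_rpow (by positivity) (by positivity),
    sq_rpow_neg_half hτ.le, rieszCutoff, ← mul_assoc, ← mul_assoc, ← Real.rpow_add hτ,
    add_neg_cancel, Real.rpow_zero, one_mul]

lemma isTest_rieszCutoff (hN : 0 < N) (hR : 0 < R) : IsTest (rieszCutoff a N R : Ed d → ℝ) := by
  have htest : IsTest (rieszBump a (N / R) : Ed d → ℝ) := isTest_rieszBump (by positivity)
  rw [funext (rieszCutoff_eq_mul_rieszBump hN hR)]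
  exact ⟨contDiff_const.mul (htest.contDiff.comp (contDiff_id.const_smul _)),
    (htest.hasCompactSupport.comp_smul (inv_ne_zero hR.ne')).mul_left⟩

lemma rieszCutoff_nonneg (x : Ed d) : 0 ≤ rieszCutoff a N R x :=
  mul_nonneg (by positivity) (unitBump _).nonneg

lemma rieszCutoff_le_one (ha₀ : 0 ≤ a) (x : Ed d) : rieszCutoff a N R x ≤ 1 :=
  mul_le_one₀ (Real.rpow_le_one_of_one_le_of_nonpos (le_add_of_nonneg_right (sq_nonneg _))
    (by linarith)) (unitBump _).nonneg (unitBump _).le_one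

lemma tendsto_rieszCutoff {N R : ℕ → ℝ} (hN : Tendsto N atTop atTop) (hR : ∀ n, 0 < R n)
    (hNR : ∀ n, N n ≤ R n) (x : Ed d) :
    Tendsto (fun n => rieszCutoff a (N n) (R n) x) atTop (𝓝 1) := by
  have hprofile : Tendsto (fun n => (1 + (‖x‖ / N n) ^ 2) ^ (-(a / 2))) atTop (𝓝 1) := by
    simpa using (((tendsto_const_nhds.div_atTop hN).pow 2).const_add 1).rpow_const
      (p := -(a / 2)) (Or.inl (by norm_num))
  refine hprofile.congr' ?_
  filter_upwards [hN.eventually_ge_atTop ‖x‖] with n hn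
  rw [rieszCutoff, unitBump_eq_one, mul_one]
  rw [norm_smul, norm_inv, Real.norm_of_nonneg (hR n).le, inv_mul_le_one₀ (hR n)]
  exact hn.trans (hNR n)

lemma symmLap_const_mul (b : ℝ) (f : Ed d → ℝ) (x : Ed d) :
    symmLap e (fun y => b * f y) x = b * symmLap e f x := by
  simp only [symmLap, secondDiff, ← integral_const_mul]
  congr 1 with z
  ring

lemma exists_neg_decay_le_symmLap_rieszCutoff (hd : 1 ≤ d) (ha₀ : 0 ≤ a) (ha : a < d)
    (he : (d : ℝ) < e) (he' : e < d + 2) (hae : 0 < a → a + e = 2 * d) :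
    ∃ M, 0 ≤ M ∧ ∀ N R : ℝ, 0 < N → N ≤ R → ∀ x : Ed d,
      -(M * N ^ a * (R ^ (-(a + (e - d))) * decay e (R⁻¹ • x))) ≤
        symmLap e (rieszCutoff a N R) x := by
  obtain ⟨M, hM₀, hM⟩ := exists_neg_decay_le_symmLap_rieszBump hd ha₀ ha he he' hae
  refine ⟨M, hM₀, fun N R hN hNR x => ?_⟩
  have hR : 0 < R := hN.trans_le hNR
  have hbump := mul_le_mul_of_nonneg_left
    (hM (N / R) ⟨by positivity, (div_le_one hR).2 hNR⟩ (R⁻¹ • x))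
    (by positivity : 0 ≤ (N / R) ^ a * R ^ ((d : ℝ) - e))
  have hpow : R ^ (-(a + (e - d))) = R ^ ((d : ℝ) - e) / R ^ a := by
    rw [← Real.rpow_sub hR]
    ring_nf
  rw [funext (rieszCutoff_eq_mul_rieszBump hN hR), symmLap_const_mul,
    symmLap_comp_inv_smul _ _ hR, hpow, ← mul_assoc ((N / R) ^ a)]
  refine le_of_eq_of_le ?_ hbump
  rw [Real.div_rpow hN.le hR.le]
  ring

lemma decay_inv_smul_le (he : 0 ≤ e) (hR : 1 ≤ R) (x : Ed d) :
    decay e (R⁻¹ • x) ≤ R ^ e * decay e x := by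
  have hR₀ : 0 < R := by linarith
  refine rpow_neg_le_of_le_mul (by positivity) (by positivity) hR₀.le he ?_
  rw [norm_smul, norm_inv, Real.norm_of_nonneg hR₀.le, mul_add, mul_inv_cancel_left₀ hR₀.ne']
  linarith

/-- A sequence of smooth compactly supported cutoff functions with values in `[0, 1]`, converging
pointwise to `1`. -/
structure IsCutoffSeq {E : Type*} [NormedAddCommGroup E] [NormedSpace ℝ E] (χ : ℕ → E → ℝ) :
    Prop where
  isTest : ∀ n, IsTest (χ n)
  nonneg : ∀ n x, 0 ≤ χ n x
  le_one : ∀ n x, χ n x ≤ 1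
  tendsto_one : ∀ x, Tendsto (fun n => χ n x) atTop (𝓝 1)

/-- Cutoffs that are superharmonic for the kernel `‖z‖ ^ (-e)` up to a defect `r n` which is small
when tested against `f ^ 2`. They localise the energy of `f` at bounded cost. -/
structure IsAdaptedCutoffSeq (e : ℝ) (f : Ed d → ℝ) (χ r : ℕ → Ed d → ℝ) : Prop
    extends IsCutoffSeq χ where
  measurable_defect : ∀ n, Measurable (r n)
  defect_nonneg : ∀ n x, 0 ≤ r n x
  defect_le_decay : ∀ n, ∃ K, ∀ x, r n x ≤ K * decay e x
  neg_defect_le_symmLap : ∀ n x, -r n x ≤ symmLap e (χ n) x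
  integral_sq_mul_defect_le : ∀ n, ∫ x, f x ^ 2 * r n x ≤ 1

theorem exists_isAdaptedCutoffSeq (hd : 1 ≤ d) (ha₀ : 0 ≤ a) (ha : a < d) (he : (d : ℝ) < e)
    (he' : e < d + 2) (hae : 0 < a → a + e = 2 * d) {f : Ed d → ℝ}
    (hf : Tendsto (fun R : ℝ => R ^ (-(a + (e - d))) * ∫ x, f x ^ 2 * decay e (R⁻¹ • x))
      atTop (𝓝 0)) :
    ∃ χ r : ℕ → Ed d → ℝ, IsAdaptedCutoffSeq e f χ r := by
  have he₀ : 0 ≤ e := d.cast_nonneg.trans he.le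
  obtain ⟨M, hM₀, hM⟩ := exists_neg_decay_le_symmLap_rieszCutoff hd ha₀ ha he he' hae
  have hradius : ∀ n : ℕ, ∃ R : ℝ, (n : ℝ) + 1 ≤ R ∧ M * ((n : ℝ) + 1) ^ a *
      (R ^ (-(a + (e - d))) * ∫ x, f x ^ 2 * decay e (R⁻¹ • x)) ≤ 1 := fun n => by
    have hsmall := hf.const_mul (M * ((n : ℝ) + 1) ^ a)
    rw [mul_zero] at hsmall
    exact ((eventually_ge_atTop _).and (hsmall.eventually_le_const one_pos)).exists
  choose R hNR hR using hradius
  have hN : ∀ n : ℕ, (0 : ℝ) < n + 1 := fun n => by positivity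
  have hR₀ : ∀ n, 0 < R n := fun n => (hN n).trans_le (hNR n)
  have hweight : ∀ n : ℕ, 0 ≤ M * ((n : ℝ) + 1) ^ a * R n ^ (-(a + (e - d))) := fun n =>
    mul_nonneg (mul_nonneg hM₀ (Real.rpow_nonneg (hN n).le a)) (Real.rpow_nonneg (hR₀ n).le _)
  refine ⟨fun n => rieszCutoff a (n + 1) (R n),
    fun n x => M * ((n : ℝ) + 1) ^ a * (R n ^ (-(a + (e - d))) * decay e ((R n)⁻¹ • x)),
    { isTest := fun n => isTest_rieszCutoff (hN n) (hR₀ n)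
      nonneg := fun n => rieszCutoff_nonneg
      le_one := fun n => rieszCutoff_le_one ha₀
      tendsto_one := tendsto_rieszCutoff
        (tendsto_atTop_add_const_right _ _ tendsto_natCast_atTop_atTop) hR₀ hNR
      measurable_defect := fun n =>
        ((measurable_decay.comp (measurable_const_smul _)).const_mul _).const_mul _
      defect_nonneg := fun n x => by
        rw [← mul_assoc]
        exact mul_nonneg (hweight n) (decay_pos _).le
      defect_le_decay := fun n => ⟨M * ((n : ℝ) + 1) ^ a * R n ^ (-(a + (e - d))) * R n ^ e,
        fun x => ?_⟩
      neg_defect_le_symmLap := fun n => hM _ _ (hN n) (hNR n)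
      integral_sq_mul_defect_le := fun n => ?_ }⟩
  · rw [← mul_assoc, mul_assoc _ (R n ^ e)]
    exact mul_le_mul_of_nonneg_left
      (decay_inv_smul_le he₀ (by linarith [hNR n, n.cast_nonneg (α := ℝ)]) x) (hweight n)
  · refine le_of_eq_of_le ?_ (hR n)
    rw [← integral_const_mul, ← integral_const_mul]
    congr 1 with x
    ring

end CutoffSeq

/-! ### Decay of rescaled energies -/

section WeightedDecay

lemma tendsto_integral_zero_of_forall_exists_le_add {α ι : Type*} [MeasurableSpace α]
    {μ : Measure α} {l : Filter ι} [l.IsCountablyGenerated] {g A : ι → α → ℝ} {C : ℝ}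
    (hg : ∀ᶠ i in l, Integrable (g i) μ) (hg₀ : ∀ᶠ i in l, ∀ x, 0 ≤ g i x)
    (hA : ∀ᶠ i in l, Integrable (A i) μ) (hA₀ : ∀ᶠ i in l, ∀ x, 0 ≤ A i x)
    (hAC : ∀ᶠ i in l, ∫ x, A i x ∂μ ≤ C)
    (hle : ∀ η > 0, ∃ h, Integrable h μ ∧ ∀ᶠ i in l, ∀ x, g i x ≤ η * A i x + h x)
    (hlim : ∀ x, Tendsto (fun i => g i x) l (𝓝 0)) :
    Tendsto (fun i => ∫ x, g i x ∂μ) l (𝓝 0) := by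
  rw [Metric.tendsto_nhds]
  intro δ hδ
  obtain ⟨η, hη, hηδ⟩ : ∃ η > 0, η * C < δ / 2 := by
    refine ⟨δ / (4 * (|C| + 1)), by positivity, ?_⟩
    rw [div_mul_eq_mul_div, div_lt_iff₀ (by positivity)]
    nlinarith [le_abs_self C, abs_nonneg C]
  obtain ⟨h, hh, hgh⟩ := hle η hη
  have hexcess : ∀ᶠ i in l, Integrable (fun x => max (g i x - η * A i x) 0) μ := by
    filter_upwards [hg, hA] with i hgi hAi
    exact (hgi.sub (hAi.const_mul η)).sup (integrable_zero α ℝ μ)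
  have hexcess_lim : Tendsto (fun i => ∫ x, max (g i x - η * A i x) 0 ∂μ) l (𝓝 0) := by
    suffices Tendsto (fun i => ∫ x, max (g i x - η * A i x) 0 ∂μ) l (𝓝 (∫ _, (0 : ℝ) ∂μ)) by
      simpa only [integral_zero] using this
    refine tendsto_integral_filter_of_dominated_convergence (fun x => |h x|)
      (hexcess.mono fun i hi => hi.aestronglyMeasurable) ?_ hh.abs (ae_of_all _ fun x => ?_)
    · filter_upwards [hgh] with i hi
      refine ae_of_all _ fun x => ?_
      rw [Real.norm_of_nonneg (le_max_right _ _)]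
      exact max_le (by linarith [hi x, le_abs_self (h x)]) (abs_nonneg _)
    · refine squeeze_zero' (Eventually.of_forall fun i => le_max_right _ _) ?_ (hlim x)
      filter_upwards [hg₀, hA₀] with i hgi hAi
      exact max_le (sub_le_self _ (mul_nonneg hη.le (hAi x))) (hgi x)
  filter_upwards [hg, hg₀, hA, hAC, hexcess, hexcess_lim.eventually_lt_const (half_pos hδ)]
    with i hgi hgi₀ hAi hAiC hmax hlt
  rw [Real.dist_eq, sub_zero, abs_of_nonneg (integral_nonneg hgi₀)]
  calc ∫ x, g i x ∂μ ≤ ∫ x, (η * A i x + max (g i x - η * A i x) 0) ∂μ :=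
        integral_mono hgi ((hAi.const_mul η).add hmax) fun x => by
          linarith [le_max_left (g i x - η * A i x) 0]
    _ = η * (∫ x, A i x ∂μ) + ∫ x, max (g i x - η * A i x) 0 ∂μ := by
        rw [integral_add (hAi.const_mul η) hmax, integral_const_mul]
    _ < δ := by linarith [mul_le_mul_of_nonneg_left hAiC hη.le]

lemma sq_le_sq_add_rpow_mul_rpow {p t m : ℝ} (hp : 2 ≤ p) (hm : 0 < m) (ht : 0 ≤ t) :
    t ^ 2 ≤ m ^ 2 + m ^ (2 - p) * t ^ p := by
  rcases le_total t m with htm | hmt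
  · have : t ^ 2 ≤ m ^ 2 := by gcongr
    have : 0 ≤ m ^ (2 - p) * t ^ p := by positivity
    linarith
  · have ht₀ : 0 < t := hm.trans_le hmt
    calc t ^ 2 = t ^ (2 - p) * t ^ p := by rw [← Real.rpow_add ht₀]; norm_num
      _ ≤ m ^ (2 - p) * t ^ p := mul_le_mul_of_nonneg_right
          (Real.rpow_le_rpow_of_nonpos hm hmt (by linarith)) (by positivity)
      _ ≤ _ := le_add_of_nonneg_left (sq_nonneg m)

lemma rpow_add_two_mul {x : ℝ} (hx : 0 < x) (a c : ℝ) : x ^ (a + 2 * c) = x ^ a * (x ^ c) ^ 2 := by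
  rw [Real.rpow_add hx, mul_comm 2 c, Real.rpow_mul hx.le, Real.rpow_two]

variable {D p b e γ μ R : ℝ}

lemma rpow_neg_mul_rpow_neg_le_one_add_rpow {n : ℝ} (hγ : 0 ≤ γ) (hR : 1 ≤ R) (hn : 0 ≤ n) :
    R ^ (-γ) * (1 + R⁻¹ * n) ^ (-γ) ≤ (1 + n) ^ (-γ) := by
  have hR₀ : 0 < R := by linarith
  rw [← Real.mul_rpow hR₀.le (by positivity)]
  refine Real.rpow_le_rpow_of_nonpos (by positivity) ?_ (by linarith)
  rw [mul_add, mul_inv_cancel_left₀ hR₀.ne']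
  linarith

-- Young's inequality at the level `m = μ R ^ ((b - D) / 2) h ^ ((e - 2 D) / 2)`, where
-- `h = 1 + n / R`; the conditions on `γ` are what the powers of `R` and `h` require.
lemma rpow_neg_mul_sq_mul_rpow_neg_le {h n t : ℝ} (hp : 2 ≤ p)
    (hγ : 0 ≤ γ) (hb : γ ≤ b + (b - D) * (p - 2) / 2) (he : γ ≤ (e - 2 * D) / 2 * (p - 2) + e)
    (hμ : 0 < μ) (hR : 1 ≤ R) (ht : 0 ≤ t) (hn : 0 ≤ n) (hh : h = 1 + R⁻¹ * n) :
    R ^ (-b) * (t ^ 2 * h ^ (-e)) ≤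
      μ ^ 2 * (R ^ (-D) * h ^ (-(2 * D))) + μ ^ (2 - p) * (t ^ p * (1 + n) ^ (-γ)) := by
  have hR₀ : 0 < R := by linarith
  have hh₁ : 1 ≤ h := by rw [hh]; exact le_add_of_nonneg_right (by positivity)
  have hh₀ : 0 < h := by linarith
  set m := μ * R ^ ((b - D) / 2) * h ^ ((e - 2 * D) / 2) with hm
  have hm₀ : 0 < m := by positivity
  have hsq : R ^ (-b) * (m ^ 2 * h ^ (-e)) = μ ^ 2 * (R ^ (-D) * h ^ (-(2 * D))) := by
    rw [show -D = -b + 2 * ((b - D) / 2) by ring,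
      show -(2 * D) = -e + 2 * ((e - 2 * D) / 2) by ring, rpow_add_two_mul hR₀,
      rpow_add_two_mul hh₀, hm]
    ring
  have hrpow : R ^ (-b) * (m ^ (2 - p) * h ^ (-e)) ≤ μ ^ (2 - p) * (1 + n) ^ (-γ) := by
    calc R ^ (-b) * (m ^ (2 - p) * h ^ (-e))
        = μ ^ (2 - p) * (R ^ (-b + (b - D) / 2 * (2 - p)) *
            h ^ ((e - 2 * D) / 2 * (2 - p) + -e)) := by
          rw [hm, Real.mul_rpow (by positivity) (by positivity),
            Real.mul_rpow (by positivity) (by positivity), ← Real.rpow_mul hR₀.le,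
            ← Real.rpow_mul hh₀.le, Real.rpow_add hR₀, Real.rpow_add hh₀]
          ring
      _ ≤ μ ^ (2 - p) * (R ^ (-γ) * h ^ (-γ)) := by
          gcongr ?_ * (?_ * ?_)
          · exact Real.rpow_le_rpow_of_exponent_le hR (by linarith)
          · exact Real.rpow_le_rpow_of_exponent_le hh₁ (by linarith)
      _ ≤ _ := by
          rw [hh]
          gcongr
          exact rpow_neg_mul_rpow_neg_le_one_add_rpow hγ hR hn
  have hyoung : R ^ (-b) * (t ^ 2 * h ^ (-e)) ≤
      R ^ (-b) * ((m ^ 2 + m ^ (2 - p) * t ^ p) * h ^ (-e)) := by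
    gcongr
    exact sq_le_sq_add_rpow_mul_rpow hp hm₀ ht
  linarith [mul_le_mul_of_nonneg_left hrpow (by positivity : 0 ≤ t ^ p)]

lemma rpow_neg_mul_sq_mul_decay_le {E : Type*} [NormedAddCommGroup E] [NormedSpace ℝ E]
    (hp : 2 ≤ p) (hγ : 0 ≤ γ) (hb : γ ≤ b + (b - D) * (p - 2) / 2)
    (he : γ ≤ (e - 2 * D) / 2 * (p - 2) + e) (hμ : 0 < μ) (hR : 1 ≤ R) (t : ℝ) (x : E) :
    R ^ (-b) * (t ^ 2 * decay e (R⁻¹ • x)) ≤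
      μ ^ 2 * (R ^ (-D) * decay (2 * D) (R⁻¹ • x)) + μ ^ (2 - p) * (|t| ^ p * decay γ x) := by
  have hnorm : ‖R⁻¹ • x‖ = R⁻¹ * ‖x‖ := by
    rw [norm_smul, norm_inv, Real.norm_of_nonneg (by linarith)]
  rw [← sq_abs t]
  exact rpow_neg_mul_sq_mul_rpow_neg_le hp hγ hb he hμ hR (abs_nonneg t) (norm_nonneg x)
    (by rw [hnorm])

variable {d : ℕ}

lemma integral_rpow_neg_mul_comp_inv_smul (hR : 0 < R) (g : Ed d → ℝ) :
    ∫ x, R ^ (-(d : ℝ)) * g (R⁻¹ • x) = ∫ x, g x := by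
  rw [integral_const_mul, Measure.integral_comp_inv_smul_of_nonneg volume g hR.le, smul_eq_mul,
    finrank_euclideanSpace, Fintype.card_fin, ← mul_assoc, ← Real.rpow_natCast, ← Real.rpow_add hR,
    neg_add_cancel, Real.rpow_zero, one_mul]

variable {f : Ed d → ℝ}

lemma integrable_sq_mul_decay_inv_smul (hd : 1 ≤ d) (hp : 2 ≤ p) (hγ : 0 ≤ γ)
    (hb : γ ≤ b + (b - d) * (p - 2) / 2) (he : γ ≤ (e - 2 * d) / 2 * (p - 2) + e) (hR : 1 ≤ R)
    (hf : AEStronglyMeasurable f volume)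
    (hfp : Integrable fun x => |f x| ^ p * decay γ x) :
    Integrable fun x => R ^ (-b) * (f x ^ 2 * decay e (R⁻¹ • x)) := by
  have hd₀ : (0 : ℝ) < d := by exact_mod_cast hd
  have hR₀ : 0 < R := by linarith
  have hdecay : Integrable fun x : Ed d => R ^ (-(d : ℝ)) * decay (2 * d) (R⁻¹ • x) :=
    ((integrable_decay (by linarith)).comp_smul (inv_ne_zero hR₀.ne')).const_mul _
  refine ((hdecay.const_mul (1 ^ 2)).add (hfp.const_mul (1 ^ (2 - p)))).mono'
    (((hf.pow 2).mul (measurable_decay.comp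
      (measurable_const_smul _)).aestronglyMeasurable).const_mul _) (ae_of_all _ fun x => ?_)
  have := decay_pos (e := e) (R⁻¹ • x)
  rw [Real.norm_of_nonneg (by positivity)]
  exact rpow_neg_mul_sq_mul_decay_le hp hγ hb he one_pos hR (f x) x

theorem tendsto_rpow_neg_mul_integral_sq_mul_decay (hd : 1 ≤ d) (hp : 2 ≤ p) (hγ : 0 ≤ γ)
    (hb₀ : 0 < b) (hb : γ ≤ b + (b - d) * (p - 2) / 2) (he : γ ≤ (e - 2 * d) / 2 * (p - 2) + e)
    (hf : AEStronglyMeasurable f volume)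
    (hfp : Integrable fun x => |f x| ^ p * decay γ x) :
    Tendsto (fun R : ℝ => R ^ (-b) * ∫ x, f x ^ 2 * decay e (R⁻¹ • x)) atTop (𝓝 0) := by
  have hd₀ : (0 : ℝ) < d := by exact_mod_cast hd
  have hdecay : Integrable (decay (2 * d) : Ed d → ℝ) := integrable_decay (by linarith)
  simp only [← integral_const_mul]
  refine tendsto_integral_zero_of_forall_exists_le_add
    (A := fun (R : ℝ) x => R ^ (-(d : ℝ)) * decay (2 * d) (R⁻¹ • x))
    (C := ∫ x : Ed d, decay (2 * d) x) ?_ ?_ ?_ ?_ ?_ (fun η hη => ?_) fun x => ?_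
  · filter_upwards [eventually_ge_atTop 1] with R hR
    exact integrable_sq_mul_decay_inv_smul hd hp hγ hb he hR hf hfp
  · filter_upwards [eventually_gt_atTop 0] with R hR x
    have := decay_pos (e := e) (R⁻¹ • x)
    positivity
  · filter_upwards [eventually_gt_atTop 0] with R hR
    exact (hdecay.comp_smul (inv_ne_zero hR.ne')).const_mul _
  · filter_upwards [eventually_gt_atTop 0] with R hR x
    exact mul_nonneg (by positivity) (decay_pos _).le
  · filter_upwards [eventually_gt_atTop 0] with R hR
    exact (integral_rpow_neg_mul_comp_inv_smul hR _).le
  · refine ⟨_, hfp.const_mul (√η ^ (2 - p)), ?_⟩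
    filter_upwards [eventually_ge_atTop 1] with R hR x
    have := rpow_neg_mul_sq_mul_decay_le hp hγ hb he (Real.sqrt_pos.2 hη) hR (f x) x
    rwa [Real.sq_sqrt hη.le] at this
  · have hdecay_lim : Tendsto (fun R : ℝ => decay e (R⁻¹ • x)) atTop (𝓝 1) := by
      have := ((tendsto_inv_atTop_zero.smul_const x).norm.const_add 1).rpow_const
        (p := -e) (Or.inl (by rw [zero_smul ℝ, norm_zero]; norm_num))
      simpa [decay] using this
    simpa using (tendsto_rpow_neg_atTop hb₀).mul (hdecay_lim.const_mul (f x ^ 2))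

end WeightedDecay

/-! ### Local Muckenhoupt weights -/

/-- The Muckenhoupt `A₁` condition at scales at most one: the averages of `ρ` over the balls of
radius `r ≤ 1` are controlled by the values of `ρ` at the centres. -/
def IsLocalA1Weight {d : ℕ} (ρ : Ed d → ℝ) : Prop :=
  ∃ K : ℝ, 0 ≤ K ∧ ∀ r ∈ Ioc (0 : ℝ) 1, ∀ᵐ x,
    ∫⁻ y in ball x r, ENNReal.ofReal (ρ y) ≤ ENNReal.ofReal (K * r ^ d * ρ x)

section LocalA1

variable {d : ℕ} {c C g γ₀ γ : ℝ} {ρ : Ed d → ℝ}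

lemma IsLocalA1Weight.locallyIntegrable (hρ : IsLocalA1Weight ρ)
    (hm : AEStronglyMeasurable ρ volume) (hnonneg : ∀ x, 0 ≤ ρ x) : LocallyIntegrable ρ := by
  obtain ⟨K, -, hK⟩ := hρ
  intro z
  obtain ⟨x, hx, hzx⟩ := (Measure.dense_of_ae (hK 1 (by simp))).exists_dist_lt z one_pos
  refine ⟨ball x 1, isOpen_ball.mem_nhds hzx, hm.restrict, ?_⟩
  rw [hasFiniteIntegral_iff_ofReal (ae_of_all _ hnonneg)]
  exact hx.trans_lt ENNReal.ofReal_lt_top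

lemma setLIntegral_ball_ofReal_le {f : Ed d → ℝ} {M r : ℝ} {x : Ed d} (hr : 0 ≤ r)
    (hf : ∀ᵐ y, y ∈ ball x r → f y ≤ M) :
    ∫⁻ y in ball x r, ENNReal.ofReal (f y) ≤
      ENNReal.ofReal (volume.real (ball (0 : Ed d) 1) * r ^ d * M) := by
  calc ∫⁻ y in ball x r, ENNReal.ofReal (f y)
      ≤ ∫⁻ _ in ball x r, ENNReal.ofReal M := by
        refine lintegral_mono_ae ((ae_restrict_iff' measurableSet_ball).2 ?_)
        exact hf.mono fun y hy hyr => ENNReal.ofReal_le_ofReal (hy hyr)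
    _ = ENNReal.ofReal (volume.real (ball x r) * M) := by
        rw [setLIntegral_const, ENNReal.ofReal_mul measureReal_nonneg, ofReal_measureReal, mul_comm]
    _ ≤ _ := by
        rcases hr.eq_or_lt with rfl | hr
        · simp
        · rw [measureReal_def, Measure.addHaar_ball_of_pos _ _ hr, ENNReal.toReal_mul,
            ENNReal.toReal_ofReal (by positivity), finrank_euclideanSpace, Fintype.card_fin,
            measureReal_def, mul_comm (r ^ d)]

lemma setIntegral_ball_norm_rpow_neg {r : ℝ} (hr : 0 < r) :
    ∫ y in ball (0 : Ed d) r, ‖y‖ ^ (-g) =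
      r ^ ((d : ℝ) - g) * ∫ y in ball (0 : Ed d) 1, ‖y‖ ^ (-g) := by
  have hscale := Measure.setIntegral_comp_smul_of_pos volume (fun y : Ed d => ‖y‖ ^ (-g))
    (ball 0 1) hr
  simp only [norm_smul, Real.norm_of_nonneg hr.le, Real.mul_rpow hr.le (norm_nonneg _),
    integral_const_mul, smul_unitBall_of_pos hr, finrank_euclideanSpace, Fintype.card_fin,
    smul_eq_mul] at hscale
  rw [sub_eq_add_neg, Real.rpow_add hr, mul_assoc, hscale, Real.rpow_natCast,
    mul_inv_cancel_left₀ (by positivity)]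

lemma setLIntegral_ball_norm_rpow_neg_le (hd : 1 ≤ d) (hg₀ : 0 ≤ g) (hg : g < d) {r : ℝ}
    (hr : 0 < r) {x : Ed d} (hx₀ : x ≠ 0) (hx : ‖x‖ ≤ 2 * r) :
    ∫⁻ y in ball x r, ENNReal.ofReal (‖y‖ ^ (-g)) ≤
      ENNReal.ofReal (3 ^ ((d : ℝ) - g) * 2 ^ g * (∫ y in ball (0 : Ed d) 1, ‖y‖ ^ (-g)) * r ^ d *
        ‖x‖ ^ (-g)) := by
  have : 0 ≤ ∫ y in ball (0 : Ed d) 1, ‖y‖ ^ (-g) := integral_nonneg fun y => by positivity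
  have hsubset : ball x r ⊆ ball 0 (3 * r) :=
    ball_subset_ball' (by rw [dist_zero_right]; linarith)
  calc ∫⁻ y in ball x r, ENNReal.ofReal (‖y‖ ^ (-g))
      ≤ ∫⁻ y in ball (0 : Ed d) (3 * r), ENNReal.ofReal (‖y‖ ^ (-g)) := lintegral_mono_set hsubset
    _ = ENNReal.ofReal (3 ^ ((d : ℝ) - g) * (∫ y in ball (0 : Ed d) 1, ‖y‖ ^ (-g)) * r ^ d *
          r ^ (-g)) := by
        rw [← ofReal_integral_eq_lintegral_ofReal (integrableOn_ball_norm_rpow_neg hd hg _)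
          (ae_of_all _ fun y => by positivity), setIntegral_ball_norm_rpow_neg (by positivity),
          Real.mul_rpow (by norm_num) hr.le, sub_eq_add_neg (d : ℝ) g, Real.rpow_add hr,
          Real.rpow_natCast]
        ring_nf
    _ ≤ _ := by
        refine ENNReal.ofReal_le_ofReal ?_
        have hrx : r ^ (-g) ≤ 2 ^ g * ‖x‖ ^ (-g) :=
          rpow_neg_le_of_le_mul hr (norm_pos_iff.2 hx₀) (by norm_num) hg₀ hx
        calc _ ≤ 3 ^ ((d : ℝ) - g) * (∫ y in ball (0 : Ed d) 1, ‖y‖ ^ (-g)) * r ^ d *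
              (2 ^ g * ‖x‖ ^ (-g)) := by gcongr
          _ = _ := by ring

lemma half_norm_le_norm_of_mem_ball {r : ℝ} {x y : Ed d} (hx : 2 * r ≤ ‖x‖) (hy : y ∈ ball x r) :
    ‖x‖ ≤ 2 * ‖y‖ := by
  have := norm_sub_norm_le x y
  rw [mem_ball', dist_eq_norm] at hy
  linarith

lemma exists_setLIntegral_ball_norm_rpow_neg_le (hd : 1 ≤ d) (hg₀ : 0 ≤ g) (hg : g < d) :
    ∃ K : ℝ, 0 ≤ K ∧ ∀ r > 0, ∀ x : Ed d, x ≠ 0 →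
      ∫⁻ y in ball x r, ENNReal.ofReal (‖y‖ ^ (-g)) ≤ ENNReal.ofReal (K * r ^ d * ‖x‖ ^ (-g)) := by
  set K₁ := 3 ^ ((d : ℝ) - g) * 2 ^ g * ∫ y in ball (0 : Ed d) 1, ‖y‖ ^ (-g)
  set K₂ := volume.real (ball (0 : Ed d) 1) * 2 ^ g
  have hK₂ : 0 ≤ K₂ := by positivity
  refine ⟨max K₁ K₂, le_max_of_le_right hK₂, fun r hr x hx₀ => ?_⟩
  have hnorm : 0 < ‖x‖ := norm_pos_iff.2 hx₀
  rcases le_total ‖x‖ (2 * r) with hx | hx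
  · refine (setLIntegral_ball_norm_rpow_neg_le hd hg₀ hg hr hx₀ hx).trans
      (ENNReal.ofReal_le_ofReal ?_)
    gcongr
    exact le_max_left _ _
  · refine (setLIntegral_ball_ofReal_le (M := 2 ^ g * ‖x‖ ^ (-g)) hr.le
      (ae_of_all _ fun y hy => ?_)).trans (ENNReal.ofReal_le_ofReal ?_)
    · have hxy := half_norm_le_norm_of_mem_ball hx hy
      exact rpow_neg_le_of_le_mul (by linarith) hnorm (by norm_num) hg₀ hxy
    · calc volume.real (ball (0 : Ed d) 1) * r ^ d * (2 ^ g * ‖x‖ ^ (-g))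
          = K₂ * r ^ d * ‖x‖ ^ (-g) := by ring
        _ ≤ _ := by
          gcongr
          exact le_max_right _ _

lemma TwoPowerWeight.mul_decay_le (hw : TwoPowerWeight d ρ c C γ₀ γ) (hd : 1 ≤ d) (hγ₀ : 0 ≤ γ₀)
    (hγ : 0 ≤ γ) : ∀ᵐ x, c * decay γ x ≤ ρ x := by
  obtain ⟨hc, -, hnear, hfar⟩ := hw
  filter_upwards [hnear, hfar, Ed.ae_ne_zero hd] with x hx_near hx_far hx₀
  have hnorm : 0 < ‖x‖ := norm_pos_iff.2 hx₀
  rcases le_or_gt ‖x‖ 1 with hx | hx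
  · refine le_trans (mul_le_mul_of_nonneg_left ?_ hc.le) (hx_near hx).1
    exact (Real.rpow_le_one_of_one_le_of_nonpos (by linarith) (by linarith)).trans
      (Real.one_le_rpow_of_pos_of_le_one_of_nonpos hnorm hx (by linarith))
  · refine le_trans (mul_le_mul_of_nonneg_left ?_ hc.le) (hx_far hx).1
    exact Real.rpow_le_rpow_of_nonpos hnorm (by linarith) (by linarith)

lemma TwoPowerWeight.le_mul_norm_rpow_neg (hw : TwoPowerWeight d ρ c C γ₀ γ) (hγ₀ : 0 ≤ γ₀)
    (hγ : 0 ≤ γ) : ∀ᵐ y, ‖y‖ ≤ 3 → ρ y ≤ C * 3 ^ γ₀ * ‖y‖ ^ (-γ₀) := by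
  obtain ⟨hc, hcC, hnear, hfar⟩ := hw
  have hC : 0 < C := hc.trans hcC
  filter_upwards [hnear, hfar] with y hy_near hy_far hy₃
  rw [mul_assoc]
  rcases le_or_gt ‖y‖ 1 with hy | hy
  · refine (hy_near hy).2.trans (mul_le_mul_of_nonneg_left ?_ hC.le)
    exact le_mul_of_one_le_left (by positivity) (Real.one_le_rpow (by norm_num) hγ₀)
  · refine (hy_far hy).2.trans (mul_le_mul_of_nonneg_left ?_ hC.le)
    calc ‖y‖ ^ (-γ) ≤ 1 := Real.rpow_le_one_of_one_le_of_nonpos hy.le (by linarith)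
      _ = (1 : ℝ) ^ (-γ₀) := (Real.one_rpow _).symm
      _ ≤ 3 ^ γ₀ * ‖y‖ ^ (-γ₀) :=
        rpow_neg_le_of_le_mul one_pos (by linarith) (by norm_num) hγ₀ (by linarith)

lemma TwoPowerWeight.mul_norm_rpow_neg_le (hw : TwoPowerWeight d ρ c C γ₀ γ) (hγ₀ : 0 ≤ γ₀)
    (hγ : 0 ≤ γ) : ∀ᵐ x, ‖x‖ ≤ 2 → c * ‖x‖ ^ (-γ₀) ≤ 2 ^ γ * ρ x := by
  obtain ⟨hc, -, hnear, hfar⟩ := hw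
  filter_upwards [hnear, hfar] with x hx_near hx_far hx₂
  rcases le_or_gt ‖x‖ 1 with hx | hx
  · have hρ := (hx_near hx).1
    exact hρ.trans (le_mul_of_one_le_left (le_trans (by positivity) hρ)
      (Real.one_le_rpow (by norm_num) hγ))
  · calc c * ‖x‖ ^ (-γ₀) ≤ c * (2 ^ γ * ‖x‖ ^ (-γ)) := by
          gcongr
          calc ‖x‖ ^ (-γ₀) ≤ 1 := Real.rpow_le_one_of_one_le_of_nonpos hx.le (by linarith)
            _ = (1 : ℝ) ^ (-γ) := (Real.one_rpow _).symm
            _ ≤ 2 ^ γ * ‖x‖ ^ (-γ) :=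
              rpow_neg_le_of_le_mul one_pos (by linarith) (by norm_num) hγ (by linarith)
      _ = 2 ^ γ * (c * ‖x‖ ^ (-γ)) := by ring
      _ ≤ _ := by
        gcongr
        exact (hx_far hx).1

lemma TwoPowerWeight.exists_setLIntegral_ball_le_of_norm_le (hw : TwoPowerWeight d ρ c C γ₀ γ)
    (hd : 1 ≤ d) (hγ₀ : 0 ≤ γ₀) (hγ₀d : γ₀ < d) (hγ : 0 ≤ γ) :
    ∃ K : ℝ, 0 ≤ K ∧ ∀ r ∈ Ioc (0 : ℝ) 1, ∀ᵐ x, ‖x‖ ≤ 2 →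
      ∫⁻ y in ball x r, ENNReal.ofReal (ρ y) ≤ ENNReal.ofReal (K * r ^ d * ρ x) := by
  obtain ⟨K, hK₀, hK⟩ := exists_setLIntegral_ball_norm_rpow_neg_le hd hγ₀ hγ₀d
  have hc : 0 < c := hw.1
  have hC : 0 < C := hc.trans hw.2.1
  refine ⟨C * 3 ^ γ₀ * K * (2 ^ γ / c), by positivity, fun r hr => ?_⟩
  filter_upwards [hw.mul_norm_rpow_neg_le hγ₀ hγ, Ed.ae_ne_zero hd] with x hx_lower hx₀ hx₂
  have hr₀ : 0 < r := hr.1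
  calc ∫⁻ y in ball x r, ENNReal.ofReal (ρ y)
      ≤ ∫⁻ y in ball x r, ENNReal.ofReal (C * 3 ^ γ₀) * ENNReal.ofReal (‖y‖ ^ (-γ₀)) := by
        refine lintegral_mono_ae ((ae_restrict_iff' measurableSet_ball).2 ?_)
        filter_upwards [hw.le_mul_norm_rpow_neg hγ₀ hγ] with y hy hyr
        rw [← ENNReal.ofReal_mul (by positivity)]
        have hyx : ‖y‖ < r + ‖x‖ := by
          have := norm_le_norm_add_norm_sub' y x
          rw [mem_ball, dist_eq_norm] at hyr
          linarith
        exact ENNReal.ofReal_le_ofReal (hy (by linarith [hr.2]))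
    _ ≤ ENNReal.ofReal (C * 3 ^ γ₀) * ENNReal.ofReal (K * r ^ d * ‖x‖ ^ (-γ₀)) := by
        rw [lintegral_const_mul' _ _ ENNReal.ofReal_ne_top]
        gcongr
        exact hK r hr₀ x hx₀
    _ ≤ _ := by
        rw [← ENNReal.ofReal_mul (by positivity)]
        refine ENNReal.ofReal_le_ofReal ?_
        calc C * 3 ^ γ₀ * (K * r ^ d * ‖x‖ ^ (-γ₀))
            = C * 3 ^ γ₀ * K * r ^ d * (c * ‖x‖ ^ (-γ₀)) / c := by field_simp
          _ ≤ C * 3 ^ γ₀ * K * r ^ d * (2 ^ γ * ρ x) / c := by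
            gcongr ?_ / c
            exact mul_le_mul_of_nonneg_left (hx_lower hx₂) (by positivity)
          _ = _ := by ring

lemma TwoPowerWeight.exists_setLIntegral_ball_le_of_lt_norm (hw : TwoPowerWeight d ρ c C γ₀ γ)
    (hγ : 0 ≤ γ) :
    ∃ K : ℝ, 0 ≤ K ∧ ∀ r ∈ Ioc (0 : ℝ) 1, ∀ᵐ x, 2 < ‖x‖ →
      ∫⁻ y in ball x r, ENNReal.ofReal (ρ y) ≤ ENNReal.ofReal (K * r ^ d * ρ x) := by
  obtain ⟨hc, hcC, -, hfar⟩ := hw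
  have hC : 0 < C := hc.trans hcC
  refine ⟨volume.real (ball (0 : Ed d) 1) * (C * 2 ^ γ / c), by positivity, fun r hr => ?_⟩
  have hr₀ : 0 < r := hr.1
  filter_upwards [hfar] with x hx_far hx₂
  have hupper : ∀ᵐ y, y ∈ ball x r → ρ y ≤ C * 2 ^ γ / c * ρ x := by
    filter_upwards [hfar] with y hy_far hyr
    have hxy := half_norm_le_norm_of_mem_ball (by linarith [hr.2]) hyr
    calc ρ y ≤ C * ‖y‖ ^ (-γ) := (hy_far (by linarith)).2
      _ ≤ C * (2 ^ γ * ‖x‖ ^ (-γ)) := by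
        gcongr
        exact rpow_neg_le_of_le_mul (by linarith) (by linarith) (by norm_num) hγ hxy
      _ = C * 2 ^ γ / c * (c * ‖x‖ ^ (-γ)) := by field_simp
      _ ≤ _ := by
        gcongr
        exact (hx_far (by linarith)).1
  refine (setLIntegral_ball_ofReal_le hr₀.le hupper).trans (le_of_eq ?_)
  ring_nf

lemma TwoPowerWeight.isLocalA1Weight (hw : TwoPowerWeight d ρ c C γ₀ γ) (hd : 1 ≤ d)
    (hγ₀ : γ₀ ∈ Ico (0 : ℝ) d) (hγ : 0 ≤ γ) : IsLocalA1Weight ρ := by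
  obtain ⟨K₁, hK₁, hnear⟩ := hw.exists_setLIntegral_ball_le_of_norm_le hd hγ₀.1 hγ₀.2 hγ
  obtain ⟨K₂, -, hfar⟩ := hw.exists_setLIntegral_ball_le_of_lt_norm hγ
  refine ⟨max K₁ K₂, le_max_of_le_left hK₁, fun r hr => ?_⟩
  have hr₀ : 0 < r := hr.1
  filter_upwards [hnear r hr, hfar r hr, hw.mul_decay_le hd hγ₀.1 hγ]
    with x hx_near hx_far hx_lower
  have hρ : 0 ≤ ρ x := (mul_nonneg hw.1.le (decay_pos x).le).trans hx_lower
  rcases le_or_gt ‖x‖ 2 with hx | hx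
  · refine (hx_near hx).trans (ENNReal.ofReal_le_ofReal ?_)
    gcongr
    exact le_max_left _ _
  · refine (hx_far hx).trans (ENNReal.ofReal_le_ofReal ?_)
    gcongr
    exact le_max_right _ _

end LocalA1

/-! ### Duality of weighted Lebesgue spaces -/

/-- The weight of the dual of `L^p(ρ dx)`, namely `L^{p'}(ρ^{-(p'-1)} dx)` with `p' = p / (p - 1)`,
under the unweighted pairing. -/
noncomputable abbrev dualWeight {d : ℕ} (p : ℝ) (ρ : Ed d → ℝ) (x : Ed d) : ℝ :=
  ρ x ^ (-(p / (p - 1) - 1))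

lemma abs_mul_rpow_one_div_rpow {p r : ℝ} (hp : p ≠ 0) (hr : 0 < r) (t : ℝ) :
    |t * r ^ (1 / p)| ^ p = |t| ^ p * r := by
  rw [abs_mul, abs_of_pos (by positivity : 0 < r ^ (1 / p)),
    Real.mul_rpow (abs_nonneg _) (by positivity), ← Real.rpow_mul hr.le, one_div_mul_cancel hp,
    Real.rpow_one]

lemma abs_mul_rpow_neg_one_div_rpow {p r : ℝ} (hp : 1 < p) (hr : 0 < r) (t : ℝ) :
    |t * r ^ (-(1 / p))| ^ (p / (p - 1)) = |t| ^ (p / (p - 1)) * r ^ (-(p / (p - 1) - 1)) := by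
  have hp₀ : p ≠ 0 := by linarith
  have hp₁ : p - 1 ≠ 0 := by linarith
  have exponent : -(1 / p) * (p / (p - 1)) = -(p / (p - 1) - 1) := by field_simp; ring
  rw [abs_mul, abs_of_pos (by positivity : 0 < r ^ (-(1 / p))),
    Real.mul_rpow (abs_nonneg _) (by positivity), ← Real.rpow_mul hr.le, exponent]

lemma mul_rpow_neg_mul_mul_rpow {r : ℝ} (hr : 0 < r) (a u v : ℝ) :
    u * r ^ (-a) * (v * r ^ a) = u * v := by
  rw [mul_mul_mul_comm, ← Real.rpow_add hr, neg_add_cancel, Real.rpow_zero, mul_one]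

lemma abs_mul_le_rpow_mul_add_rpow_mul_dualWeight {d : ℕ} {p : ℝ} {ρ : Ed d → ℝ} (hp : 1 < p)
    (hρ : ∀ x, 0 < ρ x) (V f : Ed d → ℝ) (x : Ed d) :
    |V x * f x| ≤ |V x| ^ (p / (p - 1)) * dualWeight p ρ x + |f x| ^ p * ρ x := by
  have young := abs_mul_le_rpow_add_rpow (q := p / (p - 1)) (.conjExponent hp)
    (V x * ρ x ^ (-(1 / p))) (f x * ρ x ^ (1 / p))
  rwa [abs_mul_rpow_neg_one_div_rpow hp (hρ x), abs_mul_rpow_one_div_rpow (by linarith) (hρ x),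
    mul_rpow_neg_mul_mul_rpow (hρ x)] at young

namespace MemWLp

variable {d : ℕ} {p : ℝ} {ρ V f g : Ed d → ℝ}

lemma integrable_mul (hp : 1 < p) (hρ : ∀ x, 0 < ρ x)
    (hV : MemWLp d (p / (p - 1)) (dualWeight p ρ) V) (hf : MemWLp d p ρ f) :
    Integrable (fun x => V x * f x) :=
  (hV.2.add hf.2).mono' (hV.1.mul hf.1)
    (ae_of_all _ (abs_mul_le_rpow_mul_add_rpow_mul_dualWeight hp hρ V f))

lemma abs_integral_mul_le (hp : 1 < p) (hρ : ∀ x, 0 < ρ x)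
    (hV : MemWLp d (p / (p - 1)) (dualWeight p ρ) V) (hf : MemWLp d p ρ f) :
    |∫ x, V x * f x| ≤
      (∫ x, |V x| ^ (p / (p - 1)) * dualWeight p ρ x) + ∫ x, |f x| ^ p * ρ x := by
  rw [← integral_add hV.2 hf.2]
  exact abs_integral_le_integral_abs.trans (integral_mono (integrable_mul hp hρ hV hf).abs
    (hV.2.add hf.2) (abs_mul_le_rpow_mul_add_rpow_mul_dualWeight hp hρ V f))

lemma tendsto_integral_mul {f : ℕ → Ed d → ℝ} {B : ℝ} (hp : 1 < p) (hρ : ∀ x, 0 < ρ x)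
    (hm : Measurable ρ) (hV : MemWLp d (p / (p - 1)) (dualWeight p ρ) V)
    (hf : ∀ n, MemWLp d p ρ (f n)) (hB : ∀ n, ∫ x, |f n x| ^ p * ρ x ≤ B)
    (hlim : ∀ᵐ x, Tendsto (fun n => f n x) atTop (𝓝 (g x))) :
    Tendsto (fun n => ∫ x, V x * f n x) atTop (𝓝 (∫ x, V x * g x)) := by
  have hρm (q : ℝ) : AEStronglyMeasurable (fun x => ρ x ^ q) volume :=
    (hm.pow_const q).aestronglyMeasurable
  have hpow (f : Ed d → ℝ) (x : Ed d) : |f x * ρ x ^ (1 / p)| ^ p = |f x| ^ p * ρ x :=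
    abs_mul_rpow_one_div_rpow (by linarith) (hρ x) _
  have hdual (x : Ed d) : |V x * ρ x ^ (-(1 / p))| ^ (p / (p - 1)) =
      |V x| ^ (p / (p - 1)) * dualWeight p ρ x := abs_mul_rpow_neg_one_div_rpow hp (hρ x) _
  have key := tendsto_integral_mul_of_tendsto_ae (μ := volume) (q := p / (p - 1))
    (F := fun x => V x * ρ x ^ (-(1 / p))) (f := fun n x => f n x * ρ x ^ (1 / p))
    (g := fun x => g x * ρ x ^ (1 / p)) (.conjExponent hp) (hV.1.mul (hρm _))
    (by simpa only [hdual] using hV.2) (fun n => (hf n).1.mul (hρm _))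
    (fun n => by simpa only [hpow] using (hf n).2) (fun n => by simpa only [hpow] using hB n)
    (hlim.mono fun x hx => hx.mul_const _)
  simpa only [mul_rpow_neg_mul_mul_rpow (hρ _)] using key

lemma of_bounded_of_support (hp : 0 < p) (hρ : ∀ x, 0 < ρ x) (hloc : LocallyIntegrable ρ)
    (hf : AEStronglyMeasurable f volume) {A r : ℝ} (hA : ∀ x, |f x| ≤ A)
    (hr : ∀ x, r ≤ ‖x‖ → f x = 0) : MemWLp d p ρ f := by
  have hball : IntegrableOn ρ (ball 0 r) :=
    (hloc.integrableOn_isCompact (isCompact_closedBall 0 r)).mono_set ball_subset_closedBall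
  have hpow : AEStronglyMeasurable (fun x => |f x| ^ p) volume :=
    (Real.continuous_rpow_const hp.le).comp_aestronglyMeasurable
      (continuous_abs.comp_aestronglyMeasurable hf)
  refine ⟨hf, ((hball.integrable_indicator measurableSet_ball).const_mul (A ^ p)).mono'
    (hpow.mul hloc.aestronglyMeasurable) (ae_of_all _ fun x => ?_)⟩
  have := hρ x
  rw [Real.norm_of_nonneg (by positivity)]
  by_cases hx : x ∈ ball (0 : Ed d) r
  · rw [indicator_of_mem hx]
    gcongr
    exact hA x
  · rw [indicator_of_notMem hx, hr x (by simpa using hx)]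
    simp [Real.zero_rpow hp.ne']

lemma locallyIntegrable_of_dualWeight (hp : 1 < p) (hρ : ∀ x, 0 < ρ x)
    (hloc : LocallyIntegrable ρ) (hV : MemWLp d (p / (p - 1)) (dualWeight p ρ) V) :
    LocallyIntegrable V := by
  intro x
  set B : Set (Ed d) := ball 0 (‖x‖ + 1)
  have hone : MemWLp d p ρ (B.indicator fun _ => (1 : ℝ)) :=
    of_bounded_of_support (by linarith) hρ hloc
      (measurable_const.indicator measurableSet_ball).aestronglyMeasurable (A := 1) (r := ‖x‖ + 1)
      (fun y => by by_cases h : y ∈ B <;> simp [h])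
      (fun y hy => indicator_of_notMem (by simpa [B] using hy) _)
  refine ⟨B, isOpen_ball.mem_nhds (by simp), ?_⟩
  rw [← integrable_indicator_iff (s := B) measurableSet_ball]
  refine (integrable_mul hp hρ hV hone).congr (ae_of_all _ fun y => ?_)
  by_cases h : y ∈ B <;> simp [indicator, h]

end MemWLp

/-! ### Mollification -/

section Mollification

variable {d n : ℕ}

/-- A smooth bump on the ball of radius `1 / (n + 1)`, the profile of the `n`-th mollifier. -/
noncomputable def mollifierBump (d n : ℕ) : ContDiffBump (0 : Ed d) where
  rIn := 1 / (2 * ((n : ℝ) + 1))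
  rOut := 1 / ((n : ℝ) + 1)
  rIn_pos := by positivity
  rIn_lt_rOut := one_div_lt_one_div_of_lt (by positivity) (by linarith [n.cast_nonneg (α := ℝ)])

lemma rOut_mollifierBump_le : (mollifierBump d n).rOut ≤ 2 * (mollifierBump d n).rIn := by
  simp only [mollifierBump]
  apply le_of_eq
  field_simp

/-- The standard approximate identity: even probability densities supported in the balls of radius
`1 / (n + 1)`. -/
noncomputable def mollifier (n : ℕ) : Ed d → ℝ := (mollifierBump d n).normed volume

/-- Convolution with the `n`-th mollifier. -/
noncomputable def smoothed (n : ℕ) (f : Ed d → ℝ) : Ed d → ℝ :=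
  convolution (mollifier n) f (ContinuousLinearMap.lsmul ℝ ℝ) volume

lemma smoothed_apply (f : Ed d → ℝ) (x : Ed d) :
    smoothed n f x = ∫ z, mollifier n z * f (x - z) := rfl

lemma smoothed_eq_integral_sub (f : Ed d → ℝ) (x : Ed d) :
    smoothed n f x = ∫ y, mollifier n (x - y) * f y := convolution_lsmul_swap

lemma mollifier_nonneg (z : Ed d) : 0 ≤ mollifier n z := (mollifierBump d n).nonneg_normed z

lemma mollifier_neg (z : Ed d) : mollifier n (-z) = mollifier n z :=
  (mollifierBump d n).normed_neg z

lemma integrable_mollifier : Integrable (mollifier n : Ed d → ℝ) :=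
  (mollifierBump d n).integrable_normed

lemma isTest_mollifier : IsTest (mollifier n : Ed d → ℝ) :=
  ⟨(mollifierBump d n).contDiff_normed, (mollifierBump d n).hasCompactSupport_normed⟩

lemma mollifier_eq_zero {z : Ed d} (hz : 1 / ((n : ℝ) + 1) ≤ ‖z‖) : mollifier n z = 0 := by
  by_contra hne
  have : z ∈ ball (0 : Ed d) (mollifierBump d n).rOut := by
    rwa [← (mollifierBump d n).support_normed_eq (μ := volume)]
  exact hz.not_gt (mem_ball_zero_iff.1 this)

lemma mollifier_eq_zero_of_one_le {z : Ed d} (hz : 1 ≤ ‖z‖) : mollifier n z = 0 :=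
  mollifier_eq_zero (((div_le_one (by positivity)).2 (by simp)).trans hz)

lemma measurable_ofReal_mollifier :
    Measurable fun z : Ed d => ENNReal.ofReal (mollifier n z) :=
  isTest_mollifier.contDiff.continuous.measurable.ennreal_ofReal

lemma lintegral_mollifier : ∫⁻ z : Ed d, ENNReal.ofReal (mollifier n z) = 1 := by
  rw [← ofReal_integral_eq_lintegral_ofReal integrable_mollifier (ae_of_all _ mollifier_nonneg),
    mollifier, (mollifierBump d n).integral_normed, ENNReal.ofReal_one]

lemma mollifier_le (z : Ed d) :
    mollifier n z ≤ 2 ^ d / volume.real (ball (0 : Ed d) 1) * ((n : ℝ) + 1) ^ d := by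
  refine ((mollifierBump d n).normed_le_div_measure_closedBall_rOut volume 2
    rOut_mollifierBump_le z).trans_eq ?_
  have hr : (mollifierBump d n).rOut = 1 / ((n : ℝ) + 1) := rfl
  rw [hr, Measure.addHaar_real_closedBall _ _ (by positivity), finrank_euclideanSpace,
    Fintype.card_fin, one_div, inv_pow]
  field_simp

lemma IsLocalA1Weight.exists_lintegral_mollifier_mul_le {ρ : Ed d → ℝ} (hρ : IsLocalA1Weight ρ) :
    ∃ K : ℝ, 0 ≤ K ∧ ∀ n, ∀ᵐ x : Ed d,
      ∫⁻ z, ENNReal.ofReal (mollifier n (x - z) * ρ z) ≤ ENNReal.ofReal (K * ρ x) := by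
  obtain ⟨K, hK₀, hK⟩ := hρ
  set A : ℝ := 2 ^ d / volume.real (ball (0 : Ed d) 1)
  refine ⟨A * K, by positivity, fun n => ?_⟩
  have hr : 1 / ((n : ℝ) + 1) ∈ Ioc (0 : ℝ) 1 :=
    ⟨by positivity, (div_le_one (by positivity)).2 (by simp)⟩
  filter_upwards [hK _ hr] with x hx
  have hsupport (z : Ed d) (hz : ENNReal.ofReal (mollifier n (x - z) * ρ z) ≠ 0) :
      z ∈ ball x (1 / ((n : ℝ) + 1)) := by
    by_contra hzr
    rw [mem_ball, dist_comm, dist_eq_norm, not_lt] at hzr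
    simp [mollifier_eq_zero hzr] at hz
  calc ∫⁻ z, ENNReal.ofReal (mollifier n (x - z) * ρ z)
      = ∫⁻ z in ball x (1 / ((n : ℝ) + 1)), ENNReal.ofReal (mollifier n (x - z) * ρ z) :=
        (setLIntegral_eq_of_support_subset hsupport).symm
    _ ≤ ∫⁻ z in ball x (1 / ((n : ℝ) + 1)),
          ENNReal.ofReal (A * ((n : ℝ) + 1) ^ d) * ENNReal.ofReal (ρ z) := by
        gcongr with z
        rw [ENNReal.ofReal_mul (mollifier_nonneg _)]
        gcongr
        exact mollifier_le _
    _ ≤ ENNReal.ofReal (A * ((n : ℝ) + 1) ^ d) *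
          ENNReal.ofReal (K * (1 / ((n : ℝ) + 1)) ^ d * ρ x) := by
        rw [lintegral_const_mul' _ _ ENNReal.ofReal_ne_top]
        gcongr
    _ = ENNReal.ofReal (A * K * ρ x) := by
        rw [← ENNReal.ofReal_mul (by positivity), one_div, inv_pow]
        congr 1
        field_simp

end Mollification

section Smoothing

variable {d n : ℕ} {e p : ℝ} {f : Ed d → ℝ}

lemma integrable_mul_decay_of_sq (he : (d : ℝ) < e) (hf : AEStronglyMeasurable f volume)
    (hi : Integrable fun x => f x ^ 2 * decay e x) : Integrable fun x => f x * decay e x := by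
  refine ((integrable_decay he).add hi).mono' (hf.mul measurable_decay.aestronglyMeasurable)
    (ae_of_all _ fun x => ?_)
  have hJ := decay_pos (e := e) x
  have amgm : |f x| ≤ 1 + f x ^ 2 := by nlinarith [sq_nonneg (|f x| - 1), sq_abs (f x)]
  calc ‖f x * decay e x‖ = |f x| * decay e x := by
        rw [Real.norm_eq_abs, abs_mul, abs_of_pos hJ]
    _ ≤ (1 + f x ^ 2) * decay e x := mul_le_mul_of_nonneg_right amgm hJ.le
    _ = decay e x + f x ^ 2 * decay e x := by ring

lemma locallyIntegrable_of_integrable_mul_decay (hf : Integrable fun x => f x * decay e x) :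
    LocallyIntegrable f := by
  have hcont : Continuous fun x : Ed d => (1 + ‖x‖) ^ e :=
    (continuous_const.add continuous_norm).rpow_const fun x => Or.inl (by positivity : 1 + ‖x‖ ≠ 0)
  refine (hf.locallyIntegrable.continuous_mul hcont).congr (ae_of_all _ fun x => ?_)
  simp only [decay]
  rw [mul_left_comm, ← Real.rpow_add (by positivity), add_neg_cancel, Real.rpow_zero,
    mul_one]

lemma contDiff_smoothed (hf : LocallyIntegrable f) : ContDiff ℝ (⊤ : ℕ∞) (smoothed n f) :=
  isTest_mollifier.hasCompactSupport.contDiff_convolution_left _ isTest_mollifier.contDiff hf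

lemma tendsto_smoothed_ae (hf : LocallyIntegrable f) :
    ∀ᵐ x, Tendsto (fun n => smoothed n f x) atTop (𝓝 (f x)) :=
  ContDiffBump.ae_convolution_tendsto_right_of_locallyIntegrable (φ := mollifierBump d) (K := 2)
    tendsto_one_div_add_atTop_nhds_zero_nat (Eventually.of_forall fun _ => rOut_mollifierBump_le) hf

lemma ofReal_abs_smoothed_rpow_le (hp : 1 ≤ p) (hf : AEStronglyMeasurable f volume) (x : Ed d) :
    ENNReal.ofReal (|smoothed n f x| ^ p) ≤
      ∫⁻ y, ENNReal.ofReal (mollifier n (x - y)) * ENNReal.ofReal (|f y| ^ p) := by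
  have hp₀ : 0 < p := by linarith
  set ν : Measure (Ed d) := volume.withDensity fun y => ENNReal.ofReal (mollifier n (x - y))
  have hmeas : Measurable fun y => ENNReal.ofReal (mollifier n (x - y)) :=
    measurable_ofReal_mollifier.comp (measurable_const.sub measurable_id)
  have : IsProbabilityMeasure ν := ⟨by
    rw [withDensity_apply _ MeasurableSet.univ, setLIntegral_univ,
      lintegral_sub_left_eq_self (fun y => ENNReal.ofReal (mollifier n y)), lintegral_mollifier]⟩
  have hν (q : ℝ) (hq : 0 ≤ q) : ∫⁻ y, ‖f y‖ₑ ^ q ∂ν =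
      ∫⁻ y, ENNReal.ofReal (mollifier n (x - y)) * ENNReal.ofReal (|f y| ^ q) := by
    rw [lintegral_withDensity_eq_lintegral_mul₀ hmeas.aemeasurable (hf.enorm.pow_const q)]
    refine lintegral_congr fun y => ?_
    rw [Pi.mul_apply, ← ENNReal.ofReal_rpow_of_nonneg (abs_nonneg _) hq, ← Real.norm_eq_abs,
      ofReal_norm]
  have jensen := eLpNorm'_le_eLpNorm'_of_exponent_le (p := 1) (q := p) one_pos hp ν
    (hf.mono_ac (withDensity_absolutelyContinuous _ _))
  have triangle : ENNReal.ofReal |smoothed n f x| ≤ eLpNorm' f 1 ν := by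
    rw [eLpNorm'_eq_lintegral_enorm, hν 1 one_pos.le, one_div_one, ENNReal.rpow_one,
      ← Real.norm_eq_abs, ofReal_norm, smoothed_eq_integral_sub]
    refine (enorm_integral_le_lintegral_enorm _).trans_eq (lintegral_congr fun y => ?_)
    rw [enorm_mul, Real.enorm_of_nonneg (mollifier_nonneg _), ← ofReal_norm (f y),
      Real.norm_eq_abs, Real.rpow_one]
  rw [← ENNReal.ofReal_rpow_of_nonneg (abs_nonneg _) hp₀.le, ← hν p hp₀.le]
  refine (ENNReal.rpow_le_rpow (triangle.trans jensen) hp₀.le).trans_eq ?_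
  rw [eLpNorm'_eq_lintegral_enorm, ← ENNReal.rpow_mul, one_div_mul_cancel hp₀.ne', ENNReal.rpow_one]

lemma lintegral_smoothed_rpow_mul_le (hp : 1 ≤ p) {ρ : Ed d → ℝ} (hm : Measurable ρ) {K : ℝ}
    (hK : ∀ᵐ x : Ed d,
      ∫⁻ z, ENNReal.ofReal (mollifier n (x - z) * ρ z) ≤ ENNReal.ofReal (K * ρ x))
    (hf : AEStronglyMeasurable f volume) :
    ∫⁻ x, ENNReal.ofReal (|smoothed n f x| ^ p * ρ x) ≤
      ∫⁻ x, ENNReal.ofReal (K * (|f x| ^ p * ρ x)) := by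
  have hfp : AEMeasurable (fun x => ENNReal.ofReal (|f x| ^ p)) volume :=
    (hf.aemeasurable.norm.pow_const p).ennreal_ofReal
  calc ∫⁻ x, ENNReal.ofReal (|smoothed n f x| ^ p * ρ x)
      ≤ ∫⁻ x, ∫⁻ y, ENNReal.ofReal (mollifier n (x - y)) * ENNReal.ofReal (|f y| ^ p) *
          ENNReal.ofReal (ρ x) := by
        refine lintegral_mono fun x => ?_
        dsimp only
        rw [ENNReal.ofReal_mul (by positivity), lintegral_mul_const' _ _ ENNReal.ofReal_ne_top]
        gcongr
        exact ofReal_abs_smoothed_rpow_le hp hf x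
    _ = ∫⁻ y, ∫⁻ x, ENNReal.ofReal (mollifier n (x - y)) * ENNReal.ofReal (|f y| ^ p) *
          ENNReal.ofReal (ρ x) :=
        lintegral_lintegral_swap (((measurable_ofReal_mollifier.comp
          (measurable_fst.sub measurable_snd)).aemeasurable.mul hfp.comp_snd).mul
          (hm.ennreal_ofReal.comp measurable_fst).aemeasurable)
    _ = ∫⁻ y, ENNReal.ofReal (|f y| ^ p) * ∫⁻ x, ENNReal.ofReal (mollifier n (y - x) * ρ x) := by
        refine lintegral_congr fun y => ?_
        rw [← lintegral_const_mul' _ _ ENNReal.ofReal_ne_top]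
        refine lintegral_congr fun x => ?_
        rw [ENNReal.ofReal_mul (mollifier_nonneg _), ← neg_sub y x, mollifier_neg]
        ring
    _ ≤ ∫⁻ y, ENNReal.ofReal (|f y| ^ p) * ENNReal.ofReal (K * ρ y) :=
        lintegral_mono_ae (hK.mono fun y hy => by gcongr)
    _ = ∫⁻ y, ENNReal.ofReal (K * (|f y| ^ p * ρ y)) := by
        refine lintegral_congr fun y => ?_
        rw [← ENNReal.ofReal_mul (by positivity), mul_left_comm]

lemma memWLp_smoothed (hp : 1 ≤ p) {ρ : Ed d → ℝ} (hρ : ∀ x, 0 < ρ x) (hm : Measurable ρ) {K : ℝ}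
    (hK₀ : 0 ≤ K) (hK : ∀ᵐ x : Ed d,
      ∫⁻ z, ENNReal.ofReal (mollifier n (x - z) * ρ z) ≤ ENNReal.ofReal (K * ρ x))
    (hloc : LocallyIntegrable f) (hf : MemWLp d p ρ f) :
    MemWLp d p ρ (smoothed n f) ∧
      ∫ x, |smoothed n f x| ^ p * ρ x ≤ K * ∫ x, |f x| ^ p * ρ x := by
  have hnonneg (g : Ed d → ℝ) (x : Ed d) : 0 ≤ |g x| ^ p * ρ x :=
    mul_nonneg (by positivity) (hρ x).le
  have hbound : ∫⁻ x, ENNReal.ofReal (|smoothed n f x| ^ p * ρ x) ≤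
      ENNReal.ofReal (K * ∫ x, |f x| ^ p * ρ x) := by
    rw [← integral_const_mul, ofReal_integral_eq_lintegral_ofReal (hf.2.const_mul K)
      (ae_of_all _ fun x => mul_nonneg hK₀ (hnonneg f x))]
    exact lintegral_smoothed_rpow_mul_le hp hm hK hf.1
  have hTm := (contDiff_smoothed (n := n) hloc).continuous.measurable
  have hTpm : AEStronglyMeasurable (fun x => |smoothed n f x| ^ p * ρ x) volume :=
    ((hTm.norm.pow_const p).mul hm).aestronglyMeasurable
  refine ⟨⟨hTm.aestronglyMeasurable, hTpm, ?_⟩, ?_⟩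
  · rw [hasFiniteIntegral_iff_ofReal (ae_of_all _ (hnonneg _))]
    exact hbound.trans_lt ENNReal.ofReal_lt_top
  · rw [integral_eq_lintegral_of_nonneg_ae (ae_of_all _ (hnonneg _)) hTpm]
    exact ENNReal.toReal_le_of_le_ofReal (mul_nonneg hK₀ (integral_nonneg (hnonneg f))) hbound

end Smoothing

section Transfer

variable {d n : ℕ} {e : ℝ} {v V ψ : Ed d → ℝ}

lemma integrable_mollifier_mul_mul_symmLap (hd : 1 ≤ d) (he : (d : ℝ) < e) (he' : e < d + 2)
    (hvi : Integrable fun x => v x * decay e x) (hψ : IsTest ψ) :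
    Integrable (fun q : Ed d × Ed d => mollifier n q.2 * v (q.1 - q.2) * symmLap e ψ q.1)
      (volume.prod volume) := by
  obtain ⟨C, hC₀, hC⟩ := hψ.exists_abs_symmLap_le hd he he'
  have he₀ : 0 ≤ e := d.cast_nonneg.trans he.le
  have hLap := aestronglyMeasurable_symmLap (e := e) hψ.contDiff.continuous.measurable
  have hmeas := (integrable_mollifier (d := d) (n := n)).1.convolution_integrand
    (ContinuousLinearMap.lsmul ℝ ℝ)
    (locallyIntegrable_of_integrable_mul_decay hvi).aestronglyMeasurable
    (μ := volume) (ν := volume)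
  have hdom := (integrable_mollifier (d := d) (n := n)).convolution_integrand
    (ContinuousLinearMap.lsmul ℝ ℝ) hvi.abs (μ := volume) (ν := volume)
  refine (hdom.const_mul (C * 2 ^ e)).mono' (hmeas.mul hLap.comp_fst) (ae_of_all _ fun q => ?_)
  simp only [ContinuousLinearMap.lsmul_apply, smul_eq_mul, Real.norm_eq_abs, abs_mul,
    abs_of_nonneg (mollifier_nonneg _), abs_of_pos (decay_pos _)]
  rcases le_or_gt 1 ‖q.2‖ with hq | hq
  · simp [mollifier_eq_zero_of_one_le hq]
  have shift : decay e q.1 ≤ 2 ^ e * decay e (q.1 - q.2) := by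
    have := decay_le_decay_add he₀ q.1 (-q.2)
    rw [norm_neg, ← sub_eq_add_neg] at this
    have hJ := decay_pos (e := e) (q.1 - q.2)
    refine this.trans ?_
    gcongr
    linarith
  calc mollifier n q.2 * |v (q.1 - q.2)| * |symmLap e ψ q.1|
      ≤ mollifier n q.2 * |v (q.1 - q.2)| * (C * (2 ^ e * decay e (q.1 - q.2))) := by
        have := mollifier_nonneg (n := n) q.2
        gcongr
        exact (hC q.1).trans (by gcongr)
    _ = C * 2 ^ e * (mollifier n q.2 * (|v (q.1 - q.2)| * decay e (q.1 - q.2))) := by ring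

lemma integrable_mollifier_mul_mul_comp_add (hV : LocallyIntegrable V) (hψ : IsTest ψ) :
    Integrable (fun q : Ed d × Ed d => mollifier n q.1 * (V q.2 * ψ (q.2 + q.1)))
      (volume.prod volume) := by
  obtain ⟨A, hA⟩ := hψ.exists_abs_le
  obtain ⟨r, -, hr⟩ := hψ.exists_one_le_radius
  set B : Set (Ed d) := closedBall 0 (r + 1)
  have hVB : Integrable (B.indicator V) :=
    (hV.integrableOn_isCompact (isCompact_closedBall _ _)).integrable_indicator
      measurableSet_closedBall
  have hdom := (integrable_mollifier (d := d) (n := n)).mul_prod hVB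
  refine (hdom.norm.const_mul A).mono' ?_ (ae_of_all _ fun q => ?_)
  · exact (isTest_mollifier.contDiff.continuous.comp continuous_fst).aestronglyMeasurable.mul
      (hV.aestronglyMeasurable.comp_snd.mul
        (hψ.contDiff.continuous.comp (continuous_snd.add continuous_fst)).aestronglyMeasurable)
  rw [norm_mul, norm_mul, norm_mul]
  rcases le_or_gt 1 ‖q.1‖ with hq | hq
  · simp [mollifier_eq_zero_of_one_le hq]
  by_cases hB : q.2 ∈ B
  · rw [indicator_of_mem hB, mul_comm A, mul_assoc]
    gcongr
    exact hA _
  · have hfar : r < ‖q.2 + q.1‖ := by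
      have : r + 1 < ‖q.2‖ := by simpa [B] using hB
      have triangle := norm_sub_le (q.2 + q.1) q.1
      rw [add_sub_cancel_right] at triangle
      linarith
    simp [hr _ hfar, indicator_of_notMem hB]

lemma IsDistFracLap.integral_mul_symmLap_comp_add (hd : 1 ≤ d) {s Cds : ℝ} (hs : s ∈ Ioo (0 : ℝ) 1)
    (hD : IsDistFracLap d s Cds v V) (hψ : IsTest ψ) (z : Ed d) :
    Cds * ∫ x, v x * symmLap (d + 2 * s) ψ (x + z) = ∫ x, V x * ψ (x + z) := by
  have hψz : IsTest fun y => ψ (y + z) :=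
    ⟨hψ.contDiff.comp (contDiff_id.add contDiff_const),
      hψ.hasCompactSupport.comp_homeomorph (Homeomorph.addRight z)⟩
  rw [← hD _ hψz.contDiff hψz.hasCompactSupport, ← integral_const_mul]
  refine integral_congr_ae (ae_of_all _ fun x => ?_)
  dsimp only
  rw [hψz.fracLap_eq hd hs, symmLap_comp_add_right, mul_left_comm]

lemma IsDistFracLap.integral_smoothed_mul_symmLap (hd : 1 ≤ d) {s Cds : ℝ}
    (hs : s ∈ Ioo (0 : ℝ) 1) (hD : IsDistFracLap d s Cds v V)
    (hvi : Integrable fun x => v x * decay (d + 2 * s) x) (hV : LocallyIntegrable V)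
    (hψ : IsTest ψ) :
    Cds * ∫ x, smoothed n v x * symmLap (d + 2 * s) ψ x = ∫ x, V x * smoothed n ψ x := by
  have hs' := hs
  obtain ⟨hs₀, hs₁⟩ := hs'
  calc Cds * ∫ x, smoothed n v x * symmLap (d + 2 * s) ψ x
      = Cds * ∫ x, ∫ z, mollifier n z * v (x - z) * symmLap (d + 2 * s) ψ x := by
        simp only [smoothed_apply, integral_mul_const]
    _ = Cds * ∫ z, ∫ x, mollifier n z * v (x - z) * symmLap (d + 2 * s) ψ x := by
        rw [integral_integral_swap (integrable_mollifier_mul_mul_symmLap hd (by linarith)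
          (by linarith) hvi hψ)]
    _ = ∫ z, ∫ x, mollifier n z * (V x * ψ (x + z)) := by
        rw [← integral_const_mul]
        refine integral_congr_ae (ae_of_all _ fun z => ?_)
        dsimp only
        rw [integral_const_mul, ← hD.integral_mul_symmLap_comp_add hd hs hψ z,
          ← integral_add_right_eq_self _ z]
        simp only [add_sub_cancel_right, mul_assoc, integral_const_mul]
        ring
    _ = ∫ x, ∫ z, mollifier n z * (V x * ψ (x + z)) :=
        integral_integral_swap (integrable_mollifier_mul_mul_comp_add hV hψ)
    _ = ∫ x, V x * smoothed n ψ x := by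
        refine integral_congr_ae (ae_of_all _ fun x => ?_)
        dsimp only
        rw [smoothed_apply, ← integral_const_mul, ← integral_neg_eq_self]
        refine integral_congr_ae (ae_of_all _ fun z => ?_)
        dsimp only
        rw [mollifier_neg, ← sub_eq_add_neg, mul_left_comm]

end Transfer

/-! ### Gagliardo energies -/

section Energy

variable {d : ℕ} {e ε : ℝ} {k u w χ ψ : Ed d → ℝ}

lemma IsTest.mul_contDiff (hχ : IsTest χ) (hu : ContDiff ℝ (⊤ : ℕ∞) u) :
    IsTest fun x => χ x * u x :=
  ⟨hχ.contDiff.mul hu, hχ.hasCompactSupport.mul_right⟩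

/-- The integrand of the bilinear nonlocal energy of `u` and `w` with interaction kernel `k`. -/
def energyDensity (k u w : Ed d → ℝ) (z : Ed d × Ed d) : ℝ :=
  (u z.1 - u z.2) * (w z.1 - w z.2) * k (z.1 - z.2)

/-- The homogeneous kernel `‖x‖ ^ (-e)`; the Gagliardo energy of order `s` has `e = d + 2 * s`. -/
noncomputable def powerKernel (e : ℝ) (x : Ed d) : ℝ :=
  ‖x‖ ^ (-e)

/-- The Gagliardo energy of `u` with kernel `‖x‖ ^ (-e)` is finite. -/
def FiniteEnergy (e : ℝ) (u : Ed d → ℝ) : Prop :=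
  Integrable (energyDensity (powerKernel e) u u)

/-- The bilinear Gagliardo energy of `u` and `w` with kernel `‖x‖ ^ (-e)`. -/
noncomputable def energy (e : ℝ) (u w : Ed d → ℝ) : ℝ :=
  ∫ z, energyDensity (powerKernel e) u w z

lemma energy_comm (e : ℝ) (u w : Ed d → ℝ) : energy e u w = energy e w u := by
  simp only [energy, energyDensity, mul_comm]

lemma energyDensity_self_nonneg (hk : ∀ x, 0 ≤ k x) (z : Ed d × Ed d) :
    0 ≤ energyDensity k u u z :=
  mul_nonneg (mul_self_nonneg _) (hk _)

lemma powerKernel_nonneg (x : Ed d) : 0 ≤ powerKernel e x :=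
  Real.rpow_nonneg (norm_nonneg _) _

lemma aestronglyMeasurable_energyDensity_truncKernel (hu : AEStronglyMeasurable u volume)
    (hw : AEStronglyMeasurable w volume) :
    AEStronglyMeasurable (energyDensity (truncKernel e ε) u w) volume :=
  ((hu.comp_fst.sub hu.comp_snd).mul (hw.comp_fst.sub hw.comp_snd)).mul
    (measurable_truncKernel.comp (measurable_fst.sub measurable_snd)).aestronglyMeasurable

lemma tendsto_one_div_add_one_nhdsGT :
    Tendsto (fun n : ℕ => 1 / ((n : ℝ) + 1)) atTop (𝓝[>] 0) :=
  tendsto_nhdsWithin_iff.2 ⟨tendsto_one_div_add_atTop_nhds_zero_nat,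
    Eventually.of_forall fun _ => mem_Ioi.2 Nat.one_div_pos_of_nat⟩

lemma tendsto_energyDensity (he : 0 < e) (u w : Ed d → ℝ) (z : Ed d × Ed d) :
    Tendsto (fun n : ℕ => energyDensity (truncKernel e (1 / ((n : ℝ) + 1))) u w z) atTop
      (𝓝 (energyDensity (powerKernel e) u w z)) :=
  ((tendsto_truncKernel he _).comp tendsto_one_div_add_one_nhdsGT).const_mul _

lemma integrable_fst_mul_truncKernel (he : (d : ℝ) < e) (hε : 0 < ε) (hu : Integrable u) :
    Integrable fun z : Ed d × Ed d => u z.1 * truncKernel e ε (z.1 - z.2) := by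
  refine (hu.convolution_integrand (ContinuousLinearMap.mul ℝ ℝ)
    (integrable_truncKernel he hε)).swap.congr (ae_of_all _ fun z => ?_)
  simp only [Function.comp, Prod.swap, ContinuousLinearMap.mul_apply', truncKernel_sub_comm z.2]

lemma integrable_fst_mul_snd_mul_truncKernel (he : 0 ≤ e) (hε : 0 < ε)
    (hui : Integrable fun x => u x * decay e x) (hψ : IsTest ψ) :
    Integrable fun z : Ed d × Ed d => u z.1 * ψ z.2 * truncKernel e ε (z.1 - z.2) := by
  have hu := (locallyIntegrable_of_integrable_mul_decay hui).aestronglyMeasurable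
  have hψw : Integrable fun y => ψ y * (1 + ‖y‖) ^ e :=
    (hψ.contDiff.continuous.mul ((continuous_const.add continuous_norm).rpow_const
      fun _ => Or.inr he)).integrable_of_hasCompactSupport hψ.hasCompactSupport.mul_right
  refine ((hui.mul_prod hψw).norm.const_mul ((1 / ε + 1) ^ e)).mono' ?_ (ae_of_all _ fun z => ?_)
  · exact (hu.comp_fst.mul hψ.contDiff.continuous.aestronglyMeasurable.comp_snd).mul
      (measurable_truncKernel.comp (measurable_fst.sub measurable_snd)).aestronglyMeasurable
  have peetre := decay_le_decay_add he (z.1 - z.2) z.2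
  rw [sub_add_cancel] at peetre
  simp only [Real.norm_eq_abs, abs_mul, abs_of_nonneg (truncKernel_nonneg _),
    abs_of_pos (decay_pos _), abs_of_nonneg (show 0 ≤ (1 + ‖z.2‖) ^ e by positivity)]
  calc |u z.1| * |ψ z.2| * truncKernel e ε (z.1 - z.2)
      ≤ |u z.1| * |ψ z.2| * ((1 / ε + 1) ^ e * ((1 + ‖z.2‖) ^ e * decay e z.1)) := by
        gcongr
        exact (truncKernel_le_decay he hε _).trans (by gcongr)
    _ = (1 / ε + 1) ^ e * (|u z.1| * decay e z.1 * (|ψ z.2| * (1 + ‖z.2‖) ^ e)) := by ring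

lemma integrable_mul_sub_mul_truncKernel (he : (d : ℝ) < e) (hε : 0 < ε)
    (hui : Integrable fun x => u x * decay e x) (hψ : IsTest ψ) :
    Integrable fun z : Ed d × Ed d => u z.1 * (ψ z.1 - ψ z.2) * truncKernel e ε (z.1 - z.2) := by
  have huψ : Integrable fun x => u x * ψ x :=
    (locallyIntegrable_of_integrable_mul_decay hui).integrable_smul_right_of_hasCompactSupport
      hψ.contDiff.continuous hψ.hasCompactSupport
  refine ((integrable_fst_mul_truncKernel he hε huψ).sub (integrable_fst_mul_snd_mul_truncKernel
    (d.cast_nonneg.trans he.le) hε hui hψ)).congr (ae_of_all _ fun z => ?_)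
  simp only [Pi.sub_apply]
  ring

lemma integral_mul_sub_mul_truncKernel (he : (d : ℝ) < e) (hε : 0 < ε)
    (hui : Integrable fun x => u x * decay e x) (hψ : IsTest ψ) :
    ∫ z : Ed d × Ed d, u z.1 * (ψ z.1 - ψ z.2) * truncKernel e ε (z.1 - z.2) =
      ∫ x, u x * truncLap e ε ψ x := by
  rw [Measure.volume_eq_prod, integral_prod _ (integrable_mul_sub_mul_truncKernel he hε hui hψ)]
  simp only [truncLap, mul_assoc, integral_const_mul]

lemma energyDensity_truncKernel_eq (u ψ : Ed d → ℝ) (z : Ed d × Ed d) :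
    energyDensity (truncKernel e ε) u ψ z =
      u z.1 * (ψ z.1 - ψ z.2) * truncKernel e ε (z.1 - z.2) +
        u z.2 * (ψ z.2 - ψ z.1) * truncKernel e ε (z.2 - z.1) := by
  rw [energyDensity, truncKernel_sub_comm z.2 z.1]
  ring

lemma integrable_energyDensity_truncKernel (he : (d : ℝ) < e) (hε : 0 < ε)
    (hui : Integrable fun x => u x * decay e x) (hψ : IsTest ψ) :
    Integrable (energyDensity (truncKernel e ε) u ψ) := by
  have half := integrable_mul_sub_mul_truncKernel he hε hui hψ
  exact (half.add half.swap).congr (ae_of_all _ fun z => (energyDensity_truncKernel_eq u ψ z).symm)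

lemma integral_energyDensity_truncKernel (he : (d : ℝ) < e) (hε : 0 < ε)
    (hui : Integrable fun x => u x * decay e x) (hψ : IsTest ψ) :
    ∫ z, energyDensity (truncKernel e ε) u ψ z = 2 * ∫ x, u x * truncLap e ε ψ x := by
  have half := integrable_mul_sub_mul_truncKernel he hε hui hψ
  have swapped := integral_prod_swap (μ := (volume : Measure (Ed d))) (ν := volume)
    fun z : Ed d × Ed d => u z.1 * (ψ z.1 - ψ z.2) * truncKernel e ε (z.1 - z.2)
  rw [integral_congr_ae (ae_of_all _ (energyDensity_truncKernel_eq u ψ)), two_mul,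
    ← integral_mul_sub_mul_truncKernel he hε hui hψ]
  exact (integral_add half half.swap).trans (congrArg _ swapped)

lemma integrable_mul_symmLap (hd : 1 ≤ d) (he : (d : ℝ) < e) (he' : e < d + 2)
    (hui : Integrable fun x => u x * decay e x) (hψ : IsTest ψ) :
    Integrable fun x => u x * symmLap e ψ x := by
  obtain ⟨C, -, hC⟩ := hψ.exists_abs_symmLap_le hd he he'
  refine (hui.norm.const_mul C).mono'
    ((locallyIntegrable_of_integrable_mul_decay hui).aestronglyMeasurable.mul
      (aestronglyMeasurable_symmLap hψ.contDiff.continuous.measurable)) (ae_of_all _ fun x => ?_)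
  rw [norm_mul, norm_mul, mul_left_comm, Real.norm_of_nonneg (decay_pos x).le]
  gcongr
  exact hC x

lemma tendsto_integral_mul_truncLap (hd : 1 ≤ d) (he : (d : ℝ) < e) (he' : e < d + 2)
    (hui : Integrable fun x => u x * decay e x) (hψ : IsTest ψ) :
    Tendsto (fun n : ℕ => ∫ x, u x * truncLap e (1 / ((n : ℝ) + 1)) ψ x) atTop
      (𝓝 (∫ x, u x * symmLap e ψ x)) := by
  obtain ⟨C, -, hC⟩ := hψ.exists_abs_truncLap_le hd he he'
  refine tendsto_integral_of_dominated_convergence _ (fun n => ?_) (hui.norm.const_mul C)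
    (fun n => ae_of_all _ fun x => ?_) (ae_of_all _ fun x =>
      ((hψ.tendsto_truncLap hd he he' x).comp tendsto_one_div_add_one_nhdsGT).const_mul (u x))
  · have hψm := hψ.contDiff.continuous.measurable
    have hm : Measurable fun q : Ed d × Ed d =>
        (ψ q.1 - ψ q.2) * truncKernel e (1 / ((n : ℝ) + 1)) (q.1 - q.2) :=
      ((hψm.comp measurable_fst).sub (hψm.comp measurable_snd)).mul
        (measurable_truncKernel.comp (measurable_fst.sub measurable_snd))
    exact (locallyIntegrable_of_integrable_mul_decay hui).aestronglyMeasurable.mul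
      hm.stronglyMeasurable.integral_prod_right'.aestronglyMeasurable
  · rw [norm_mul, norm_mul, mul_left_comm, Real.norm_of_nonneg (decay_pos x).le]
    gcongr
    exact hC _ Nat.one_div_pos_of_nat x

lemma energy_eq_two_mul_integral_mul_symmLap (hd : 1 ≤ d) (he : (d : ℝ) < e) (he' : e < d + 2)
    (hui : Integrable fun x => u x * decay e x) (hψ : IsTest ψ) (hu : FiniteEnergy e u)
    (hψe : FiniteEnergy e ψ) : energy e u ψ = 2 * ∫ x, u x * symmLap e ψ x := by
  refine tendsto_nhds_unique ?_ ((tendsto_integral_mul_truncLap hd he he' hui hψ).const_mul 2)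
  simp only [← integral_energyDensity_truncKernel he Nat.one_div_pos_of_nat hui hψ]
  refine tendsto_integral_of_dominated_convergence _
    (fun n => (integrable_energyDensity_truncKernel he Nat.one_div_pos_of_nat hui
      hψ).aestronglyMeasurable) (hu.add hψe) (fun n => ae_of_all _ fun z => ?_)
    (ae_of_all _ (tendsto_energyDensity (d.cast_nonneg.trans_lt he) u ψ))
  have amgm : |(u z.1 - u z.2) * (ψ z.1 - ψ z.2)| ≤
      (u z.1 - u z.2) * (u z.1 - u z.2) + (ψ z.1 - ψ z.2) * (ψ z.1 - ψ z.2) := by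
    rw [abs_le]
    constructor <;> nlinarith [sq_nonneg (u z.1 - u z.2 + (ψ z.1 - ψ z.2)),
      sq_nonneg (u z.1 - u z.2 - (ψ z.1 - ψ z.2))]
  rw [Pi.add_apply]
  unfold energyDensity
  rw [norm_mul, ← add_mul, Real.norm_of_nonneg (truncKernel_nonneg _)]
  exact mul_le_mul amgm (truncKernel_le _) (truncKernel_nonneg _)
    (add_nonneg (mul_self_nonneg _) (mul_self_nonneg _))

lemma cutoff_add_mul_energyDensity (k χ u : Ed d → ℝ) (z : Ed d × Ed d) :
    (χ z.1 + χ z.2) * energyDensity k u u z =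
      2 * energyDensity k u (fun x => χ x * u x) z - energyDensity k (fun x => u x ^ 2) χ z := by
  unfold energyDensity
  ring

lemma energyDensity_cutoff_mul (k χ u : Ed d → ℝ) (z : Ed d × Ed d) :
    energyDensity k (fun x => χ x * u x) (fun x => χ x * u x) z =
      χ z.1 * χ z.2 * energyDensity k u u z + energyDensity k (fun x => χ x * u x ^ 2) χ z := by
  unfold energyDensity
  ring

theorem integrable_and_integral_cutoff_add_mul_energyDensity_le (hd : 1 ≤ d) (he : (d : ℝ) < e)
    (he' : e < d + 2) (hu : ContDiff ℝ (⊤ : ℕ∞) u)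
    (hu2 : Integrable fun x => u x ^ 2 * decay e x) (hχ : IsTest χ) (hχ₀ : ∀ x, 0 ≤ χ x) :
    Integrable (fun z => (χ z.1 + χ z.2) * energyDensity (powerKernel e) u u z) ∧
      ∫ z, (χ z.1 + χ z.2) * energyDensity (powerKernel e) u u z ≤
        4 * (∫ x, u x * symmLap e (fun y => χ y * u y) x) - 2 * ∫ x, u x ^ 2 * symmLap e χ x := by
  have hui := integrable_mul_decay_of_sq he hu.continuous.aestronglyMeasurable hu2
  have hχu := hχ.mul_contDiff hu
  have first := fun n : ℕ =>
    integrable_energyDensity_truncKernel he (Nat.one_div_pos_of_nat (n := n)) hui hχu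
  have second := fun n : ℕ =>
    integrable_energyDensity_truncKernel he (Nat.one_div_pos_of_nat (n := n)) hu2 hχ
  refine integrable_and_integral_le_of_tendsto_ae
    (f := fun (n : ℕ) z => (χ z.1 + χ z.2) *
      energyDensity (truncKernel e (1 / ((n : ℝ) + 1))) u u z)
    (fun n => ?_) (fun n => ae_of_all _ fun z => ?_) (fun n => le_of_eq ?_)
    (((tendsto_integral_mul_truncLap hd he he' hui hχu).const_mul 4).sub
      ((tendsto_integral_mul_truncLap hd he he' hu2 hχ).const_mul 2))
    (ae_of_all _ fun z => (tendsto_energyDensity (d.cast_nonneg.trans_lt he) u u z).const_mul _)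
  · simp only [cutoff_add_mul_energyDensity]
    exact ((first n).const_mul 2).sub (second n)
  · exact mul_nonneg (add_nonneg (hχ₀ _) (hχ₀ _)) (energyDensity_self_nonneg truncKernel_nonneg z)
  · simp only [cutoff_add_mul_energyDensity]
    rw [integral_sub ((first n).const_mul 2) (second n), integral_const_mul,
      integral_energyDensity_truncKernel he Nat.one_div_pos_of_nat hui hχu,
      integral_energyDensity_truncKernel he Nat.one_div_pos_of_nat hu2 hχ]
    ring

lemma cutoff_mul_energyDensity_truncKernel_le (hχ₀ : ∀ x, 0 ≤ χ x) (hχ₁ : ∀ x, χ x ≤ 1)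
    (z : Ed d × Ed d) :
    χ z.1 * χ z.2 * energyDensity (truncKernel e ε) u u z ≤ energyDensity (powerKernel e) u u z :=
  (mul_le_of_le_one_left (energyDensity_self_nonneg truncKernel_nonneg z)
    (mul_le_one₀ (hχ₁ _) (hχ₀ _) (hχ₁ _))).trans
      (mul_le_mul_of_nonneg_left (truncKernel_le _) (mul_self_nonneg _))

lemma integrable_cutoff_mul_energyDensity_truncKernel (hu : AEStronglyMeasurable u volume)
    (hχ : AEStronglyMeasurable χ volume) (hχ₀ : ∀ x, 0 ≤ χ x) (hχ₁ : ∀ x, χ x ≤ 1)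
    (hE : FiniteEnergy e u) :
    Integrable fun z => χ z.1 * χ z.2 * energyDensity (truncKernel e ε) u u z := by
  refine Integrable.mono' hE ((hχ.comp_fst.mul hχ.comp_snd).mul
    (aestronglyMeasurable_energyDensity_truncKernel hu hu)) (ae_of_all _ fun z => ?_)
  rw [Real.norm_of_nonneg (mul_nonneg (mul_nonneg (hχ₀ _) (hχ₀ _))
    (energyDensity_self_nonneg truncKernel_nonneg z))]
  exact cutoff_mul_energyDensity_truncKernel_le hχ₀ hχ₁ z

theorem finiteEnergy_and_energy_cutoff_mul_le (hd : 1 ≤ d) (he : (d : ℝ) < e)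
    (he' : e < d + 2) (hu : ContDiff ℝ (⊤ : ℕ∞) u)
    (hu2 : Integrable fun x => u x ^ 2 * decay e x) (hχ : IsTest χ) (hχ₀ : ∀ x, 0 ≤ χ x)
    (hχ₁ : ∀ x, χ x ≤ 1) (hE : FiniteEnergy e u) :
    FiniteEnergy e (fun x => χ x * u x) ∧
      energy e (fun x => χ x * u x) (fun x => χ x * u x) ≤
        energy e u u + 2 * ∫ x, χ x * u x ^ 2 * symmLap e χ x := by
  have hχm : AEStronglyMeasurable χ volume := hχ.contDiff.continuous.aestronglyMeasurable
  have hχu2 : Integrable fun x => χ x * u x ^ 2 * decay e x := by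
    simp only [mul_assoc]
    exact hu2.bdd_mul hχm (c := 1) (ae_of_all _ fun x => by
      rw [Real.norm_of_nonneg (hχ₀ x)]; exact hχ₁ x)
  have first := fun n : ℕ => integrable_cutoff_mul_energyDensity_truncKernel
    (ε := 1 / ((n : ℝ) + 1)) hu.continuous.aestronglyMeasurable hχm hχ₀ hχ₁ hE
  have second := fun n : ℕ =>
    integrable_energyDensity_truncKernel he (Nat.one_div_pos_of_nat (n := n)) hχu2 hχ
  refine integrable_and_integral_le_of_tendsto_ae
    (f := fun (n : ℕ) z => energyDensity (truncKernel e (1 / ((n : ℝ) + 1)))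
      (fun x => χ x * u x) (fun x => χ x * u x) z)
    (fun n => ?_) (fun n => ae_of_all _ fun z => energyDensity_self_nonneg truncKernel_nonneg z)
    (fun n => ?_)
    (((tendsto_integral_mul_truncLap hd he he' hχu2 hχ).const_mul 2).const_add (energy e u u))
    (ae_of_all _ (tendsto_energyDensity (d.cast_nonneg.trans_lt he) _ _))
  · simp only [energyDensity_cutoff_mul]
    exact (first n).add (second n)
  · simp only [energyDensity_cutoff_mul]
    rw [integral_add (first n) (second n),
      integral_energyDensity_truncKernel he Nat.one_div_pos_of_nat hχu2 hχ]
    gcongr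
    exact integral_mono (first n) hE (cutoff_mul_energyDensity_truncKernel_le hχ₀ hχ₁)

end Energy

/-! ### Energy bounds from adapted cutoffs, and weak convergence -/

section EnergyLimits

variable {d : ℕ} {e B M : ℝ} {u w g : Ed d → ℝ} {f χ r : ℕ → Ed d → ℝ}

lemma tendsto_prod_ae_of_tendsto_ae (hlim : ∀ᵐ x, Tendsto (fun n => f n x) atTop (𝓝 (g x))) :
    ∀ᵐ z : Ed d × Ed d, Tendsto (fun n => f n z.1 - f n z.2) atTop (𝓝 (g z.1 - g z.2)) := by
  filter_upwards [Measure.quasiMeasurePreserving_fst.ae hlim,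
    Measure.quasiMeasurePreserving_snd.ae hlim] with z h₁ h₂ using h₁.sub h₂

lemma FiniteEnergy.of_tendsto_ae (hf : ∀ n, FiniteEnergy e (f n))
    (hM : ∀ n, energy e (f n) (f n) ≤ M)
    (hlim : ∀ᵐ x, Tendsto (fun n => f n x) atTop (𝓝 (g x))) : FiniteEnergy e g :=
  (integrable_and_integral_le_of_tendsto_ae hf
    (fun _ => ae_of_all _ (energyDensity_self_nonneg powerKernel_nonneg)) hM tendsto_const_nhds
    ((tendsto_prod_ae_of_tendsto_ae hlim).mono fun _ h => (h.mul h).mul_const _)).1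

lemma sub_mul_powerKernel_half_mul (he : 0 < e) (u w : Ed d → ℝ) (z : Ed d × Ed d) :
    (u z.1 - u z.2) * powerKernel (e / 2) (z.1 - z.2) *
        ((w z.1 - w z.2) * powerKernel (e / 2) (z.1 - z.2)) =
      energyDensity (powerKernel e) u w z := by
  have square : powerKernel (e / 2) (z.1 - z.2) * powerKernel (e / 2) (z.1 - z.2) =
      powerKernel e (z.1 - z.2) := by
    rw [powerKernel, ← Real.rpow_add' (norm_nonneg _) (by linarith), powerKernel]
    ring_nf
  rw [energyDensity, ← square, mul_mul_mul_comm]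

lemma abs_sub_mul_powerKernel_half_rpow_two (he : 0 < e) (u : Ed d → ℝ) (z : Ed d × Ed d) :
    |(u z.1 - u z.2) * powerKernel (e / 2) (z.1 - z.2)| ^ (2 : ℝ) =
      energyDensity (powerKernel e) u u z := by
  rw [Real.rpow_two, sq_abs, sq, sub_mul_powerKernel_half_mul he]

theorem FiniteEnergy.tendsto_energy (he : 0 < e) (hw : FiniteEnergy e w)
    (hwm : AEStronglyMeasurable w volume) (hf : ∀ n, FiniteEnergy e (f n))
    (hfm : ∀ n, AEStronglyMeasurable (f n) volume) (hM : ∀ n, energy e (f n) (f n) ≤ M)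
    (hlim : ∀ᵐ x, Tendsto (fun n => f n x) atTop (𝓝 (g x))) :
    Tendsto (fun n => energy e w (f n)) atTop (𝓝 (energy e w g)) := by
  have hm {h : Ed d → ℝ} (hh : AEStronglyMeasurable h volume) : AEStronglyMeasurable
      (fun z : Ed d × Ed d => (h z.1 - h z.2) * powerKernel (e / 2) (z.1 - z.2)) volume :=
    (hh.comp_fst.sub hh.comp_snd).mul
      ((measurable_fst.sub measurable_snd).norm.pow_const _).aestronglyMeasurable
  have hsq (h : Ed d → ℝ) (z : Ed d × Ed d) := abs_sub_mul_powerKernel_half_rpow_two he h z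
  have key := tendsto_integral_mul_of_tendsto_ae .two_two (hm hwm)
    (by simp only [hsq]; exact hw) (fun n => hm (hfm n)) (fun n => by simp only [hsq]; exact hf n)
    (fun n => by simp only [hsq]; exact hM n)
    ((tendsto_prod_ae_of_tendsto_ae hlim).mono fun _ h => h.mul_const _)
  simp only [sub_mul_powerKernel_half_mul he] at key
  exact key

namespace IsAdaptedCutoffSeq

variable (hχ : IsAdaptedCutoffSeq e u χ r)

include hχ

lemma integrable_sq_mul_defect (hu : AEStronglyMeasurable u volume)
    (hu2 : Integrable fun x => u x ^ 2 * decay e x) (n : ℕ) :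
    Integrable fun x => u x ^ 2 * r n x := by
  obtain ⟨K, hK⟩ := hχ.defect_le_decay n
  refine (hu2.const_mul K).mono' ((hu.pow 2).mul (hχ.measurable_defect n).aestronglyMeasurable)
    (ae_of_all _ fun x => ?_)
  rw [Real.norm_of_nonneg (mul_nonneg (sq_nonneg _) (hχ.defect_nonneg n x)), mul_left_comm]
  gcongr
  exact hK x

lemma neg_one_le_integral_sq_mul_symmLap (hd : 1 ≤ d) (he : (d : ℝ) < e) (he' : e < d + 2)
    (hu : AEStronglyMeasurable u volume) (hu2 : Integrable fun x => u x ^ 2 * decay e x) (n : ℕ) :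
    -1 ≤ ∫ x, u x ^ 2 * symmLap e (χ n) x :=
  calc -1 ≤ -∫ x, u x ^ 2 * r n x := neg_le_neg (hχ.integral_sq_mul_defect_le n)
    _ = ∫ x, -(u x ^ 2 * r n x) := (integral_neg _).symm
    _ ≤ ∫ x, u x ^ 2 * symmLap e (χ n) x := by
      refine integral_mono (hχ.integrable_sq_mul_defect hu hu2 n).neg
        (integrable_mul_symmLap hd he he' hu2 (hχ.isTest n)) fun x => ?_
      rw [← mul_neg]
      gcongr
      exact hχ.neg_defect_le_symmLap n x

lemma integral_cutoff_mul_sq_mul_symmLap_le (hd : 1 ≤ d) (he : (d : ℝ) < e) (he' : e < d + 2)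
    (hu : AEStronglyMeasurable u volume) (hu2 : Integrable fun x => u x ^ 2 * decay e x) (n : ℕ) :
    ∫ x, χ n x * u x ^ 2 * symmLap e (χ n) x ≤ (∫ x, u x ^ 2 * symmLap e (χ n) x) + 1 := by
  have hL := integrable_mul_symmLap hd he he' hu2 (hχ.isTest n)
  have hr := hχ.integrable_sq_mul_defect hu hu2 n
  have hχL : Integrable fun x => χ n x * u x ^ 2 * symmLap e (χ n) x := by
    simp only [mul_assoc]
    exact hL.bdd_mul (hχ.isTest n).contDiff.continuous.aestronglyMeasurable (c := 1)
      (ae_of_all _ fun x => by rw [Real.norm_of_nonneg (hχ.nonneg n x)]; exact hχ.le_one n x)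
  calc ∫ x, χ n x * u x ^ 2 * symmLap e (χ n) x
      ≤ ∫ x, (u x ^ 2 * symmLap e (χ n) x + u x ^ 2 * r n x) := by
        refine integral_mono hχL (hL.add hr) fun x => ?_
        have hLr : 0 ≤ symmLap e (χ n) x + r n x := by linarith [hχ.neg_defect_le_symmLap n x]
        calc χ n x * u x ^ 2 * symmLap e (χ n) x
            ≤ χ n x * (u x ^ 2 * (symmLap e (χ n) x + r n x)) := by
              rw [mul_assoc]
              have := hχ.nonneg n x
              gcongr
              linarith [hχ.defect_nonneg n x]
          _ ≤ u x ^ 2 * (symmLap e (χ n) x + r n x) :=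
              mul_le_of_le_one_left (mul_nonneg (sq_nonneg _) hLr) (hχ.le_one n x)
          _ = u x ^ 2 * symmLap e (χ n) x + u x ^ 2 * r n x := mul_add ..
    _ ≤ (∫ x, u x ^ 2 * symmLap e (χ n) x) + 1 := by
        rw [integral_add hL hr]
        gcongr
        exact hχ.integral_sq_mul_defect_le n

theorem finiteEnergy_and_energy_le (hd : 1 ≤ d) (he : (d : ℝ) < e) (he' : e < d + 2)
    (hu : ContDiff ℝ (⊤ : ℕ∞) u) (hu2 : Integrable fun x => u x ^ 2 * decay e x)
    (hB : ∀ n, ∫ x, u x * symmLap e (fun y => χ n y * u y) x ≤ B) :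
    FiniteEnergy e u ∧ energy e u u ≤ 2 * B + 1 := by
  have weighted := fun n => integrable_and_integral_cutoff_add_mul_energyDensity_le hd he he' hu hu2
    (hχ.isTest n) (hχ.nonneg n)
  refine integrable_and_integral_le_of_tendsto_ae
    (f := fun n z => 1 / 2 * ((χ n z.1 + χ n z.2) * energyDensity (powerKernel e) u u z))
    (M := fun _ => 2 * B + 1) (fun n => (weighted n).1.const_mul _)
    (fun n => ae_of_all _ fun z => ?_) (fun n => ?_) tendsto_const_nhds (ae_of_all _ fun z => ?_)
  · exact mul_nonneg (by norm_num) (mul_nonneg (add_nonneg (hχ.nonneg n _) (hχ.nonneg n _))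
      (energyDensity_self_nonneg powerKernel_nonneg z))
  · rw [integral_const_mul]
    linarith [(weighted n).2, hB n, hχ.neg_one_le_integral_sq_mul_symmLap hd he he'
      hu.continuous.aestronglyMeasurable hu2 n]
  · have hlim := (((hχ.tendsto_one z.1).add (hχ.tendsto_one z.2)).mul_const
      (energyDensity (powerKernel e) u u z)).const_mul (1 / 2)
    norm_num at hlim
    simpa using hlim

theorem finiteEnergy_and_energy_cutoff_le (hd : 1 ≤ d) (he : (d : ℝ) < e) (he' : e < d + 2)
    (hu : ContDiff ℝ (⊤ : ℕ∞) u) (hu2 : Integrable fun x => u x ^ 2 * decay e x)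
    (hB : ∀ n, ∫ x, u x * symmLap e (fun y => χ n y * u y) x ≤ B) (n : ℕ) :
    FiniteEnergy e (fun x => χ n x * u x) ∧
      energy e (fun x => χ n x * u x) (fun x => χ n x * u x) ≤ 3 * (2 * B + 1) := by
  obtain ⟨hE, hEB⟩ := hχ.finiteEnergy_and_energy_le hd he he' hu hu2 hB
  obtain ⟨hχE, hχEB⟩ := finiteEnergy_and_energy_cutoff_mul_le hd he he' hu hu2 (hχ.isTest n)
    (hχ.nonneg n) (hχ.le_one n) hE
  have weighted_nonneg : 0 ≤ ∫ z : Ed d × Ed d,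
      (χ n z.1 + χ n z.2) * energyDensity (powerKernel e) u u z :=
    integral_nonneg fun z => mul_nonneg (add_nonneg (hχ.nonneg n _) (hχ.nonneg n _))
      (energyDensity_self_nonneg powerKernel_nonneg z)
  have upper := (integrable_and_integral_cutoff_add_mul_energyDensity_le hd he he' hu hu2
    (hχ.isTest n) (hχ.nonneg n)).2
  refine ⟨hχE, ?_⟩
  linarith [hB n, hχ.integral_cutoff_mul_sq_mul_symmLap_le hd he he'
    hu.continuous.aestronglyMeasurable hu2 n]

end IsAdaptedCutoffSeq

end EnergyLimits

/-! ### Integration by parts -/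

section IntegrationByParts

variable {d m n : ℕ} {e p s Cds : ℝ} {ρ v V w W g : Ed d → ℝ} {χ : ℕ → Ed d → ℝ}

/-- The weights for which integration by parts is proved: besides a local `A₁` condition, every
function of `L^p(ρ dx)` has to have cutoffs adapted to the kernel `‖x‖ ^ (-e)`. -/
structure IsAdmissibleWeight (e p : ℝ) (ρ : Ed d → ℝ) : Prop where
  pos : ∀ x, 0 < ρ x
  measurable : Measurable ρ
  isLocalA1Weight : IsLocalA1Weight ρ
  integrable_sq_mul_decay : ∀ f, MemWLp d p ρ f → Integrable fun x => f x ^ 2 * decay e x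
  exists_isAdaptedCutoffSeq : ∀ f, MemWLp d p ρ f → ∃ χ r, IsAdaptedCutoffSeq e f χ r

namespace IsAdmissibleWeight

lemma locallyIntegrable (hρ : IsAdmissibleWeight e p ρ) : LocallyIntegrable ρ :=
  hρ.isLocalA1Weight.locallyIntegrable hρ.measurable.aestronglyMeasurable fun x => (hρ.pos x).le

lemma integrable_mul_decay (hρ : IsAdmissibleWeight e p ρ) (he : (d : ℝ) < e)
    (hv : MemWLp d p ρ v) : Integrable fun x => v x * decay e x :=
  integrable_mul_decay_of_sq he hv.1 (hρ.integrable_sq_mul_decay v hv)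

lemma locallyIntegrable_of_memWLp (hρ : IsAdmissibleWeight e p ρ) (he : (d : ℝ) < e)
    (hv : MemWLp d p ρ v) : LocallyIntegrable v :=
  locallyIntegrable_of_integrable_mul_decay (hρ.integrable_mul_decay he hv)

lemma exists_memWLp_smoothed (hρ : IsAdmissibleWeight e p ρ) (he : (d : ℝ) < e) (hp : 1 ≤ p) :
    ∃ K, 0 ≤ K ∧ ∀ n f, MemWLp d p ρ f → MemWLp d p ρ (smoothed n f) ∧
      ∫ x, |smoothed n f x| ^ p * ρ x ≤ K * ∫ x, |f x| ^ p * ρ x := by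
  obtain ⟨K, hK₀, hK⟩ := hρ.isLocalA1Weight.exists_lintegral_mollifier_mul_le
  exact ⟨K, hK₀, fun n f hf => memWLp_smoothed hp hρ.pos hρ.measurable hK₀ (hK n)
    (hρ.locallyIntegrable_of_memWLp he hf) hf⟩

end IsAdmissibleWeight

lemma MemWLp.cutoff_mul {χ : Ed d → ℝ} (hv : MemWLp d p ρ v) (hp : 0 ≤ p) (hρ : ∀ x, 0 < ρ x)
    (hm : Measurable ρ) (hχ : Continuous χ) (hχ₀ : ∀ x, 0 ≤ χ x) (hχ₁ : ∀ x, χ x ≤ 1) :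
    MemWLp d p ρ (fun x => χ x * v x) ∧
      ∫ x, |χ x * v x| ^ p * ρ x ≤ ∫ x, |v x| ^ p * ρ x := by
  have hχv : AEStronglyMeasurable (fun x => χ x * v x) volume := hχ.aestronglyMeasurable.mul hv.1
  have hle (x : Ed d) : |χ x * v x| ^ p * ρ x ≤ |v x| ^ p * ρ x := by
    refine mul_le_mul_of_nonneg_right (Real.rpow_le_rpow (abs_nonneg _) ?_ hp) (hρ x).le
    rw [abs_mul, abs_of_nonneg (hχ₀ x)]
    exact mul_le_of_le_one_left (abs_nonneg _) (hχ₁ x)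
  have hi : Integrable fun x => |χ x * v x| ^ p * ρ x := by
    refine hv.2.mono' (((Real.continuous_rpow_const hp).comp_aestronglyMeasurable
      (continuous_abs.comp_aestronglyMeasurable hχv)).mul hm.aestronglyMeasurable)
      (ae_of_all _ fun x => ?_)
    rw [Real.norm_of_nonneg (mul_nonneg (by positivity) (hρ x).le)]
    exact hle x
  exact ⟨⟨hχv, hi⟩, integral_mono hi hv.2 hle⟩

lemma IsCutoffSeq.tendsto_mul (hχ : IsCutoffSeq χ) (g : Ed d → ℝ) (x : Ed d) :
    Tendsto (fun k => χ k x * g x) atTop (𝓝 (g x)) := by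
  simpa only [one_mul] using (hχ.tendsto_one x).mul_const (g x)

lemma IsCutoffSeq.tendsto_smoothed_mul (hχ : IsCutoffSeq χ) (hg : Continuous g) (x : Ed d) :
    Tendsto (fun k => smoothed n (fun y => χ k y * g y) x) atTop (𝓝 (smoothed n g x)) := by
  simp only [smoothed_apply]
  have hη : Continuous (mollifier n : Ed d → ℝ) := isTest_mollifier.contDiff.continuous
  have hi : Integrable fun z => mollifier n z * g (x - z) :=
    (hη.mul (hg.comp (continuous_const.sub continuous_id))).integrable_of_hasCompactSupport
      isTest_mollifier.hasCompactSupport.mul_right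
  refine tendsto_integral_of_dominated_convergence _ (fun k => ?_) hi.norm
    (fun k => ae_of_all _ fun z => ?_)
    (ae_of_all _ fun z => (hχ.tendsto_mul g (x - z)).const_mul (mollifier n z))
  · have := (hχ.isTest k).contDiff.continuous
    exact Continuous.aestronglyMeasurable (by fun_prop)
  · rw [mul_left_comm, norm_mul, Real.norm_of_nonneg (hχ.nonneg k _)]
    exact mul_le_of_le_one_left (norm_nonneg _) (hχ.le_one k _)

namespace MemX

variable (hv : MemX d s Cds p ρ v V) (hw : MemX d s Cds p ρ w W) (hd : 1 ≤ d)
  (hs : s ∈ Ioo (0 : ℝ) 1) (hC : 0 < Cds) (hp : 1 < p)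
  (hρ : IsAdmissibleWeight ((d : ℝ) + 2 * s) p ρ)

include hv hd hs hp hρ

lemma integral_smoothed_mul_symmLap {ψ : Ed d → ℝ} (hψ : IsTest ψ) :
    Cds * ∫ x, smoothed n v x * symmLap (d + 2 * s) ψ x = ∫ x, V x * smoothed n ψ x :=
  hv.2.1.integral_smoothed_mul_symmLap hd hs
    (hρ.integrable_mul_decay (by linarith [hs.1]) hv.1)
    (MemWLp.locallyIntegrable_of_dualWeight hp hρ.pos hρ.locallyIntegrable hv.2.2) hψ

include hC

lemma exists_integral_smoothed_mul_symmLap_cutoff_le :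
    ∃ B, ∀ n (χ : Ed d → ℝ), IsTest χ → (∀ x, 0 ≤ χ x) → (∀ x, χ x ≤ 1) →
      ∫ x, smoothed n v x * symmLap (d + 2 * s) (fun y => χ y * smoothed n v y) x ≤ B := by
  have he : (d : ℝ) < d + 2 * s := by linarith [hs.1]
  obtain ⟨K, hK₀, hK⟩ := hρ.exists_memWLp_smoothed he hp.le
  refine ⟨((∫ x, |V x| ^ (p / (p - 1)) * dualWeight p ρ x) +
    K * (K * ∫ x, |v x| ^ p * ρ x)) / Cds, fun n χ hχ hχ₀ hχ₁ => ?_⟩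
  have hχv := hχ.mul_contDiff (contDiff_smoothed (n := n) (hρ.locallyIntegrable_of_memWLp he hv.1))
  obtain ⟨hvn, hvn_le⟩ := hK n v hv.1
  obtain ⟨hcut, hcut_le⟩ :=
    hvn.cutoff_mul (by linarith) hρ.pos hρ.measurable hχ.contDiff.continuous hχ₀ hχ₁
  obtain ⟨hsm, hsm_le⟩ := hK n _ hcut
  rw [le_div_iff₀' hC, hv.integral_smoothed_mul_symmLap hd hs hp hρ hχv]
  calc ∫ x, V x * smoothed n (fun y => χ y * smoothed n v y) x
      ≤ (∫ x, |V x| ^ (p / (p - 1)) * dualWeight p ρ x) +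
          ∫ x, |smoothed n (fun y => χ y * smoothed n v y) x| ^ p * ρ x :=
        (le_abs_self _).trans (MemWLp.abs_integral_mul_le hp hρ.pos hv.2.2 hsm)
    _ ≤ _ := by
        gcongr
        exact hsm_le.trans (mul_le_mul_of_nonneg_left (hcut_le.trans hvn_le) hK₀)

theorem exists_energy_smoothed_le : ∃ M, ∀ n,
    FiniteEnergy (d + 2 * s) (smoothed n v) ∧
      energy (d + 2 * s) (smoothed n v) (smoothed n v) ≤ M := by
  have he : (d : ℝ) < d + 2 * s := by linarith [hs.1]
  obtain ⟨B, hB⟩ := hv.exists_integral_smoothed_mul_symmLap_cutoff_le hd hs hC hp hρ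
  obtain ⟨K, -, hK⟩ := hρ.exists_memWLp_smoothed he hp.le
  refine ⟨2 * B + 1, fun n => ?_⟩
  have hvn := (hK n v hv.1).1
  obtain ⟨χ, r, hχ⟩ := hρ.exists_isAdaptedCutoffSeq _ hvn
  exact hχ.finiteEnergy_and_energy_le hd he (by linarith [hs.2])
    (contDiff_smoothed (hρ.locallyIntegrable_of_memWLp he hv.1))
    (hρ.integrable_sq_mul_decay _ hvn)
    fun k => hB n _ (hχ.isTest k) (hχ.nonneg k) (hχ.le_one k)

theorem exists_isCutoffSeq_energy_cutoff_smoothed_le (n : ℕ) : ∃ χ M, IsCutoffSeq χ ∧ ∀ k,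
    FiniteEnergy (d + 2 * s) (fun x => χ k x * smoothed n v x) ∧
      energy (d + 2 * s) (fun x => χ k x * smoothed n v x) (fun x => χ k x * smoothed n v x) ≤
        M := by
  have he : (d : ℝ) < d + 2 * s := by linarith [hs.1]
  obtain ⟨B, hB⟩ := hv.exists_integral_smoothed_mul_symmLap_cutoff_le hd hs hC hp hρ
  obtain ⟨K, -, hK⟩ := hρ.exists_memWLp_smoothed he hp.le
  have hvn := (hK n v hv.1).1
  obtain ⟨χ, r, hχ⟩ := hρ.exists_isAdaptedCutoffSeq _ hvn
  exact ⟨χ, 3 * (2 * B + 1), hχ.toIsCutoffSeq,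
    hχ.finiteEnergy_and_energy_cutoff_le hd he (by linarith [hs.2])
      (contDiff_smoothed (hρ.locallyIntegrable_of_memWLp he hv.1))
      (hρ.integrable_sq_mul_decay _ hvn)
      fun k => hB n _ (hχ.isTest k) (hχ.nonneg k) (hχ.le_one k)⟩

theorem finiteEnergy : FiniteEnergy (d + 2 * s) v := by
  obtain ⟨M, hM⟩ := hv.exists_energy_smoothed_le hd hs hC hp hρ
  exact .of_tendsto_ae (fun n => (hM n).1) (fun n => (hM n).2)
    (tendsto_smoothed_ae (hρ.locallyIntegrable_of_memWLp (by linarith [hs.1]) hv.1))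

include hw

lemma energy_smoothed_smoothed :
    Cds / 2 * energy (d + 2 * s) (smoothed n v) (smoothed m w) =
      ∫ x, V x * smoothed n (smoothed m w) x := by
  have he : (d : ℝ) < d + 2 * s := by linarith [hs.1]
  obtain ⟨K, hK₀, hK⟩ := hρ.exists_memWLp_smoothed he hp.le
  obtain ⟨_, hvE⟩ := hv.exists_energy_smoothed_le hd hs hC hp hρ
  obtain ⟨χ, _, hχ, hχE⟩ := hw.exists_isCutoffSeq_energy_cutoff_smoothed_le hd hs hC hp hρ m
  have hvn := (hK n v hv.1).1
  have hwm := contDiff_smoothed (n := m) (hρ.locallyIntegrable_of_memWLp he hw.1)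
  have hψ := fun k => (hχ.isTest k).mul_contDiff hwm
  have hcut := fun k => (hK m w hw.1).1.cutoff_mul (by linarith) hρ.pos hρ.measurable
    (hχ.isTest k).contDiff.continuous (hχ.nonneg k) (hχ.le_one k)
  have energy_limit := ((hvE n).1.tendsto_energy (d.cast_nonneg.trans_lt he) hvn.1
    (fun k => (hχE k).1) (fun k => (hcut k).1.1) (fun k => (hχE k).2)
    (ae_of_all _ (hχ.tendsto_mul _))).const_mul (Cds / 2)
  have pairing_limit := MemWLp.tendsto_integral_mul hp hρ.pos hρ.measurable hv.2.2
    (fun k => (hK n _ (hcut k).1).1)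
    (fun k => (hK n _ (hcut k).1).2.trans (mul_le_mul_of_nonneg_left (hcut k).2 hK₀))
    (ae_of_all _ (hχ.tendsto_smoothed_mul (n := n) hwm.continuous))
  refine tendsto_nhds_unique energy_limit (pairing_limit.congr fun k => ?_)
  rw [← hv.integral_smoothed_mul_symmLap hd hs hp hρ (hψ k),
    energy_eq_two_mul_integral_mul_symmLap hd he (by linarith [hs.2])
      (hρ.integrable_mul_decay he hvn) (hψ k) (hvE n).1 (hχE k).1]
  ring

lemma energy_smoothed :
    Cds / 2 * energy (d + 2 * s) v (smoothed m w) = ∫ x, V x * smoothed m w x := by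
  have he : (d : ℝ) < d + 2 * s := by linarith [hs.1]
  obtain ⟨K, -, hK⟩ := hρ.exists_memWLp_smoothed he hp.le
  obtain ⟨_, hvE⟩ := hv.exists_energy_smoothed_le hd hs hC hp hρ
  obtain ⟨_, hwE⟩ := hw.exists_energy_smoothed_le hd hs hC hp hρ
  have hwm := (hK m w hw.1).1
  have energy_limit := ((hwE m).1.tendsto_energy (d.cast_nonneg.trans_lt he) hwm.1
    (fun n => (hvE n).1) (fun n => (hK n v hv.1).1.1) (fun n => (hvE n).2)
    (tendsto_smoothed_ae (hρ.locallyIntegrable_of_memWLp he hv.1))).const_mul (Cds / 2)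
  have pairing_limit := MemWLp.tendsto_integral_mul hp hρ.pos hρ.measurable hv.2.2
    (fun n => (hK n _ hwm).1) (fun n => (hK n _ hwm).2)
    (tendsto_smoothed_ae (hρ.locallyIntegrable_of_memWLp he hwm))
  rw [energy_comm]
  refine tendsto_nhds_unique energy_limit (pairing_limit.congr fun n => ?_)
  rw [energy_comm, hv.energy_smoothed_smoothed hw hd hs hC hp hρ]

theorem energy_eq_integral_mul : Cds / 2 * energy (d + 2 * s) v w = ∫ x, V x * w x := by
  have he : (d : ℝ) < d + 2 * s := by linarith [hs.1]
  obtain ⟨K, -, hK⟩ := hρ.exists_memWLp_smoothed he hp.le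
  obtain ⟨_, hwE⟩ := hw.exists_energy_smoothed_le hd hs hC hp hρ
  have hlim := tendsto_smoothed_ae (hρ.locallyIntegrable_of_memWLp he hw.1)
  have energy_limit := ((hv.finiteEnergy hd hs hC hp hρ).tendsto_energy
    (d.cast_nonneg.trans_lt he) hv.1.1 (fun m => (hwE m).1) (fun m => (hK m w hw.1).1.1)
    (fun m => (hwE m).2) hlim).const_mul (Cds / 2)
  have pairing_limit := MemWLp.tendsto_integral_mul hp hρ.pos hρ.measurable hv.2.2
    (fun m => (hK m w hw.1).1) (fun m => (hK m w hw.1).2) hlim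
  refine tendsto_nhds_unique energy_limit (pairing_limit.congr fun m => ?_)
  exact (hv.energy_smoothed hw hd hs hC hp hρ).symm

end MemX

lemma energy_eq_integral_div_dist (e : ℝ) (v w : Ed d → ℝ) :
    energy e v w = ∫ z : Ed d × Ed d, (v z.1 - v z.2) * (w z.1 - w z.2) / dist z.1 z.2 ^ e := by
  simp only [energy, energyDensity, powerKernel, dist_eq_norm, Real.rpow_neg (norm_nonneg _),
    div_eq_mul_inv]

end IntegrationByParts

section Weights

variable {d : ℕ} {a c p s γ : ℝ} {ρ f : Ed d → ℝ}

lemma MemWLp.integrable_rpow_mul_decay (hf : MemWLp d p ρ f) (hp : 0 ≤ p) (hc : 0 < c)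
    (hlow : ∀ᵐ x, c * decay γ x ≤ ρ x) : Integrable fun x => |f x| ^ p * decay γ x := by
  refine (hf.2.const_mul c⁻¹).mono' (((Real.continuous_rpow_const hp).comp_aestronglyMeasurable
    (continuous_abs.comp_aestronglyMeasurable hf.1)).mul measurable_decay.aestronglyMeasurable) ?_
  filter_upwards [hlow] with x hx
  have := decay_pos (e := γ) x
  rw [Real.norm_of_nonneg (by positivity), mul_left_comm]
  gcongr
  rwa [inv_mul_eq_div, le_div_iff₀' hc]

lemma IsLocalA1Weight.isAdmissibleWeight (hA1 : IsLocalA1Weight ρ) (hd : 1 ≤ d)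
    (hs : s ∈ Ioo (0 : ℝ) 1) (hp : 2 ≤ p) (hρ : ∀ x, 0 < ρ x) (hm : Measurable ρ) (hc : 0 < c)
    (hlow : ∀ᵐ x, c * decay γ x ≤ ρ x) (hγ : 0 ≤ γ) (ha₀ : 0 ≤ a) (ha : a < d)
    (has : 0 < a → a + 2 * s = d) (hγa : γ ≤ a + 2 * s + (a + 2 * s - d) * (p - 2) / 2)
    (hγp : γ ≤ 2 * d - p / 2 * (d - 2 * s)) : IsAdmissibleWeight ((d : ℝ) + 2 * s) p ρ := by
  obtain ⟨hs₀, hs₁⟩ := hs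
  have hfp (f : Ed d → ℝ) (hf : MemWLp d p ρ f) :=
    hf.integrable_rpow_mul_decay (by linarith) hc hlow
  refine ⟨hρ, hm, hA1, fun f hf => ?_, fun f hf => exists_isAdaptedCutoffSeq hd ha₀ ha
    (by linarith) (by linarith) (fun h => by linarith [has h]) ?_⟩
  · simpa using integrable_sq_mul_decay_inv_smul hd hp hγ hγa (by linarith) le_rfl hf.1 (hfp f hf)
  · rw [add_sub_cancel_left]
    exact tendsto_rpow_neg_mul_integral_sq_mul_decay hd hp hγ (by linarith) hγa (by linarith) hf.1
      (hfp f hf)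

lemma exponent_le_of_le_max (hp : ((d : ℝ) ≤ 2 * s ∧ 2 ≤ p) ∨
      (2 * s < (d : ℝ) ∧ 2 ≤ p ∧ p ≤ 2 * d / ((d : ℝ) - 2 * s)))
    (hγ : γ ≤ max (d : ℝ) (d - p / 2 * (d - 2 * s))) :
    γ ≤ d - p / 2 * (d - 2 * s) ∨ 2 * s < d ∧ γ ≤ d ∧ γ ≤ 2 * d - p / 2 * (d - 2 * s) := by
  rcases hp with ⟨hds, hp⟩ | ⟨hds, hp, hp'⟩
  · rw [max_eq_right (by nlinarith)] at hγ
    exact .inl hγ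
  · rw [max_eq_left (by nlinarith)] at hγ
    rw [le_div_iff₀ (by linarith)] at hp'
    exact .inr ⟨hds, hγ, by linarith⟩

end Weights

theorem stmt17_general {d : ℕ} (hd : 1 ≤ d) {s : ℝ} (hs : s ∈ Ioo (0 : ℝ) 1) {Cds : ℝ}
    (hC : 0 < Cds) {p : ℝ} (hp : 2 ≤ p) {ρ : Ed d → ℝ} (hρ : ∀ x, 0 < ρ x) (hm : Measurable ρ)
    (hA1 : IsLocalA1Weight ρ) {c γ : ℝ} (hc : 0 < c) (hlow : ∀ᵐ x, c * decay γ x ≤ ρ x)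
    (hγ : 0 ≤ γ) (hγp : γ ≤ d - p / 2 * (d - 2 * s) ∨
      2 * s < d ∧ γ ≤ d ∧ γ ≤ 2 * d - p / 2 * (d - 2 * s))
    {v V w W : Ed d → ℝ} (hv : MemX d s Cds p ρ v V) (hw : MemX d s Cds p ρ w W) :
    Cds / 2 * ∫ z : Ed d × Ed d,
        (v z.1 - v z.2) * (w z.1 - w z.2) / dist z.1 z.2 ^ ((d : ℝ) + 2 * s)
      = ∫ x, v x * W x ∧
    ∫ x, v x * W x = ∫ x, V x * w x := by
  have hd₀ : (0 : ℝ) < d := by exact_mod_cast hd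
  have hs₀ := hs.1
  have hadm : IsAdmissibleWeight ((d : ℝ) + 2 * s) p ρ := by
    rcases hγp with hγp | ⟨hds, hγd, hγp⟩
    · exact hA1.isAdmissibleWeight (a := 0) hd hs hp hρ hm hc hlow hγ le_rfl hd₀
        (fun h => absurd h (lt_irrefl 0)) (by linarith) (by linarith)
    · exact hA1.isAdmissibleWeight (a := d - 2 * s) hd hs hp hρ hm hc hlow hγ (by linarith)
        (by linarith) (fun _ => by ring) (by linarith) hγp
  have hp₁ : 1 < p := by linarith
  have hvw := hv.energy_eq_integral_mul hw hd hs hC hp₁ hadm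
  have hwv := hw.energy_eq_integral_mul hv hd hs hC hp₁ hadm
  simp only [mul_comm (v _) (W _), ← energy_eq_integral_div_dist]
  rw [energy_comm] at hwv
  exact ⟨hwv, hwv.symm.trans hvw⟩

theorem stmt17 (d : ℕ) (hd : 1 ≤ d) (s : ℝ) (hs : s ∈ Set.Ioo (0:ℝ) 1)
    (Cds : ℝ) (hC : 0 < Cds) (p : ℝ)
    (hp : ((d:ℝ) ≤ 2 * s ∧ 2 ≤ p) ∨
          (2 * s < (d:ℝ) ∧ 2 ≤ p ∧ p ≤ 2 * d / ((d:ℝ) - 2 * s)))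
    (ρ : Ed d → ℝ) (hρpos : ∀ x, 0 < ρ x) (hρm : Measurable ρ)
    (c C γ₀ γ : ℝ) (hw : TwoPowerWeight d ρ c C γ₀ γ)
    (hγ₀ : γ₀ ∈ Set.Ico (0:ℝ) d)
    (hγ : γ ∈ Set.Icc (0:ℝ) (max (d:ℝ) ((d:ℝ) - (p / 2) * ((d:ℝ) - 2 * s)))) :
    ∀ v V w W : Ed d → ℝ, MemX d s Cds p ρ v V → MemX d s Cds p ρ w W →
      Cds / 2 * ∫ z : Ed d × Ed d,
          (v z.1 - v z.2) * (w z.1 - w z.2) / dist z.1 z.2 ^ ((d:ℝ) + 2 * s)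
        = ∫ x : Ed d, v x * W x ∧
      (∫ x : Ed d, v x * W x) = ∫ x : Ed d, V x * w x := by
  intro v V w W hv hw'
  exact stmt17_general hd hs hC (hp.elim And.right fun h => h.2.1) hρpos hρm
    (hw.isLocalA1Weight hd hγ₀ hγ.1) hw.1 (hw.mul_decay_le hd hγ₀.1 hγ.1) hγ.1
    (exponent_le_of_le_max hp hγ.2) hv hw'
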